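/- arXiv:2512.08631 — 2 statements merged into one kernel-verified Lean document; each statement's English description precedes it below -/
import Mathlib

section
/- For every prime number p, the modular polynomial Φ_p ∈ ℤ[X,Y] satisfies deg_X(Φ_p) = deg_Y(Φ_p) = p + 1, and its logarithmic height satisfies h(Φ_p) ≤ 6 p log p + 16 p + 14 √p log p; in particular h(Φ_p) = 6 p log p + O(p). -/
/-!
Degree and height of the modular polynomial of prime level `p`:
`deg_X Φ_p = deg_Y Φ_p = p + 1`, the explicit bound
`h(Φ_p) ≤ 6 p log p + 16 p + 14 √p log p`, and `h(Φ_p) = 6 p log p + O(p)`.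
-/

/-- The modular discriminant in the nome. -/
noncomputable def Δ (q : ℂ) : ℂ := q * ∏' n : ℕ, (1 - q ^ (n + 1)) ^ 24

/-- The normalized Eisenstein series of weight 4 in the nome. -/
noncomputable def E₄ (q : ℂ) : ℂ :=
  1 + 240 * ∑' n : ℕ, (ArithmeticFunction.sigma 3 (n + 1) : ℂ) * q ^ (n + 1)

/-- The modular `j`-invariant in the nome. -/
noncomputable def J (q : ℂ) : ℂ := E₄ q ^ 3 / Δ q

/-- The classical modular `j`-invariant, `j(τ) = J(e^{2πiτ})`. -/
noncomputable def jInv (τ : ℂ) : ℂ := J (Complex.exp (2 * Real.pi * Complex.I * τ))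

/-- Evaluation of a bivariate integer polynomial (variable `0` is `X`, variable `1` is `Y`). -/
noncomputable def evalBiv (P : MvPolynomial (Fin 2) ℤ) (x y : ℂ) : ℂ :=
  MvPolynomial.eval₂ (Int.castRingHom ℂ) ![x, y] P

/-- `P` is the modular polynomial `Φ_N`: irreducible, monic in each of the two
variables, and `P(x, y) = 0` iff `x = j(γτ)`, `y = j(τ)` for some `τ ∈ ℍ` and some
primitive integral matrix `γ = (a b; c d)` of determinant `N` (equivalently, `x, y`
are `j`-invariants of elliptic curves related by a cyclic `N`-isogeny). -/
def IsModularPolynomial (N : ℕ) (P : MvPolynomial (Fin 2) ℤ) : Prop :=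
  Irreducible P ∧
  (MvPolynomial.finSuccEquiv ℤ 1 P).Monic ∧
  (MvPolynomial.finSuccEquiv ℤ 1 (MvPolynomial.rename (⇑(Equiv.swap 0 1)) P)).Monic ∧
  ∀ x y : ℂ, evalBiv P x y = 0 ↔
    ∃ τ : ℂ, 0 < τ.im ∧ ∃ a b c d : ℤ,
      a * d - b * c = (N : ℤ) ∧
      Int.gcd (Int.gcd a b) (Int.gcd c d) = 1 ∧
      x = jInv (((a : ℂ) * τ + b) / ((c : ℂ) * τ + d)) ∧ y = jInv τ

/-- The logarithmic height of an integer polynomial: `log max |coeff|`. -/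
noncomputable def polyHeight (P : MvPolynomial (Fin 2) ℤ) : ℝ :=
  Real.log ((P.support.sup fun m => (MvPolynomial.coeff m P).natAbs : ℕ) : ℝ)

/-!
Write `j = E₄³ / Δ` and measure `E₄³` and `Δ` by the `SL(2, ℤ)`-invariant functions
`E = |E₄|³ (im z)⁶` and `D = |Δ| (im z)⁶`. For fixed `z`, `Φ_p(X, j(z)) = ∏ (X - j(zᵢ))` where `zᵢ`
runs over the `p + 1` points `p z` and `(z + b) / p`.

*Upper bound.* Let `|x|, |y| ≤ 1` and choose `z` with `j(z) = y` and `√3 / 2 ≤ im z`, so that `im z`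
is also less than `1`. Each factor satisfies `|x - j(zᵢ)| ≤ (E + D)(zᵢ) / D(zᵢ)`. The denominators
multiply to `p ^ (-6 (p - 1)) D(z) ^ (p + 1)`, the source of the main term `6 p log p`. By
invariance the numerators can be evaluated at translates of the `zᵢ` with imaginary part
`t ≥ √3 / 2`, where `log (E + D) ≤ 6 √t - 3`. The square root of the imaginary part of any
translate of `zᵢ` is bounded by the theta series of the lattice of `zᵢ`, and the sum of these theta
series over the `zᵢ` is `O(p)`, as these lattices are, up to scaling, sublattices nearly
partitioning that of `z`. The bound on the unit torus passes to coefficients by Parseval's identity.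

*Lower bound.* The Mahler measure of `Φ_p(X, j(z))` is `∏ max(E, D)(zᵢ) / D(zᵢ)`. Since `max(E, D)`
is bounded below on the upper half plane, the same product of denominators bounds it from below,
while it is at most `(p + 2)² exp(h(Φ_p)) max(1, |j(z)|) ^ (p + 1)`.
-/

namespace ModularPolynomial

open Function.Periodic
open UpperHalfPlane hiding J
open scoped MatrixGroups

local notation "𝕢" => qParam 1

/-! ### The modular forms `E₄` and `Δ` -/

lemma qParam_one_eq_exp (τ : ℂ) : 𝕢 τ = Complex.exp (2 * Real.pi * Complex.I * τ) := by
  simp [qParam]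

lemma jInv_eq_J_qParam (τ : ℂ) : jInv τ = J (𝕢 τ) := by
  rw [jInv, qParam_one_eq_exp]

lemma E₄_qParam (z : ℍ) : E₄ (𝕢 z) = ModularForm.E₄ z := by
  have hbernoulli : (2 * ((4 : ℕ) : ℂ) / (bernoulli 4 : ℂ)) = -240 := by
    rw [bernoulli_eq_bernoulli'_of_ne_one (by norm_num), bernoulli'_four]
    norm_num
  rw [EisensteinSeries.q_expansion_bernoulli (by norm_num) (by decide) z, E₄, hbernoulli,
    sub_eq_add_neg, ← neg_mul, neg_neg, qParam_one_eq_exp,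
    ← tsum_pnat_eq_tsum_succ (f := fun n : ℕ ↦
      (ArithmeticFunction.sigma 3 n : ℂ) * Complex.exp (2 * Real.pi * Complex.I * z) ^ n)]
  simp

lemma Δ_qParam (z : ℍ) : Δ (𝕢 z) = ModularForm.discriminant z := by
  simp only [ModularForm.discriminant_eq_q_prod, Δ, ModularForm.eta_q, qParam_one_eq_exp]

lemma jInv_eq_div (z : ℍ) : jInv z = ModularForm.E₄ z ^ 3 / ModularForm.discriminant z := by
  rw [jInv_eq_J_qParam, J, E₄_qParam, Δ_qParam]

lemma slashInvariantForm_smul {k : ℤ} (f : SlashInvariantForm 𝒮ℒ k) (g : SL(2, ℤ)) (z : ℍ) :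
    f (g • z) = denom g z ^ k * f z := by
  have hg : (g : GL (Fin 2) ℝ) ∈ 𝒮ℒ := ⟨g, rfl⟩
  simpa using! SlashInvariantForm.slash_action_eqn'' f hg z

lemma jInv_smul (g : SL(2, ℤ)) (z : ℍ) : jInv (g • z : ℍ) = jInv z := by
  have hE : ModularForm.E₄ (g • z) = denom g z ^ 4 * ModularForm.E₄ z :=
    slashInvariantForm_smul ModularForm.E₄.toSlashInvariantForm g z
  have hΔ : ModularForm.discriminant (g • z) = denom g z ^ 12 * ModularForm.discriminant z :=
    slashInvariantForm_smul CuspForm.discriminant.toSlashInvariantForm g z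
  have := denom_ne_zero g z
  have := ModularForm.discriminant_ne_zero z
  rw [jInv_eq_div, jInv_eq_div, hE, hΔ]
  field_simp

/-- The Petersson norm `|f(z)| (im z)ᵏ` of a form `f` of weight `2k`; it is invariant under
`SL(2, ℤ)`. -/
noncomputable def peterssonNorm (k : ℕ) (f : ℍ → ℂ) (z : ℍ) : ℝ := ‖f z‖ * z.im ^ k

lemma peterssonNorm_smul {k : ℕ} (f : SlashInvariantForm 𝒮ℒ (2 * k)) (g : SL(2, ℤ)) (z : ℍ) :
    peterssonNorm k f (g • z) = peterssonNorm k f z := by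
  have : ‖denom g z‖ ≠ 0 := by simp [denom_ne_zero]
  rw [peterssonNorm, peterssonNorm, slashInvariantForm_smul, ModularGroup.im_smul_eq_div_normSq,
    Complex.normSq_eq_norm_sq, zpow_mul, zpow_natCast, norm_mul, norm_pow, div_pow]
  norm_cast
  rw [norm_pow]
  field_simp

/-- The invariant size of `Δ`, the denominator of the `j`-invariant. -/
noncomputable def discriminantNorm : ℍ → ℝ := peterssonNorm 6 ModularForm.discriminant

/-- The invariant size of `E₄³`, the numerator of the `j`-invariant. -/
noncomputable def eisensteinNorm (z : ℍ) : ℝ := peterssonNorm 2 ModularForm.E₄ z ^ 3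

lemma discriminantNorm_smul (g : SL(2, ℤ)) (z : ℍ) :
    discriminantNorm (g • z) = discriminantNorm z :=
  peterssonNorm_smul (k := 6) CuspForm.discriminant.toSlashInvariantForm g z

lemma eisensteinNorm_smul (g : SL(2, ℤ)) (z : ℍ) : eisensteinNorm (g • z) = eisensteinNorm z :=
  congrArg (· ^ 3) (peterssonNorm_smul (k := 2) ModularForm.E₄.toSlashInvariantForm g z)

lemma discriminantNorm_pos (z : ℍ) : 0 < discriminantNorm z := by
  have := ModularForm.discriminant_ne_zero z
  have := z.im_pos
  unfold discriminantNorm peterssonNorm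
  positivity

lemma norm_jInv (z : ℍ) : ‖jInv z‖ = eisensteinNorm z / discriminantNorm z := by
  have := ModularForm.discriminant_ne_zero z
  have := z.im_pos
  rw [jInv_eq_div, eisensteinNorm, discriminantNorm, peterssonNorm, peterssonNorm, norm_div,
    norm_pow]
  field_simp

lemma norm_sub_jInv_mul_discriminantNorm_le {x : ℂ} (hx : ‖x‖ ≤ 1) (z : ℍ) :
    ‖x - jInv z‖ * discriminantNorm z ≤ eisensteinNorm z + discriminantNorm z := by
  have hD := discriminantNorm_pos z
  calc ‖x - jInv z‖ * discriminantNorm z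
      ≤ (1 + eisensteinNorm z / discriminantNorm z) * discriminantNorm z := by
        gcongr
        exact (norm_sub_le _ _).trans (add_le_add hx (norm_jInv z).le)
    _ = eisensteinNorm z + discriminantNorm z := by field_simp; ring

lemma exists_smul_sqrt_three_div_two_le_im (z : ℍ) : ∃ g : SL(2, ℤ), √3 / 2 ≤ (g • z).im := by
  obtain ⟨g, hg⟩ := ModularGroup.exists_smul_mem_fd z
  refine ⟨g, ?_⟩
  rw [div_le_iff₀ two_pos, Real.sqrt_le_left (mul_nonneg (g • z).im_pos.le zero_le_two)]
  linarith [ModularGroup.three_le_four_mul_im_sq_of_mem_fd hg]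

/-! ### Explicit estimates for `E₄` and `Δ` -/

lemma norm_sigma_three_mul_pow_le (q : ℂ) (n : ℕ) :
    ‖(ArithmeticFunction.sigma 3 (n + 1) : ℂ) * q ^ (n + 1)‖ ≤ ‖q‖ * (16 * ‖q‖) ^ n := by
  have hpow : (n + 1) ^ 4 ≤ 16 ^ n := by
    calc (n + 1) ^ 4 ≤ (2 ^ n) ^ 4 := by gcongr; exact Nat.lt_two_pow_self
      _ = 16 ^ n := by rw [← pow_mul, mul_comm, pow_mul]; norm_num
  have hsigma : (ArithmeticFunction.sigma 3 (n + 1) : ℝ) ≤ 16 ^ n := by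
    exact_mod_cast (ArithmeticFunction.sigma_le_pow_succ 3 (n + 1)).trans hpow
  calc ‖(ArithmeticFunction.sigma 3 (n + 1) : ℂ) * q ^ (n + 1)‖
      = ArithmeticFunction.sigma 3 (n + 1) * ‖q‖ ^ (n + 1) := by simp
    _ ≤ 16 ^ n * ‖q‖ ^ (n + 1) := by gcongr
    _ = ‖q‖ * (16 * ‖q‖) ^ n := by ring

lemma norm_E₄_sub_one_le {q : ℂ} (hq : 16 * ‖q‖ < 1) :
    ‖E₄ q - 1‖ ≤ 240 * (‖q‖ / (1 - 16 * ‖q‖)) := by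
  have hgeom : HasSum (fun n : ℕ ↦ ‖q‖ * (16 * ‖q‖) ^ n) (‖q‖ / (1 - 16 * ‖q‖)) :=
    (hasSum_geometric_of_lt_one (by positivity) hq).mul_left _
  rw [E₄, add_sub_cancel_left, norm_mul, Complex.norm_ofNat]
  gcongr
  exact tsum_of_norm_bounded hgeom (norm_sigma_three_mul_pow_le q)

lemma norm_tprod_one_sub_pow_sub_one_le {q : ℂ} (hq : ‖q‖ < 1) :
    ‖∏' n : ℕ, (1 - q ^ (n + 1)) - 1‖ ≤ Real.exp (‖q‖ / (1 - ‖q‖)) - 1 := by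
  have hgeom : HasSum (fun n : ℕ ↦ ‖q‖ ^ (n + 1)) (‖q‖ / (1 - ‖q‖)) := by
    simpa [pow_succ', div_eq_mul_inv] using
      (hasSum_geometric_of_lt_one (norm_nonneg q) hq).mul_left ‖q‖
  have hlim := (ModularForm.multipliable_one_sub_pow hq).hasProd.tendsto_prod_nat
  refine le_of_tendsto' (hlim.sub_const 1).norm fun N ↦ ?_
  calc ‖∏ n ∈ Finset.range N, (1 - q ^ (n + 1)) - 1‖
      ≤ Real.exp (∑ n ∈ Finset.range N, ‖q‖ ^ (n + 1)) - 1 := by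
        simpa [sub_eq_add_neg] using
          (Finset.range N).norm_prod_one_add_sub_one_le fun n ↦ -q ^ (n + 1)
    _ ≤ Real.exp (‖q‖ / (1 - ‖q‖)) - 1 := by
        gcongr
        exact sum_le_hasSum _ (fun n _ ↦ by positivity) hgeom

lemma norm_Δ {q : ℂ} (hq : ‖q‖ < 1) :
    ‖Δ q‖ = ‖q‖ * ‖∏' n : ℕ, (1 - q ^ (n + 1))‖ ^ 24 := by
  rw [Δ, (ModularForm.multipliable_one_sub_pow hq).tprod_pow, norm_mul, norm_pow]

lemma norm_Δ_le {q : ℂ} (hq : ‖q‖ ≤ 1 / 50) : ‖Δ q‖ ≤ 2 * ‖q‖ := by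
  have hs : ‖q‖ / (1 - ‖q‖) ≤ 1 / 49 := by
    rw [div_le_iff₀] <;> linarith
  have hprod : ‖∏' n : ℕ, (1 - q ^ (n + 1))‖ ≤ Real.exp (1 / 49) := by
    have h := norm_tprod_one_sub_pow_sub_one_le (q := q) (by linarith)
    have h' := norm_sub_norm_le (∏' n : ℕ, (1 - q ^ (n + 1))) 1
    rw [norm_one] at h'
    linarith [Real.exp_le_exp.2 hs]
  calc ‖Δ q‖ = ‖q‖ * ‖∏' n : ℕ, (1 - q ^ (n + 1))‖ ^ 24 := norm_Δ (by linarith)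
    _ ≤ ‖q‖ * Real.exp (1 / 49) ^ 24 := by gcongr
    _ = ‖q‖ * Real.exp (24 / 49) := by rw [← Real.exp_nat_mul]; norm_num
    _ ≤ ‖q‖ * (1 / (1 - 24 / 49)) := by
        gcongr
        exact Real.exp_bound_div_one_sub_of_interval (by norm_num) (by norm_num)
    _ ≤ 2 * ‖q‖ := by linarith [norm_nonneg q]

lemma le_norm_Δ {q : ℂ} (hq : ‖q‖ ≤ 0.0045) : 0.89 * ‖q‖ ≤ ‖Δ q‖ := by
  have hs : ‖q‖ / (1 - ‖q‖) ≤ 0.00453 := by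
    rw [div_le_iff₀] <;> linarith
  have hexp : Real.exp 0.00453 ≤ 1 / (1 - 0.00453) :=
    Real.exp_bound_div_one_sub_of_interval (by norm_num) (by norm_num)
  have hprod : 1 + (-0.00456) ≤ ‖∏' n : ℕ, (1 - q ^ (n + 1))‖ := by
    have h := norm_tprod_one_sub_pow_sub_one_le (q := q) (by linarith)
    have h' := norm_sub_norm_le 1 (∏' n : ℕ, (1 - q ^ (n + 1)))
    rw [norm_one, norm_sub_rev] at h'
    linarith [Real.exp_le_exp.2 hs]
  calc 0.89 * ‖q‖ ≤ ‖q‖ * (1 + (24 : ℕ) * (-0.00456)) := by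
        push_cast; linarith [norm_nonneg q]
    _ ≤ ‖q‖ * (1 + (-0.00456)) ^ 24 := by
        gcongr
        exact one_add_mul_le_pow (by norm_num) 24
    _ ≤ ‖q‖ * ‖∏' n : ℕ, (1 - q ^ (n + 1))‖ ^ 24 := by
        gcongr
    _ = ‖Δ q‖ := (norm_Δ (by linarith)).symm

lemma mul_quadratic_le_exp (n : ℕ) {x : ℝ} (hx : 0 ≤ x) :
    (2.718 : ℝ) ^ n * (1 + x + x ^ 2 / 2) ≤ Real.exp (n + x) := by
  have he : (2.718 : ℝ) ≤ Real.exp 1 := by linarith [Real.exp_one_gt_d9]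
  rw [Real.exp_add, ← Real.exp_one_pow]
  gcongr
  exact Real.quadratic_le_exp_of_nonneg hx

lemma norm_qParam_pos (τ : ℂ) : 0 < ‖𝕢 τ‖ :=
  norm_pos_iff.2 (qParam_ne_zero τ)

lemma norm_qParam_le_inv_of_le {z : ℍ} {n : ℕ} {x : ℝ} (hx : 0 ≤ x)
    (hz : n + x ≤ 2 * 3.1415 * z.im) :
    ‖𝕢 z‖ ≤ ((2.718 : ℝ) ^ n * (1 + x + x ^ 2 / 2))⁻¹ := by
  have hπ : 2 * 3.1415 * z.im ≤ 2 * Real.pi * z.im := by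
    have := z.im_pos
    gcongr
    exact Real.pi_gt_d4.le
  rw [norm_qParam, div_one, coe_im, neg_mul, neg_mul, Real.exp_neg]
  gcongr
  exact (mul_quadratic_le_exp n hx).trans (Real.exp_le_exp.2 (hz.trans hπ))

lemma lt_sqrt_three_div_two : 0.866 < √3 / 2 := by
  rw [lt_div_iff₀ two_pos]
  exact Real.lt_sqrt_of_sq_lt (by norm_num)

lemma norm_qParam_le_of_sqrt_three_div_two_le {z : ℍ} (hz : √3 / 2 ≤ z.im) :
    ‖𝕢 z‖ ≤ 0.0045 := by
  refine (norm_qParam_le_inv_of_le (n := 5) (x := 0.43) (by norm_num) ?_).trans (by norm_num)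
  linarith [lt_sqrt_three_div_two]

lemma norm_qParam_le_of_one_le {z : ℍ} (hz : 1 ≤ z.im) : ‖𝕢 z‖ ≤ 1 / 400 := by
  refine (norm_qParam_le_inv_of_le (n := 6) (x := 0) le_rfl ?_).trans (by norm_num)
  linarith

lemma norm_qParam_le_of_le {z : ℍ} (hz : 1.21 ≤ z.im) : ‖𝕢 z‖ ≤ 0.00095 := by
  refine (norm_qParam_le_inv_of_le (n := 7) (x := 0) le_rfl ?_).trans (by norm_num)
  linarith

lemma norm_modularForm_E₄_sub_one_le {z : ℍ} (hz : √3 / 2 ≤ z.im) :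
    ‖ModularForm.E₄ z - 1‖ ≤ 259 * ‖𝕢 z‖ := by
  have hq := norm_qParam_le_of_sqrt_three_div_two_le hz
  rw [← E₄_qParam]
  refine (norm_E₄_sub_one_le (by linarith)).trans ?_
  rw [← mul_div_assoc, div_le_iff₀ (by linarith)]
  nlinarith [norm_qParam_pos z]

lemma sqrt_three_div_two_le_one : √3 / 2 ≤ 1 := by
  rw [div_le_iff₀ two_pos, Real.sqrt_le_left] <;> norm_num

lemma third_le_norm_modularForm_E₄ {z : ℍ} (hz : 1 ≤ z.im) : 1 / 3 ≤ ‖ModularForm.E₄ z‖ := by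
  have hE := norm_modularForm_E₄_sub_one_le (sqrt_three_div_two_le_one.trans hz)
  have h := norm_sub_norm_le 1 (ModularForm.E₄ z)
  rw [norm_one, norm_sub_rev] at h
  linarith [norm_qParam_le_of_one_le hz]

lemma norm_discriminant_le {z : ℍ} (hz : √3 / 2 ≤ z.im) :
    ‖ModularForm.discriminant z‖ ≤ 2 * ‖𝕢 z‖ := by
  have hq := norm_qParam_le_of_sqrt_three_div_two_le hz
  rw [← Δ_qParam]
  exact norm_Δ_le (by linarith)

lemma im_lt_one_of_norm_jInv_le_one {z : ℍ} (hj : ‖jInv z‖ ≤ 1) : z.im < 1 := by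
  by_contra! hz
  have hE := third_le_norm_modularForm_E₄ hz
  have hΔ := norm_discriminant_le (sqrt_three_div_two_le_one.trans hz)
  rw [jInv_eq_div, norm_div, norm_pow,
    div_le_one (norm_pos_iff.2 (ModularForm.discriminant_ne_zero z))] at hj
  have hE3 : (1 / 3 : ℝ) ^ 3 ≤ ‖ModularForm.E₄ z‖ ^ 3 := by gcongr
  linarith [norm_qParam_le_of_one_le hz]

lemma exp_le_discriminantNorm {z : ℍ} (hz : √3 / 2 ≤ z.im) (hz' : z.im ≤ 1) :
    Real.exp (-6.6) ≤ discriminantNorm z := by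
  have hΔ := le_norm_Δ (norm_qParam_le_of_sqrt_three_div_two_le hz)
  rw [Δ_qParam] at hΔ
  have him : Real.exp (1 - z.im⁻¹) ≤ z.im := by
    rw [← Real.le_log_iff_exp_le z.im_pos]
    exact Real.one_sub_inv_le_log_of_pos z.im_pos
  have h089 : Real.exp (-0.12) ≤ 0.89 := by
    rw [Real.exp_neg]
    refine inv_le_of_inv_le₀ (by norm_num) (le_trans ?_ (Real.quadratic_le_exp_of_nonneg ?_)) <;>
      norm_num
  have hexponent : -6.6 ≤ -0.12 + -2 * Real.pi * z.im + 6 * (1 - z.im⁻¹) := by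
    have hπ : Real.pi ≤ 3.15 := by linarith [Real.pi_lt_d2]
    have hconvex : 6.3 * z.im + 6 / z.im ≤ 12.48 := by
      rw [← le_sub_iff_add_le', div_le_iff₀ z.im_pos]
      nlinarith [lt_sqrt_three_div_two]
    rw [div_eq_mul_inv] at hconvex
    nlinarith [z.im_pos]
  calc Real.exp (-6.6) ≤ Real.exp (-0.12) * ‖𝕢 z‖ * Real.exp (1 - z.im⁻¹) ^ 6 := by
        rw [norm_qParam, div_one, coe_im, ← Real.exp_nat_mul, ← Real.exp_add, ← Real.exp_add]
        exact Real.exp_le_exp.2 hexponent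
    _ ≤ 0.89 * ‖𝕢 z‖ * z.im ^ 6 := by gcongr
    _ ≤ discriminantNorm z := mul_le_mul_of_nonneg_right hΔ (by have := z.im_pos; positivity)

lemma le_max_eisensteinNorm_discriminantNorm {z : ℍ} (hz : √3 / 2 ≤ z.im) :
    0.001 ≤ max (eisensteinNorm z) (discriminantNorm z) := by
  rcases le_total z.im 1 with h1 | h1
  · refine le_max_of_le_right (le_trans ?_ (exp_le_discriminantNorm hz h1))
    have hle : Real.exp (-6.6) = Real.exp (-1) ^ 7 * Real.exp 0.4 := by
      rw [← Real.exp_nat_mul, ← Real.exp_add]; norm_num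
    have he : 0.3678 ≤ Real.exp (-1) := by linarith [Real.exp_neg_one_gt_d9]
    have he' : 1.48 ≤ Real.exp 0.4 :=
      le_trans (by norm_num) (Real.quadratic_le_exp_of_nonneg (by norm_num))
    calc (0.001 : ℝ) ≤ 0.3678 ^ 7 * 1.48 := by norm_num
      _ ≤ Real.exp (-6.6) := by rw [hle]; gcongr
  · refine le_max_of_le_left ?_
    calc (0.001 : ℝ) ≤ (1 / 3 * 1 ^ 2) ^ 3 := by norm_num
      _ ≤ eisensteinNorm z := by
        unfold eisensteinNorm peterssonNorm
        gcongr
        exact third_le_norm_modularForm_E₄ h1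

lemma eisensteinNorm_add_discriminantNorm_le {z : ℍ} (hz : √3 / 2 ≤ z.im) :
    eisensteinNorm z + discriminantNorm z ≤ ((1 + 260 * ‖𝕢 z‖) * √z.im ^ 4) ^ 3 := by
  have hE : ‖ModularForm.E₄ z‖ ≤ 1 + 259 * ‖𝕢 z‖ := by
    have h := norm_sub_norm_le (ModularForm.E₄ z) 1
    rw [norm_one] at h
    linarith [norm_modularForm_E₄_sub_one_le hz]
  have hΔ := norm_discriminant_le hz
  have hq := norm_qParam_pos z
  have him := z.im_pos
  calc eisensteinNorm z + discriminantNorm z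
      = (‖ModularForm.E₄ z‖ ^ 3 + ‖ModularForm.discriminant z‖) * z.im ^ 6 := by
        unfold eisensteinNorm discriminantNorm peterssonNorm; ring
    _ ≤ ((1 + 259 * ‖𝕢 z‖) ^ 3 + 2 * ‖𝕢 z‖) * z.im ^ 6 := by gcongr
    _ ≤ (1 + 260 * ‖𝕢 z‖) ^ 3 * z.im ^ 6 := by
        gcongr
        nlinarith [sq_nonneg ‖𝕢 z‖, pow_nonneg hq.le 3]
    _ = ((1 + 260 * ‖𝕢 z‖) * √z.im ^ 4) ^ 3 := by
        rw [mul_pow, show √z.im ^ 4 = (√z.im ^ 2) ^ 2 by ring, Real.sq_sqrt him.le]; ring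

lemma pow_four_le_mul_exp {u v : ℝ} (hu : 0 < u) (hv : 0 < v) (h : (u - v) * (2 - v) ≤ 0) :
    u ^ 4 ≤ v ^ 4 * Real.exp (2 * (u - v)) := by
  have hquot : u ≤ v * Real.exp (u / v - 1) := by
    rw [← div_le_iff₀' hv]
    linarith [Real.add_one_le_exp (u / v - 1)]
  have hexponent : 4 * (u / v - 1) ≤ 2 * (u - v) := by
    rw [div_sub_one hv.ne', ← mul_div_assoc, div_le_iff₀ hv]
    linarith
  calc u ^ 4 ≤ (v * Real.exp (u / v - 1)) ^ 4 := by gcongr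
    _ = v ^ 4 * Real.exp (4 * (u / v - 1)) := by rw [mul_pow, ← Real.exp_nat_mul]; norm_num
    _ ≤ v ^ 4 * Real.exp (2 * (u - v)) := by gcongr

lemma mul_pow_four_le_exp {u v A : ℝ} (hu : 0 < u) (hv : 0 < v) (h : (u - v) * (2 - v) ≤ 0)
    (hA : 0 ≤ A) (hAv : A * v ^ 4 ≤ Real.exp (2 * v - 1)) : A * u ^ 4 ≤ Real.exp (2 * u - 1) :=
  calc A * u ^ 4 ≤ A * (v ^ 4 * Real.exp (2 * (u - v))) := by
        gcongr; exact pow_four_le_mul_exp hu hv h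
    _ ≤ Real.exp (2 * v - 1) * Real.exp (2 * (u - v)) := by rw [← mul_assoc]; gcongr
    _ = Real.exp (2 * u - 1) := by rw [← Real.exp_add]; ring_nf

lemma eisensteinNorm_add_discriminantNorm_le_exp {z : ℍ} (hz : √3 / 2 ≤ z.im) :
    eisensteinNorm z + discriminantNorm z ≤ Real.exp (6 * √z.im - 3) := by
  have hu : 0 < √z.im := Real.sqrt_pos.2 z.im_pos
  have hq := norm_qParam_pos z
  have hbase : (1 + 260 * ‖𝕢 z‖) * √z.im ^ 4 ≤ Real.exp (2 * √z.im - 1) := by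
    rcases le_total z.im 1.21 with h | h
    · have hv : √z.im ≤ 1.1 := by rw [Real.sqrt_le_left] <;> linarith
      refine mul_pow_four_le_exp (v := 1.1) hu (by norm_num) (by linarith) (by positivity) ?_
      calc (1 + 260 * ‖𝕢 z‖) * 1.1 ^ 4 ≤ 2.17 * 1.1 ^ 4 := by
            gcongr; linarith [norm_qParam_le_of_sqrt_three_div_two_le hz]
        _ ≤ Real.exp ((1 : ℕ) + 0.2) :=
            le_trans (by norm_num) (mul_quadratic_le_exp 1 (by norm_num))
        _ = Real.exp (2 * 1.1 - 1) := by norm_num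
    · refine mul_pow_four_le_exp (v := 2) hu two_pos (by simp) (by positivity) ?_
      calc (1 + 260 * ‖𝕢 z‖) * 2 ^ 4 ≤ 1.247 * 2 ^ 4 := by
            gcongr; linarith [norm_qParam_le_of_le h]
        _ ≤ Real.exp ((3 : ℕ) + 0) := le_trans (by norm_num) (mul_quadratic_le_exp 3 le_rfl)
        _ = Real.exp (2 * 2 - 1) := by norm_num
  calc eisensteinNorm z + discriminantNorm z
      ≤ ((1 + 260 * ‖𝕢 z‖) * √z.im ^ 4) ^ 3 := eisensteinNorm_add_discriminantNorm_le hz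
    _ ≤ Real.exp (2 * √z.im - 1) ^ 3 := by gcongr
    _ = Real.exp (6 * √z.im - 3) := by rw [← Real.exp_nat_mul]; push_cast; ring_nf

/-! ### Theta series -/

local notation "θ" => HurwitzZeta.evenKernel 0

lemma hasSum_theta {t : ℝ} (ht : 0 < t) :
    HasSum (fun n : ℤ ↦ Real.exp (-Real.pi * n ^ 2 * t)) (θ t) := by
  simpa using HurwitzZeta.hasSum_int_evenKernel 0 ht

lemma one_le_theta {t : ℝ} (ht : 0 < t) : 1 ≤ θ t := by
  simpa using le_hasSum (hasSum_theta ht) 0 fun n _ ↦ (Real.exp_pos _).le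

lemma theta_inv (t : ℝ) : θ t⁻¹ = √t * θ t := by
  rw [HurwitzZeta.evenKernel_functional_equation 0 t⁻¹,
    ← HurwitzZeta.evenKernel_eq_cosKernel_of_zero, ← Real.sqrt_eq_rpow, Real.sqrt_inv, one_div,
    one_div, inv_inv, inv_inv]

lemma sqrt_le_theta_inv {t : ℝ} (ht : 0 < t) : √t ≤ θ t⁻¹ := by
  rw [theta_inv]
  exact le_mul_of_one_le_right (Real.sqrt_nonneg t) (one_le_theta ht)

lemma evenKernel_le_theta (x : ℝ) {t : ℝ} (ht : 0 < t) : HurwitzZeta.evenKernel x t ≤ θ t := by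
  have ht' : 0 < 1 / t := one_div_pos.2 ht
  rw [HurwitzZeta.evenKernel_functional_equation, HurwitzZeta.evenKernel_functional_equation,
    ← HurwitzZeta.evenKernel_eq_cosKernel_of_zero]
  gcongr
  have hcos := HurwitzZeta.hasSum_int_cosKernel x ht'
  refine (Complex.norm_real _ ▸ Real.le_norm_self _).trans <|
    hcos.norm_le_of_bounded (hasSum_theta ht') fun n ↦ le_of_eq ?_
  rw [norm_mul, Complex.norm_real, Real.norm_of_nonneg (Real.exp_pos _).le, Complex.norm_exp]
  simp

lemma theta_le {t : ℝ} (ht : √3 ≤ t) : θ t ≤ 1.015 := by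
  have ht0 : 0 < t := (Real.sqrt_pos.2 three_pos).trans_le ht
  have hθ : ((θ t : ℝ) : ℂ) = jacobiTheta (Complex.I * t) := by
    rw [jacobiTheta_eq_jacobiTheta₂]
    simpa using HurwitzZeta.evenKernel_def 0 t
  have hq : Real.exp (-Real.pi * t) ≤ 0.0045 := by
    have h := norm_qParam_le_of_sqrt_three_div_two_le
      (z := ⟨Complex.I * (t / 2 : ℝ), by simpa using ht0⟩) (by simp [UpperHalfPlane.im]; linarith)
    rw [norm_qParam] at h
    convert h using 2
    simp
    ring
  have h := norm_jacobiTheta_sub_one_le (τ := Complex.I * t) (by simpa using ht0)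
  rw [← hθ, ← Complex.ofReal_one, ← Complex.ofReal_sub, Complex.norm_real] at h
  simp only [Complex.I_mul_im, Complex.ofReal_re] at h
  have hbound : 2 / (1 - Real.exp (-Real.pi * t)) * Real.exp (-Real.pi * t) ≤ 0.015 := by
    rw [div_mul_eq_mul_div, div_le_iff₀] <;> linarith
  linarith [Real.le_norm_self (θ t - 1)]

/-- The theta series of the lattice `ℤz + ℤ` at time `t`. With values in `[0, ∞]`, double sums
can be rearranged freely. -/
noncomputable def latticeTheta (z : ℍ) (t : ℝ) : ENNReal :=
  ∑' (c : ℤ) (d : ℤ), ENNReal.ofReal (Real.exp (-Real.pi * ‖(c : ℂ) * z + d‖ ^ 2 * t))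

lemma norm_intCast_mul_add_intCast_sq (c d : ℤ) (z : ℍ) :
    ‖(c : ℂ) * z + d‖ ^ 2 = (d + c * z.re) ^ 2 + (c * z.im) ^ 2 := by
  rw [← Complex.normSq_eq_norm_sq, Complex.normSq_apply]
  simp
  ring

lemma latticeTheta_le (z : ℍ) {t : ℝ} (ht : 0 < t) :
    latticeTheta z t ≤ ENNReal.ofReal (θ t * θ (z.im ^ 2 * t)) := by
  have := z.im_pos
  have hsum := hasSum_theta (t := z.im ^ 2 * t) (by positivity)
  rw [ENNReal.ofReal_mul (zero_le_one.trans (one_le_theta ht)), ← hsum.tsum_eq,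
    ENNReal.ofReal_tsum_of_nonneg (fun n ↦ (Real.exp_pos _).le) hsum.summable,
    ← ENNReal.tsum_mul_left]
  refine ENNReal.tsum_le_tsum fun c ↦ ?_
  have hrow := HurwitzZeta.hasSum_int_evenKernel (c * z.re) ht
  calc ∑' d : ℤ, ENNReal.ofReal (Real.exp (-Real.pi * ‖(c : ℂ) * z + d‖ ^ 2 * t))
      = ∑' d : ℤ, ENNReal.ofReal (Real.exp (-Real.pi * (d + c * z.re) ^ 2 * t)) *
          ENNReal.ofReal (Real.exp (-Real.pi * c ^ 2 * (z.im ^ 2 * t))) := by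
        refine tsum_congr fun d ↦ ?_
        rw [← ENNReal.ofReal_mul (Real.exp_pos _).le, ← Real.exp_add,
          norm_intCast_mul_add_intCast_sq]
        ring_nf
    _ = ENNReal.ofReal (HurwitzZeta.evenKernel (c * z.re : ℝ) t) *
          ENNReal.ofReal (Real.exp (-Real.pi * c ^ 2 * (z.im ^ 2 * t))) := by
        rw [ENNReal.tsum_mul_right, ← hrow.tsum_eq,
          ENNReal.ofReal_tsum_of_nonneg (fun d ↦ (Real.exp_pos _).le) hrow.summable]
    _ ≤ ENNReal.ofReal (θ t) * ENNReal.ofReal (Real.exp (-Real.pi * c ^ 2 * (z.im ^ 2 * t))) := by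
        gcongr
        exact evenKernel_le_theta _ ht

lemma sqrt_im_smul_le_latticeTheta (g : SL(2, ℤ)) (z : ℍ) :
    ENNReal.ofReal √(g • z).im ≤ latticeTheta z z.im⁻¹ := by
  have h0 : 0 < (g • z).im := (g • z).im_pos
  have hsum := hasSum_theta (inv_pos.2 h0)
  have hdet : g 0 0 * g 1 1 - g 0 1 * g 1 0 = 1 := by
    rw [← Matrix.det_fin_two, g.det_coe]
  have hinj : Function.Injective fun k : ℤ ↦ (k * g 1 0, k * g 1 1) := by
    intro k l hkl
    obtain ⟨h10, h11⟩ := Prod.mk.inj hkl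
    linear_combination g 0 0 * h11 - g 0 1 * h10 + (l - k) * hdet
  have him : ((g • z).im)⁻¹ = ‖(g 1 0 : ℂ) * z + g 1 1‖ ^ 2 * z.im⁻¹ := by
    rw [ModularGroup.im_smul_eq_div_normSq, Complex.normSq_eq_norm_sq, ModularGroup.denom_apply,
      inv_div, div_eq_mul_inv]
  calc ENNReal.ofReal √(g • z).im
      ≤ ENNReal.ofReal (θ (g • z).im⁻¹) := ENNReal.ofReal_le_ofReal (sqrt_le_theta_inv h0)
    _ = ∑' k : ℤ, ENNReal.ofReal (Real.exp
          (-Real.pi * ‖((k * g 1 0 : ℤ) : ℂ) * z + (k * g 1 1 : ℤ)‖ ^ 2 * z.im⁻¹)) := by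
        rw [← hsum.tsum_eq, ENNReal.ofReal_tsum_of_nonneg (fun n ↦ (Real.exp_pos _).le)
          hsum.summable]
        refine tsum_congr fun k ↦ ?_
        rw [him]
        push_cast
        rw [mul_assoc (k : ℂ), ← mul_add, norm_mul, mul_pow, Complex.norm_intCast, sq_abs]
        ring_nf
    _ ≤ ∑' x : ℤ × ℤ, ENNReal.ofReal (Real.exp
          (-Real.pi * ‖(x.1 : ℂ) * z + x.2‖ ^ 2 * z.im⁻¹)) :=
        ENNReal.tsum_comp_le_tsum_of_injective hinj fun x : ℤ × ℤ ↦ ENNReal.ofReal (Real.exp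
          (-Real.pi * ‖(x.1 : ℂ) * z + x.2‖ ^ 2 * z.im⁻¹))
    _ = latticeTheta z z.im⁻¹ := ENNReal.tsum_prod
          (f := fun c d : ℤ ↦ ENNReal.ofReal (Real.exp (-Real.pi * ‖(c : ℂ) * z + d‖ ^ 2 * z.im⁻¹)))

/-! ### Hecke points -/

/-- The Hecke translates of `z`: the point `p z`, indexed by `none`, and the points `(z + b) / p`,
indexed by `some b`. For a prime `p` they represent the cyclic isogenies of degree `p` from
`ℂ / (ℤz + ℤ)`. -/
noncomputable def heckePoint (p : ℕ) [NeZero p] (z : ℍ) : Option (Fin p) → ℍ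
  | none => ⟨p * z, by simpa using mul_pos (Nat.cast_pos.2 (NeZero.pos p)) z.im_pos⟩
  | some b => ⟨(z + b.val) / p, by
      simpa [Complex.div_natCast_im] using div_pos z.im_pos (Nat.cast_pos.2 (NeZero.pos p))⟩

section

variable (p : ℕ) [NeZero p] (z : ℍ)

lemma coe_heckePoint_none : (heckePoint p z none : ℂ) = p * z := rfl

lemma coe_heckePoint_some (b : Fin p) : (heckePoint p z (some b) : ℂ) = (z + b.val) / p := rfl

lemma im_heckePoint_none : (heckePoint p z none).im = p * z.im := by
  rw [← coe_im, coe_heckePoint_none]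
  simp

lemma im_heckePoint_some (b : Fin p) : (heckePoint p z (some b)).im = z.im / p := by
  rw [← coe_im, coe_heckePoint_some, Complex.div_natCast_im]
  simp

end

lemma tsum_intCast_mul (p : ℕ) [NeZero p] (f : ℤ → ENNReal) :
    ∑' c : ℤ, f (p * c) = ∑' c : ℤ, if (p : ℤ) ∣ c then f c else 0 := by
  have hinj : Function.Injective fun c : ℤ ↦ (p : ℤ) * c :=
    mul_right_injective₀ (Nat.cast_ne_zero.2 (NeZero.ne p))
  rw [← hinj.tsum_eq (f := fun c : ℤ ↦ if (p : ℤ) ∣ c then f c else 0)]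
  · simp
  · rw [Function.support_subset_iff']
    exact fun c hc ↦ if_neg fun ⟨k, hk⟩ ↦ hc ⟨k, hk.symm⟩

lemma injective_intCast_mul_add {p : ℕ} (hp : p.Prime) {c : ℤ} (hc : ¬ (p : ℤ) ∣ c) :
    Function.Injective fun x : Fin p × ℤ ↦ c * x.1.val + p * x.2 := by
  rintro ⟨b, d⟩ ⟨b', d'⟩ (h : c * b.val + p * d = c * b'.val + p * d')
  have hdvd : (p : ℤ) ∣ c * (b.val - b'.val) := ⟨d' - d, by linear_combination h⟩
  have hb : (b.val - b'.val : ℤ) = 0 := by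
    refine Int.eq_zero_of_abs_lt_dvd
      (((Nat.prime_iff_prime_int.1 hp).dvd_or_dvd hdvd).resolve_left hc) ?_
    rw [abs_lt]
    omega
  obtain rfl : b = b' := Fin.ext (by omega)
  simpa [hp.ne_zero] using h

-- Each `(c, d)` lies in exactly one of the `p + 1` sublattices of index `p`, unless `p` divides
-- both coordinates, in which case it lies in all of them.
lemma tsum_sublattices_le {p : ℕ} (hp : p.Prime) (f : ℤ → ℤ → ENNReal) :
    ∑' (c : ℤ) (d : ℤ), f (p * c) d + ∑ b : Fin p, ∑' (c : ℤ) (d : ℤ), f c (c * b.val + p * d) ≤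
      ∑' (c : ℤ) (d : ℤ), f c d + p * ∑' (c : ℤ) (d : ℤ), f (p * c) (p * d) := by
  have := NeZero.mk hp.ne_zero
  rw [tsum_intCast_mul p fun c ↦ ∑' d, f c d, tsum_intCast_mul p fun c ↦ ∑' d : ℤ, f c (p * d),
    ← Summable.tsum_finsetSum fun _ _ ↦ ENNReal.summable, ← ENNReal.tsum_mul_left,
    ← ENNReal.tsum_add, ← ENNReal.tsum_add]
  refine ENNReal.tsum_le_tsum fun c ↦ ?_
  by_cases hc : (p : ℤ) ∣ c
  · obtain ⟨k, rfl⟩ := hc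
    have hshift (b : Fin p) :
        ∑' d : ℤ, f (p * k) (p * k * b.val + p * d) = ∑' d : ℤ, f (p * k) (p * d) := by
      rw [← (Equiv.addLeft (k * b.val : ℤ)).tsum_eq fun d : ℤ ↦ f (p * k) (p * d)]
      refine tsum_congr fun d ↦ ?_
      rw [Equiv.coe_addLeft, mul_add, mul_assoc]
    simp [hshift]
  · simp only [hc, if_false, mul_zero, zero_add, add_zero]
    calc ∑ b : Fin p, ∑' d : ℤ, f c (c * b.val + p * d)
        = ∑' x : Fin p × ℤ, f c (c * x.1.val + p * x.2) := by
          rw [ENNReal.tsum_prod (f := fun (b : Fin p) (d : ℤ) ↦ f c (c * b.val + p * d)),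
            tsum_fintype]
      _ ≤ ∑' d, f c d :=
          ENNReal.tsum_comp_le_tsum_of_injective (injective_intCast_mul_add hp hc) (f c)

lemma sum_latticeTheta_heckePoint_le {p : ℕ} [NeZero p] (hp : p.Prime) (z : ℍ) :
    ∑ i, latticeTheta (heckePoint p z i) (heckePoint p z i).im⁻¹ ≤
      latticeTheta z (p * z.im)⁻¹ + p * latticeTheta z (p / z.im) := by
  have hp0 : (p : ℝ) ≠ 0 := Nat.cast_ne_zero.2 hp.ne_zero
  have hpc : (p : ℂ) ≠ 0 := Nat.cast_ne_zero.2 hp.ne_zero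
  have hz := z.im_pos.ne'
  refine (le_of_eq ?_).trans ((tsum_sublattices_le hp fun c d ↦ ENNReal.ofReal
    (Real.exp (-Real.pi * ‖(c : ℂ) * z + d‖ ^ 2 * (p * z.im)⁻¹))).trans (le_of_eq ?_))
  · rw [Fintype.sum_option]
    congr 1
    · rw [im_heckePoint_none]
      refine tsum_congr fun c ↦ tsum_congr fun d ↦ ?_
      rw [coe_heckePoint_none]
      push_cast
      ring_nf
    · refine Finset.sum_congr rfl fun b _ ↦ tsum_congr fun c ↦ tsum_congr fun d ↦ ?_
      have hnorm : ‖(c : ℂ) * z + ((c * b.val + p * d : ℤ) : ℂ)‖ =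
          p * ‖(c : ℂ) * heckePoint p z (some b) + d‖ := by
        rw [coe_heckePoint_some, ← Complex.norm_natCast, ← norm_mul]
        push_cast
        congr 1
        field_simp
        ring
      rw [hnorm, im_heckePoint_some]
      congr 2
      field_simp
  · simp only [latticeTheta]
    congr 2
    refine tsum_congr fun c ↦ tsum_congr fun d ↦ ?_
    have hnorm : ‖((p * c : ℤ) : ℂ) * z + ((p * d : ℤ) : ℂ)‖ = p * ‖(c : ℂ) * z + d‖ := by
      rw [← Complex.norm_natCast, ← norm_mul]
      push_cast
      ring_nf
    rw [hnorm]
    congr 2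
    field_simp

lemma sum_latticeTheta_heckePoint_le_theta {p : ℕ} [NeZero p] (hp : p.Prime) (z : ℍ) :
    ∑ i, latticeTheta (heckePoint p z i) (heckePoint p z i).im⁻¹ ≤
      ENNReal.ofReal (2 * p * (θ (p * z.im) * θ (p / z.im))) := by
  have hp0 : 0 < (p : ℝ) := Nat.cast_pos.2 hp.pos
  have := z.im_pos
  have hdual := latticeTheta_le z (t := (p * z.im)⁻¹) (by positivity)
  have hdirect := latticeTheta_le z (t := p / z.im) (by positivity)
  have hfunctional : θ (p * z.im)⁻¹ * θ (z.im ^ 2 * (p * z.im)⁻¹) =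
      p * (θ (p * z.im) * θ (p / z.im)) := by
    have hsqrt : √(p * z.im) * √(p / z.im) = p := by
      rw [← Real.sqrt_mul (by positivity), show p * z.im * (p / z.im) = (p : ℝ) ^ 2 by field_simp,
        Real.sqrt_sq hp0.le]
    rw [show z.im ^ 2 * (p * z.im)⁻¹ = (p / z.im)⁻¹ by field_simp, theta_inv, theta_inv]
    linear_combination θ (p * z.im) * θ (p / z.im) * hsqrt
  rw [hfunctional] at hdual
  rw [show z.im ^ 2 * (p / z.im) = p * z.im by field_simp] at hdirect
  have hθ : 0 ≤ θ (p * z.im) * θ (p / z.im) := mul_nonneg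
    (zero_le_one.trans (one_le_theta (by positivity)))
    (zero_le_one.trans (one_le_theta (by positivity)))
  calc _ ≤ latticeTheta z (p * z.im)⁻¹ + p * latticeTheta z (p / z.im) :=
        sum_latticeTheta_heckePoint_le hp z
    _ ≤ ENNReal.ofReal (p * (θ (p * z.im) * θ (p / z.im))) +
          ENNReal.ofReal p * ENNReal.ofReal (θ (p / z.im) * θ (p * z.im)) := by
        rw [ENNReal.ofReal_natCast]
        gcongr
    _ = ENNReal.ofReal (2 * p * (θ (p * z.im) * θ (p / z.im))) := by
        rw [← ENNReal.ofReal_mul hp0.le, ← ENNReal.ofReal_add (by positivity)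
          (by rw [mul_comm (θ _)]; positivity)]
        ring_nf

lemma sum_sqrt_im_smul_heckePoint_le {p : ℕ} [NeZero p] (hp : p.Prime) {z : ℍ}
    (hz : √3 / 2 ≤ z.im) (hz' : z.im ≤ 1) (g : Option (Fin p) → SL(2, ℤ)) :
    ∑ i, √(g i • heckePoint p z i).im ≤ 2.061 * p := by
  have hp2 : (2 : ℝ) ≤ p := mod_cast hp.two_le
  have hy := z.im_pos
  have hθ : 0 ≤ θ (p * z.im) := zero_le_one.trans (one_le_theta (by positivity))
  have hθ' : 0 ≤ θ (p / z.im) := zero_le_one.trans (one_le_theta (by positivity))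
  have hmul : θ (p * z.im) ≤ 1.015 := theta_le (by nlinarith)
  have hdiv : θ (p / z.im) ≤ 1.015 := theta_le <| by
    rw [le_div_iff₀ hy]
    nlinarith [Real.sqrt_nonneg 3, sqrt_three_div_two_le_one]
  have hsum : ENNReal.ofReal (∑ i, √(g i • heckePoint p z i).im) ≤
      ENNReal.ofReal (2 * p * (θ (p * z.im) * θ (p / z.im))) := by
    rw [ENNReal.ofReal_sum_of_nonneg fun i _ ↦ Real.sqrt_nonneg _]
    exact (Finset.sum_le_sum fun i _ ↦ sqrt_im_smul_le_latticeTheta _ _).trans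
      (sum_latticeTheta_heckePoint_le_theta hp z)
  calc ∑ i, √(g i • heckePoint p z i).im
      ≤ 2 * p * (θ (p * z.im) * θ (p / z.im)) :=
        (ENNReal.ofReal_le_ofReal_iff (by positivity)).1 hsum
    _ ≤ 2 * p * (1.015 * 1.015) := by gcongr
    _ ≤ 2.061 * p := by linarith

/-! ### The product of the discriminants of the Hecke points -/

lemma hasProd_ite_dvd {p : ℕ} (hp : 0 < p) {f : ℕ → ℂ} {a : ℂ}
    (h : HasProd (fun m : ℕ+ ↦ f (p * m)) a) :
    HasProd (fun n : ℕ+ ↦ if p ∣ n then f n else 1) a := by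
  lift p to ℕ+ using hp
  rw [← (mul_right_injective p).hasProd_iff]
  · simpa [Function.comp_def] using h
  · exact fun n hn ↦ if_neg fun ⟨k, hk⟩ ↦
      hn ⟨⟨k, Nat.pos_of_mul_pos_left (hk ▸ n.pos)⟩, PNat.eq hk.symm⟩

lemma prod_one_sub_root_mul_pow {p : ℕ} (hp : p.Prime) {ζ : ℂ} (hζ : IsPrimitiveRoot ζ p) (t : ℂ)
    (n : ℕ) :
    ∏ b : Fin p, (1 - (ζ ^ b.val * t) ^ n) =
      if p ∣ n then (1 - t ^ n) ^ p else 1 - t ^ (p * n) := by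
  have hpow (b : Fin p) : (ζ ^ b.val * t) ^ n = (ζ ^ n) ^ b.val * t ^ n := by
    rw [mul_pow, pow_right_comm]
  simp only [hpow]
  split_ifs with h
  · simp [(hζ.pow_eq_one_iff_dvd n).2 h]
  · have hζn : IsPrimitiveRoot (ζ ^ n) p :=
      hζ.pow_of_coprime n ((Nat.Prime.coprime_iff_not_dvd hp).2 h).symm
    have hfactor := congrArg (Polynomial.eval 1) (X_pow_sub_C_eq_prod hζn hp.pos (α := t ^ n) rfl)
    simp only [Polynomial.eval_sub, Polynomial.eval_pow, Polynomial.eval_X, Polynomial.eval_C,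
      Polynomial.eval_prod, one_pow] at hfactor
    rw [Fin.prod_univ_eq_prod_range fun b ↦ 1 - (ζ ^ n) ^ b * t ^ n, ← hfactor, mul_comm p, pow_mul]

lemma hasProd_one_sub_pow {q : ℂ} (hq : ‖q‖ < 1) :
    HasProd (fun n : ℕ+ ↦ 1 - q ^ n.val) (∏' n : ℕ, (1 - q ^ (n + 1))) := by
  rw [← Equiv.pnatEquivNat.symm.hasProd_iff]
  exact (ModularForm.multipliable_one_sub_pow hq).hasProd

lemma tprod_one_sub_pow_mul_prod_root {p : ℕ} (hp : p.Prime) {ζ : ℂ} (hζ : IsPrimitiveRoot ζ p)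
    {t : ℂ} (ht : ‖t‖ < 1) :
    (∏' n : ℕ, (1 - (t ^ p ^ 2) ^ (n + 1))) *
        ∏ b : Fin p, ∏' n : ℕ, (1 - (ζ ^ b.val * t) ^ (n + 1)) =
      (∏' n : ℕ, (1 - (t ^ p) ^ (n + 1))) ^ (p + 1) := by
  have hpow {k : ℕ} (hk : k ≠ 0) : ‖t ^ k‖ < 1 := by
    rw [norm_pow]
    exact pow_lt_one₀ (norm_nonneg t) ht hk
  have hp0 := hp.ne_zero
  have hroot (b : Fin p) : ‖ζ ^ b.val * t‖ < 1 := by simpa [hζ.norm'_eq_one hp0] using ht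
  have hsq := hasProd_ite_dvd hp.pos (f := fun n ↦ 1 - (t ^ p) ^ n)
    (a := ∏' n : ℕ, (1 - (t ^ p ^ 2) ^ (n + 1))) <| by
      simpa [← pow_mul, ← mul_assoc, sq] using hasProd_one_sub_pow (hpow (pow_ne_zero 2 hp0))
  have hdvd := hasProd_ite_dvd hp.pos (f := fun n ↦ (1 - t ^ n) ^ p)
    (a := (∏' n : ℕ, (1 - (t ^ p) ^ (n + 1))) ^ p) <| by
      simpa [← pow_mul] using (hasProd_one_sub_pow (hpow hp0)).pow p
  have hroots := hasProd_prod fun (b : Fin p) (_ : b ∈ Finset.univ) ↦ hasProd_one_sub_pow (hroot b)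
  rw [pow_succ]
  refine (hsq.mul hroots).unique ?_
  convert! hdvd.mul (hasProd_one_sub_pow (hpow hp0)) using 2 with n
  rw [prod_one_sub_root_mul_pow hp hζ]
  split_ifs <;> ring

lemma norm_Δ_pow_mul_prod_root {p : ℕ} (hp : p.Prime) {ζ : ℂ} (hζ : IsPrimitiveRoot ζ p)
    {t : ℂ} (ht : ‖t‖ < 1) :
    ‖Δ (t ^ p ^ 2)‖ * ∏ b : Fin p, ‖Δ (ζ ^ b.val * t)‖ = ‖Δ (t ^ p)‖ ^ (p + 1) := by
  have hp0 := hp.ne_zero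
  have hζ1 := hζ.norm'_eq_one hp0
  have hpow {k : ℕ} (hk : k ≠ 0) : ‖t ^ k‖ < 1 := by
    rw [norm_pow]
    exact pow_lt_one₀ (norm_nonneg t) ht hk
  have hroot (b : Fin p) : ‖Δ (ζ ^ b.val * t)‖ =
      ‖t‖ * ‖∏' n : ℕ, (1 - (ζ ^ b.val * t) ^ (n + 1))‖ ^ 24 := by
    rw [norm_Δ (by simpa [hζ1] using ht)]
    simp [hζ1]
  have heta := congrArg norm (tprod_one_sub_pow_mul_prod_root hp hζ ht)
  rw [norm_mul, norm_pow, norm_prod] at heta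
  simp_rw [hroot]
  rw [norm_Δ (hpow (pow_ne_zero 2 hp0)), norm_Δ (hpow hp0), Finset.prod_mul_distrib,
    Finset.prod_pow, Finset.prod_const, Finset.card_univ, Fintype.card_fin, mul_pow,
    pow_right_comm _ 24, ← heta, norm_pow, norm_pow]
  ring

lemma prod_norm_discriminant_heckePoint {p : ℕ} [NeZero p] (hp : p.Prime) (z : ℍ) :
    ∏ i, ‖ModularForm.discriminant (heckePoint p z i)‖ =
      ‖ModularForm.discriminant z‖ ^ (p + 1) := by
  have hp0 : (p : ℂ) ≠ 0 := Nat.cast_ne_zero.2 hp.ne_zero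
  have hζ := Complex.isPrimitiveRoot_exp p hp.ne_zero
  have ht : ‖𝕢 (z / p)‖ < 1 := by
    rw [norm_qParam, Real.exp_lt_one_iff, Complex.div_natCast_im]
    have := div_pos z.im_pos (Nat.cast_pos.2 hp.pos)
    simp only [coe_im, div_one, neg_mul, Left.neg_neg_iff]
    positivity
  have hz : 𝕢 (z / p) ^ p = 𝕢 z := by
    rw [qParam_one_eq_exp, qParam_one_eq_exp, ← Complex.exp_nat_mul]
    congr 1
    field_simp
  have hnone : 𝕢 (z / p) ^ p ^ 2 = 𝕢 (heckePoint p z none) := by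
    rw [coe_heckePoint_none, qParam_one_eq_exp, qParam_one_eq_exp, ← Complex.exp_nat_mul]
    congr 1
    push_cast
    field_simp
  have hsome (b : Fin p) : Complex.exp (2 * Real.pi * Complex.I / p) ^ b.val * 𝕢 (z / p) =
      𝕢 (heckePoint p z (some b)) := by
    rw [coe_heckePoint_some, qParam_one_eq_exp, qParam_one_eq_exp, ← Complex.exp_nat_mul,
      ← Complex.exp_add]
    congr 1
    field_simp
    ring
  rw [Fintype.prod_option]
  simpa only [hz, hnone, hsome, Δ_qParam] using norm_Δ_pow_mul_prod_root hp hζ ht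

lemma prod_discriminantNorm_heckePoint {p : ℕ} [NeZero p] (hp : p.Prime) (z : ℍ) :
    (∏ i, discriminantNorm (heckePoint p z i)) * (p : ℝ) ^ (6 * (p - 1)) =
      discriminantNorm z ^ (p + 1) := by
  have hp0 : (p : ℝ) ≠ 0 := Nat.cast_ne_zero.2 hp.ne_zero
  have him : (∏ i, (heckePoint p z i).im ^ 6) * (p : ℝ) ^ (6 * (p - 1)) =
      (z.im ^ 6) ^ (p + 1) := by
    obtain ⟨k, rfl⟩ := Nat.exists_eq_succ_of_ne_zero hp.ne_zero
    simp only [Fintype.prod_option, im_heckePoint_none, im_heckePoint_some, Finset.prod_const,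
      Finset.card_univ, Fintype.card_fin, Nat.succ_eq_add_one, Nat.add_sub_cancel]
    rw [div_pow, div_pow]
    field_simp
    ring
  simp only [discriminantNorm, peterssonNorm]
  rw [Finset.prod_mul_distrib, prod_norm_discriminant_heckePoint hp, mul_assoc, him, mul_pow]

/-! ### The `j`-invariant near the cusp -/

open Filter Topology Bornology

lemma differentiableOn_E₄ : DifferentiableOn ℂ E₄ (Metric.ball 0 (1 / 32)) := by
  unfold E₄
  refine (differentiableOn_const _).add ((differentiableOn_const _).mul ?_)
  refine Complex.differentiableOn_tsum_of_summable_norm (u := fun n ↦ (1 / 2 : ℝ) ^ n)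
    summable_geometric_two (fun n ↦ by fun_prop) Metric.isOpen_ball fun n q hq ↦ ?_
  rw [mem_ball_zero_iff] at hq
  calc _ ≤ ‖q‖ * (16 * ‖q‖) ^ n := norm_sigma_three_mul_pow_le q n
    _ ≤ 1 * (1 / 2) ^ n := by gcongr <;> linarith
    _ = (1 / 2) ^ n := one_mul _

lemma E₄_zero : E₄ 0 = 1 := by simp [E₄]

lemma hasStrictDerivAt_Δ_div_E₄_pow_three :
    HasStrictDerivAt (fun q : ℂ ↦ Δ q / E₄ q ^ 3) 1 0 := by
  have hE : AnalyticAt ℂ E₄ 0 :=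
    differentiableOn_E₄.analyticAt (Metric.ball_mem_nhds 0 (by norm_num))
  have hprod : AnalyticAt ℂ (fun q : ℂ ↦ ∏' n : ℕ, (1 - q ^ (n + 1)) ^ 24) 0 :=
    (ModularForm.differentiableOn_tprod_one_sub_pow_pow 24).analyticAt
      (Metric.ball_mem_nhds 0 one_pos)
  have hquot := (hprod.div (hE.pow 3) (by simp [E₄_zero])).hasStrictDerivAt
  simpa [Δ, mul_div_assoc, E₄_zero] using! (hasStrictDerivAt_id (0 : ℂ)).fun_mul hquot

lemma exists_injOn_J : ∃ s ∈ 𝓝 (0 : ℂ), Set.InjOn _root_.J s := by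
  have hinv : _root_.J = fun q ↦ (Δ q / E₄ q ^ 3)⁻¹ := by
    ext q
    rw [_root_.J, inv_div]
  refine ⟨_, hasStrictDerivAt_Δ_div_E₄_pow_three.eventually_left_inverse one_ne_zero,
    fun q hq q' hq' h ↦ ?_⟩
  simp only [hinv, inv_inj] at h
  rw [← Set.mem_ofPred.1 hq, h, Set.mem_ofPred.1 hq']

lemma tendsto_jInv_atImInfty : Tendsto (fun z : ℍ ↦ jInv z) atImInfty (cobounded ℂ) := by
  have hdiv := hasStrictDerivAt_Δ_div_E₄_pow_three.hasDerivAt.tendsto_nhdsNE one_ne_zero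
  rw [E₄_zero, show Δ 0 = 0 by simp [Δ], zero_div] at hdiv
  have hq := (qParam_tendsto one_pos).comp tendsto_coe_atImInfty
  refine (tendsto_inv₀_nhdsNE_zero.comp (hdiv.comp hq)).congr fun z ↦ ?_
  simp [jInv_eq_J_qParam, _root_.J]

lemma norm_jInv_mul_norm_qParam_le {z : ℍ} (hz : √3 / 2 ≤ z.im) : ‖jInv z‖ * ‖𝕢 z‖ ≤ 12 := by
  have hq := norm_qParam_le_of_sqrt_three_div_two_le hz
  have hE : ‖ModularForm.E₄ z‖ ≤ 2.2 := by
    have := norm_modularForm_E₄_sub_one_le hz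
    have := norm_add_le (ModularForm.E₄ z - 1) 1
    rw [sub_add_cancel, norm_one] at this
    linarith
  have hΔ : 0.89 * ‖𝕢 z‖ ≤ ‖ModularForm.discriminant z‖ := Δ_qParam z ▸ le_norm_Δ hq
  have hq0 := norm_qParam_pos z
  rw [jInv_eq_div, norm_div, norm_pow, div_mul_eq_mul_div, div_le_iff₀ (by linarith)]
  calc ‖ModularForm.E₄ z‖ ^ 3 * ‖𝕢 z‖ ≤ 2.2 ^ 3 * ‖𝕢 z‖ := by gcongr
    _ ≤ 12 * ‖ModularForm.discriminant z‖ := by linarith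

lemma exists_eq_add_intCast_of_qParam_eq {z w : ℂ} (h : 𝕢 z = 𝕢 w) : ∃ n : ℤ, w = z + n := by
  obtain ⟨m, hm⟩ := qParam_left_inv_mod_period one_ne_zero z
  obtain ⟨n, hn⟩ := qParam_left_inv_mod_period one_ne_zero w
  refine ⟨m - n, ?_⟩
  rw [h, hn] at hm
  push_cast at hm ⊢
  linear_combination hm

lemma exists_smul_eq_of_qParam_eq {z w : ℍ} (h : 𝕢 z = 𝕢 w) : ∃ g : SL(2, ℤ), w = g • z := by
  obtain ⟨n, hn⟩ := exists_eq_add_intCast_of_qParam_eq h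
  refine ⟨ModularGroup.T ^ n, UpperHalfPlane.ext ?_⟩
  rw [ModularGroup.coe_T_zpow_smul_eq, hn]

lemma eventually_exists_smul_eq_of_jInv_eq :
    ∀ᶠ z : ℍ in atImInfty, ∀ w : ℍ, jInv w = jInv z → ∃ g : SL(2, ℤ), w = g • z := by
  obtain ⟨s, hs, hJ⟩ := exists_injOn_J
  obtain ⟨ε, hε, hεs⟩ := Metric.mem_nhds_iff.1 hs
  have hq : ∀ᶠ z : ℍ in atImInfty, 𝕢 z ∈ s :=
    (qParam_tendsto_atImInfty one_pos).eventually hs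
  have hj : ∀ᶠ z : ℍ in atImInfty, 12 / ε < ‖jInv z‖ :=
    (tendsto_norm_cobounded_atTop.comp tendsto_jInv_atImInfty).eventually_gt_atTop (12 / ε)
  filter_upwards [hq, hj] with z hzs hzj w hw
  obtain ⟨g, hg⟩ := exists_smul_sqrt_three_div_two_le_im w
  have hgw : jInv (g • w : ℍ) = jInv z := (jInv_smul g w).trans hw
  have hgs : 𝕢 (g • w : ℍ) ∈ s := hεs <| mem_ball_zero_iff.2 <| by
    have hmul := norm_jInv_mul_norm_qParam_le hg
    rw [hgw] at hmul
    rw [div_lt_iff₀ hε] at hzj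
    exact lt_of_mul_lt_mul_left (hmul.trans_lt hzj) (norm_nonneg _)
  have hqq : 𝕢 z = 𝕢 (g • w : ℍ) :=
    hJ hzs hgs (by rw [← jInv_eq_J_qParam, ← jInv_eq_J_qParam, hgw])
  obtain ⟨γ, hγ⟩ := exists_smul_eq_of_qParam_eq hqq
  exact ⟨g⁻¹ * γ, by rw [mul_smul, ← hγ, inv_smul_smul]⟩

/-! ### Isogenies -/

/-- `w` is the image of `z` under an integer matrix of determinant `N`. For `N > 0` this says that
the elliptic curves `ℂ / (ℤz + ℤ)` and `ℂ / (ℤw + ℤ)` are related by an isogeny of degree `N`; the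
Möbius transformation is stated without a denominator. -/
def IsIsogeny (N : ℕ) (z w : ℍ) : Prop :=
  ∃ a b c d : ℤ, a * d - b * c = N ∧ (w : ℂ) * (c * z + d) = a * z + b

lemma exists_coe_eq_div {a b c d : ℤ} (hdet : 0 < a * d - b * c) (z : ℍ) :
    (c : ℂ) * z + d ≠ 0 ∧ ∃ w : ℍ, (w : ℂ) = (a * z + b) / (c * z + d) := by
  have hdet' : (0 : ℝ) < (!![(a : ℝ), b; c, d]).det := by
    rw [Matrix.det_fin_two_of]
    exact_mod_cast hdet
  let g := Matrix.GeneralLinearGroup.mkOfDetNeZero _ hdet'.ne'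
  have hdenom : denom g z = c * z + d := by simp [denom, g, Matrix.GeneralLinearGroup.mkOfDetNeZero]
  have hnum : num g z = a * z + b := by simp [num, g, Matrix.GeneralLinearGroup.mkOfDetNeZero]
  refine ⟨hdenom ▸ denom_ne_zero g z, g • z, ?_⟩
  rw [coe_smul_of_det_pos (g := g) hdet', hdenom, hnum]

namespace IsIsogeny

lemma symm {N : ℕ} {z w : ℍ} : IsIsogeny N z w → IsIsogeny N w z := by
  rintro ⟨a, b, c, d, hdet, hw⟩
  refine ⟨d, -b, -c, a, by linear_combination hdet, ?_⟩
  push_cast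
  linear_combination -hw

lemma trans {M N : ℕ} {z w v : ℍ} :
    IsIsogeny M z w → IsIsogeny N w v → IsIsogeny (N * M) z v := by
  rintro ⟨a, b, c, d, hdet, hw⟩ ⟨a', b', c', d', hdet', hv⟩
  refine ⟨a' * a + b' * c, a' * b + b' * d, c' * a + d' * c, c' * b + d' * d, ?_, ?_⟩
  · push_cast
    linear_combination (a * d - b * c) * hdet' + N * hdet
  · push_cast
    linear_combination (c * z + d) * hv + (a' - v * c') * hw

lemma one_iff {z w : ℍ} : IsIsogeny 1 z w ↔ ∃ g : SL(2, ℤ), w = g • z := by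
  constructor
  · rintro ⟨a, b, c, d, hdet, hw⟩
    let g : SL(2, ℤ) := ⟨!![a, b; c, d], by rw [Matrix.det_fin_two_of]; exact_mod_cast hdet⟩
    have hdet' : 0 < a * d - b * c := by simp [hdet]
    refine ⟨g, UpperHalfPlane.ext ?_⟩
    rw [coe_specialLinearGroup_apply]
    simpa [g] using eq_div_of_mul_eq (exists_coe_eq_div hdet' z).1 hw
  · rintro ⟨g, rfl⟩
    have hdet : g 0 0 * g 1 1 - g 0 1 * g 1 0 = 1 := by rw [← Matrix.det_fin_two, g.det_coe]
    have hdet' : 0 < g 0 0 * g 1 1 - g 0 1 * g 1 0 := by simp [hdet]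
    refine ⟨g 0 0, g 0 1, g 1 0, g 1 1, mod_cast hdet, ?_⟩
    rw [coe_specialLinearGroup_apply]
    simpa using div_mul_cancel₀ _ (exists_coe_eq_div hdet' z).1

lemma of_smul_left {N : ℕ} {g : SL(2, ℤ)} {z w : ℍ} (h : IsIsogeny N (g • z) w) :
    IsIsogeny N z w :=
  mul_one N ▸ (one_iff.2 ⟨g, rfl⟩).trans h

end IsIsogeny

lemma isIsogeny_heckePoint (p : ℕ) [NeZero p] (z : ℍ) (i : Option (Fin p)) :
    IsIsogeny p z (heckePoint p z i) := by
  rcases i with _ | b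
  · exact ⟨p, 0, 0, 1, by simp, by simp [coe_heckePoint_none]⟩
  · refine ⟨1, b.val, 0, p, by simp, ?_⟩
    have := NeZero.ne p
    simp [coe_heckePoint_some]

namespace IsIsogeny

lemma of_isCoprime {p : ℕ} [NeZero p] {z w : ℍ} {a b c d : ℤ} (hac : IsCoprime a c)
    (hdet : a * d - b * c = p) (hw : (w : ℂ) * (c * z + d) = a * z + b) :
    ∃ i : Fin p, IsIsogeny 1 (heckePoint p z (some i)) w := by
  have hp : (p : ℤ) ≠ 0 := Nat.cast_ne_zero.2 (NeZero.ne p)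
  obtain ⟨u, v, huv⟩ := hac
  obtain ⟨k, hk⟩ := Int.eq_ofNat_of_zero_le (Int.emod_nonneg (u * b + v * d) hp)
  have hkp : k < p := by
    have := Int.emod_lt_of_pos (u * b + v * d) (Nat.cast_pos.2 (NeZero.pos p))
    omega
  have hdiv := Int.emod_add_mul_ediv (u * b + v * d) p
  set m := (u * b + v * d) / p
  rw [hk] at hdiv
  have hb : b = a * k + p * (a * m - v) := by
    linear_combination (-a) * hdiv - v * hdet - b * huv
  have hd : d = c * k + p * (c * m + u) := by
    linear_combination (-c) * hdiv + u * hdet - d * huv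
  refine ⟨⟨k, hkp⟩, a, a * m - v, c, c * m + u, ?_, ?_⟩
  · push_cast
    linear_combination huv
  · have hpc : (p : ℂ) ≠ 0 := Nat.cast_ne_zero.2 (NeZero.ne p)
    rw [hb, hd] at hw
    push_cast at hw ⊢
    rw [coe_heckePoint_some]
    field_simp
    linear_combination hw

lemma exists_eq_smul_heckePoint {p : ℕ} [NeZero p] (hp : p.Prime) {z w : ℍ}
    (h : IsIsogeny p z w) : ∃ i, ∃ g : SL(2, ℤ), w = g • heckePoint p z i := by
  simp only [← one_iff]
  obtain ⟨a, b, c, d, hdet, hw⟩ := h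
  have hdvd : Int.gcd a c ∣ p := by
    rw [← Int.natCast_dvd_natCast, ← hdet]
    exact dvd_sub (Int.gcd_dvd_left a c |>.mul_right d) (Int.gcd_dvd_right a c |>.mul_left b)
  rcases (Nat.dvd_prime hp).1 hdvd with h1 | hgcd
  · obtain ⟨i, hi⟩ := of_isCoprime (Int.isCoprime_iff_gcd_eq_one.2 h1) hdet hw
    exact ⟨some i, hi⟩
  · obtain ⟨a', ha⟩ := hgcd ▸ Int.gcd_dvd_left a c
    obtain ⟨c', hc⟩ := hgcd ▸ Int.gcd_dvd_right a c
    subst ha hc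
    refine ⟨none, a', b, c', d, ?_, ?_⟩
    · refine mul_left_cancel₀ (Nat.cast_ne_zero.2 hp.ne_zero : (p : ℤ) ≠ 0) ?_
      push_cast
      linear_combination hdet
    · rw [coe_heckePoint_none]
      push_cast at hw
      linear_combination hw

end IsIsogeny

lemma exists_isIsogeny_iff {N : ℕ} (hN : Squarefree N) {x y : ℂ} :
    (∃ z w : ℍ, IsIsogeny N z w ∧ x = jInv w ∧ y = jInv z) ↔
      ∃ τ : ℂ, 0 < τ.im ∧ ∃ a b c d : ℤ, a * d - b * c = (N : ℤ) ∧
        Int.gcd (Int.gcd a b) (Int.gcd c d) = 1 ∧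
        x = jInv (((a : ℂ) * τ + b) / ((c : ℂ) * τ + d)) ∧ y = jInv τ := by
  have hN0 : 0 < (N : ℤ) := Nat.cast_pos.2 hN.ne_zero.bot_lt
  constructor
  · rintro ⟨z, w, ⟨a, b, c, d, hdet, hw⟩, rfl, rfl⟩
    refine ⟨z, z.im_pos, a, b, c, d, hdet, ?_, ?_, rfl⟩
    · set g := Int.gcd (Int.gcd a b) (Int.gcd c d)
      have hab : (g : ℤ) ∣ Int.gcd a b := Int.gcd_dvd_left _ _
      have hcd : (g : ℤ) ∣ Int.gcd c d := Int.gcd_dvd_right _ _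
      refine Nat.isUnit_iff.1 (hN g (Int.natCast_dvd_natCast.1 ?_))
      rw [← hdet, Nat.cast_mul]
      exact dvd_sub (mul_dvd_mul (hab.trans (Int.gcd_dvd_left _ _))
        (hcd.trans (Int.gcd_dvd_right _ _))) (mul_dvd_mul (hab.trans (Int.gcd_dvd_right _ _))
        (hcd.trans (Int.gcd_dvd_left _ _)))
    · rw [eq_div_of_mul_eq (exists_coe_eq_div (hdet ▸ hN0) z).1 hw]
  · rintro ⟨τ, hτ, a, b, c, d, hdet, _, rfl, rfl⟩
    obtain ⟨hdenom, w, hw⟩ := exists_coe_eq_div (hdet ▸ hN0) ⟨τ, hτ⟩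
    exact ⟨⟨τ, hτ⟩, w, ⟨a, b, c, d, hdet, by rw [hw, div_mul_cancel₀ _ hdenom]⟩, by rw [hw], rfl⟩

lemma exists_isIsogeny_symm {N : ℕ} {x y : ℂ}
    (h : ∃ z w : ℍ, IsIsogeny N z w ∧ x = jInv w ∧ y = jInv z) :
    ∃ z w : ℍ, IsIsogeny N z w ∧ y = jInv w ∧ x = jInv z := by
  obtain ⟨z, w, hzw, hx, hy⟩ := h
  exact ⟨w, z, hzw.symm, hy, hx⟩

/-- The exchange of the variables `X` and `Y`. -/
noncomputable def swapVars : MvPolynomial (Fin 2) ℤ ≃ₐ[ℤ] MvPolynomial (Fin 2) ℤ :=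
  MvPolynomial.renameEquiv ℤ (Equiv.swap 0 1)

lemma swapVars_apply (P : MvPolynomial (Fin 2) ℤ) :
    swapVars P = MvPolynomial.rename (Equiv.swap 0 1) P := rfl

lemma swapVars_swapVars (P : MvPolynomial (Fin 2) ℤ) : swapVars (swapVars P) = P := by
  simp [swapVars_apply, MvPolynomial.rename_rename, ← Equiv.coe_trans]

lemma degreeOf_zero_swapVars (P : MvPolynomial (Fin 2) ℤ) :
    MvPolynomial.degreeOf 0 (swapVars P) = MvPolynomial.degreeOf 1 P := by
  simpa [swapVars_apply] using
    MvPolynomial.degreeOf_rename_of_injective (p := P) (Equiv.swap (0 : Fin 2) 1).injective 1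

lemma evalBiv_swapVars (P : MvPolynomial (Fin 2) ℤ) (x y : ℂ) :
    evalBiv (swapVars P) x y = evalBiv P y x := by
  rw [evalBiv, evalBiv, swapVars_apply, MvPolynomial.eval₂_rename]
  congr 1
  ext i
  fin_cases i <;> simp

end ModularPolynomial

namespace IsModularPolynomial

open ModularPolynomial
open UpperHalfPlane hiding J

lemma evalBiv_eq_zero_iff {N : ℕ} (hN : Squarefree N) {P : MvPolynomial (Fin 2) ℤ}
    (hP : IsModularPolynomial N P) {x y : ℂ} :
    evalBiv P x y = 0 ↔ ∃ z w : ℍ, IsIsogeny N z w ∧ x = jInv w ∧ y = jInv z :=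
  (hP.2.2.2 x y).trans (exists_isIsogeny_iff hN).symm

lemma swapVars {N : ℕ} (hN : Squarefree N) {P : MvPolynomial (Fin 2) ℤ}
    (hP : IsModularPolynomial N P) : IsModularPolynomial N (swapVars P) := by
  refine ⟨(MulEquiv.irreducible_iff ModularPolynomial.swapVars).2 hP.1, hP.2.2.1, ?_, fun x y ↦ ?_⟩
  · rw [← swapVars_apply, swapVars_swapVars]
    exact hP.2.1
  · rw [evalBiv_swapVars, hP.evalBiv_eq_zero_iff hN, ← exists_isIsogeny_iff hN]
    exact ⟨exists_isIsogeny_symm, exists_isIsogeny_symm⟩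

end IsModularPolynomial

namespace ModularPolynomial

open Filter Bornology Polynomial Function.Periodic
open scoped Topology
open UpperHalfPlane hiding J

local notation "𝕢" => qParam 1

/-! ### Specialization of the second variable -/

/-- The polynomial `P(X, y)`. -/
noncomputable def specialize (P : MvPolynomial (Fin 2) ℤ) (y : ℂ) : ℂ[X] :=
  (MvPolynomial.finSuccEquiv ℤ 1 P).map (MvPolynomial.eval₂Hom (Int.castRingHom ℂ) fun _ ↦ y)

lemma eval_specialize (P : MvPolynomial (Fin 2) ℤ) (x y : ℂ) :
    (specialize P y).eval x = evalBiv P x y := by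
  let φ := MvPolynomial.eval₂Hom (Int.castRingHom ℂ) fun _ : Fin 1 ↦ y
  have hhom : (((evalRingHom x).comp (mapRingHom φ)).comp
      (MvPolynomial.finSuccEquiv ℤ 1).toRingEquiv.toRingHom) =
      MvPolynomial.eval₂Hom (Int.castRingHom ℂ) ![x, y] := by
    refine MvPolynomial.ringHom_ext (fun n ↦ by simp) fun i ↦ ?_
    fin_cases i
    · simp [MvPolynomial.finSuccEquiv_X_zero]
    · simpa [φ] using congrArg (fun f ↦ eval x (map φ f))
        (MvPolynomial.finSuccEquiv_X_succ (R := ℤ) (j := (0 : Fin 1)))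
  exact RingHom.congr_fun hhom P

lemma monic_specialize {P : MvPolynomial (Fin 2) ℤ}
    (hP : (MvPolynomial.finSuccEquiv ℤ 1 P).Monic) (y : ℂ) : (specialize P y).Monic :=
  hP.map _

lemma natDegree_specialize {P : MvPolynomial (Fin 2) ℤ}
    (hP : (MvPolynomial.finSuccEquiv ℤ 1 P).Monic) (y : ℂ) :
    (specialize P y).natDegree = MvPolynomial.degreeOf 0 P := by
  rw [specialize, hP.natDegree_map, MvPolynomial.natDegree_finSuccEquiv]

lemma differentiable_evalBiv (P : MvPolynomial (Fin 2) ℤ) (x : ℂ) :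
    Differentiable ℂ (evalBiv P x) := by
  have heq : evalBiv P x = fun y ↦ (specialize (swapVars P) x).eval y := by
    ext y
    rw [eval_specialize, evalBiv_swapVars]
  exact heq ▸ Polynomial.differentiable _

lemma exists_ne_zero_forall_separable_map {R : Type*} [CommRing R] [IsDomain R]
    [IsIntegrallyClosed R] [CharZero R] {f : R[X]} (hf : f.Monic) (hirr : Irreducible f) :
    ∃ c ≠ 0, ∀ {K : Type*} [Field K] (φ : R →+* K), φ c ≠ 0 → (f.map φ).Separable := by
  have hdeg : f.natDegree ≠ 0 := (hf.natDegree_pos_of_not_isUnit hirr.not_isUnit).ne'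
  have hinj := IsFractionRing.injective R (FractionRing R)
  have := charZero_of_injective_algebraMap hinj
  refine ⟨f.resultant (derivative f), fun hres ↦ ?_, fun φ hφ ↦ ?_⟩
  · have hsep := (hf.irreducible_iff_irreducible_map_fraction_map (K := FractionRing R)).1 hirr
    refine resultant_ne_zero _ _ hsep.separable ?_
    rw [derivative_map, natDegree_map_eq_of_injective hinj, natDegree_map_eq_of_injective hinj,
      resultant_map_map, hres, map_zero]
  · obtain ⟨a, b, -, -, hab⟩ :=
      exists_mul_add_mul_eq_C_resultant f (derivative f) le_rfl le_rfl (.inl hdeg)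
    have hmap := congrArg (fun g ↦ C (φ (f.resultant (derivative f)))⁻¹ * g.map φ) hab
    rw [map_C, ← C_mul, inv_mul_cancel₀ hφ, C_1] at hmap
    refine ⟨C (φ (f.resultant (derivative f)))⁻¹ * map φ a,
      C (φ (f.resultant (derivative f)))⁻¹ * map φ b, ?_⟩
    rw [derivative_map, ← hmap, Polynomial.map_add, Polynomial.map_mul, Polynomial.map_mul]
    ring

lemma eventually_eval₂_ne_zero {c : MvPolynomial (Fin 1) ℤ} (hc : c ≠ 0) :
    ∀ᶠ y in cobounded ℂ, c.eval₂ (Int.castRingHom ℂ) (fun _ ↦ y) ≠ 0 := by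
  have hg : (MvPolynomial.uniqueAlgEquiv ℤ (Fin 1) c).map (Int.castRingHom ℂ) ≠ 0 := by
    rw [Polynomial.map_ne_zero_iff (RingHom.injective_int _)]
    exact EmbeddingLike.map_ne_zero_iff.2 hc
  filter_upwards [le_cofinite ℂ (finite_setOfPred_isRoot hg).compl_mem_cofinite] with y hy hc0
  rw [← MvPolynomial.eval₂_uniqueAlgEquiv, ← eval_map] at hc0
  exact hy hc0

lemma eventually_separable_specialize {P : MvPolynomial (Fin 2) ℤ} (hirr : Irreducible P)
    (hP : (MvPolynomial.finSuccEquiv ℤ 1 P).Monic) :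
    ∀ᶠ y in cobounded ℂ, (specialize P y).Separable := by
  obtain ⟨c, hc, hsep⟩ := exists_ne_zero_forall_separable_map hP
    ((MulEquiv.irreducible_iff (MvPolynomial.finSuccEquiv ℤ 1)).2 hirr)
  filter_upwards [eventually_eval₂_ne_zero hc] with y hy
  exact hsep _ hy

lemma eq_prod_X_sub_C_of_separable {ι K : Type*} [Fintype ι] [Field K] [IsAlgClosed K] {f : K[X]}
    (hf : f.Monic) (hsep : f.Separable) {r : ι → K} (hr : Function.Injective r)
    (hroot : ∀ x, f.IsRoot x ↔ ∃ i, x = r i) : f = ∏ i, (X - C (r i)) := by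
  have hroots : f.roots = (Finset.univ.map ⟨r, hr⟩).val :=
    (nodup_roots hsep).ext (Finset.nodup _) |>.2 fun x ↦ by
      rw [mem_roots hf.ne_zero, hroot]
      simp [eq_comm]
  rw [(IsAlgClosed.splits f).eq_prod_roots_of_monic hf, hroots]
  simp

/-! ### Factorization of the modular polynomial -/

lemma tendsto_heckePoint_atImInfty (p : ℕ) [NeZero p] (i : Option (Fin p)) :
    Tendsto (heckePoint p · i) atImInfty atImInfty := by
  have hp : (0 : ℝ) < p := Nat.cast_pos.2 (NeZero.pos p)
  have him : Tendsto im atImInfty atTop := tendsto_comap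
  refine tendsto_comap_iff.2 ?_
  rcases i with _ | b
  · exact (him.const_mul_atTop hp).congr fun z ↦ (im_heckePoint_none p z).symm
  · exact (him.atTop_div_const hp).congr fun z ↦ (im_heckePoint_some p z b).symm

lemma injective_qParam_heckePoint {p : ℕ} [NeZero p] (hp : 1 < p) (z : ℍ) :
    Function.Injective fun i ↦ 𝕢 (heckePoint p z i) := by
  have hp' : (1 : ℝ) < p := Nat.one_lt_cast.2 hp
  have him_ne : z.im / p ≠ p * z.im :=
    ((div_lt_self z.im_pos hp').trans (lt_mul_of_one_lt_left z.im_pos hp')).ne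
  intro i i' h
  obtain ⟨n, hn⟩ := exists_eq_add_intCast_of_qParam_eq h
  have him : (heckePoint p z i').im = (heckePoint p z i).im := by
    simpa using congrArg Complex.im hn
  rcases i with _ | b <;> rcases i' with _ | b'
  · rfl
  · rw [im_heckePoint_none, im_heckePoint_some] at him
    exact (him_ne him).elim
  · rw [im_heckePoint_none, im_heckePoint_some] at him
    exact (him_ne him.symm).elim
  · rw [coe_heckePoint_some, coe_heckePoint_some] at hn
    have hpC : (p : ℂ) ≠ 0 := NeZero.ne _
    field_simp at hn
    have hbC : ((b'.val : ℤ) : ℂ) = (b.val + p * n : ℤ) := by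
      push_cast
      linear_combination hn
    have hb := congrArg (· % (p : ℤ)) (Int.cast_injective hbC)
    rw [Int.add_mul_emod_self_left, Int.emod_eq_of_lt (by omega) (by omega),
      Int.emod_eq_of_lt (by omega) (by omega), Nat.cast_inj] at hb
    rw [Fin.ext hb]

lemma eventually_injective_jInv_heckePoint {p : ℕ} [NeZero p] (hp : 1 < p) :
    ∀ᶠ z : ℍ in atImInfty, Function.Injective fun i ↦ jInv (heckePoint p z i) := by
  obtain ⟨s, hs, hJ⟩ := exists_injOn_J
  have hq : ∀ᶠ z : ℍ in atImInfty, ∀ i, 𝕢 (heckePoint p z i) ∈ s :=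
    eventually_all.2 fun i ↦ ((qParam_tendsto_atImInfty one_pos).comp
      (tendsto_heckePoint_atImInfty p i)).eventually hs
  filter_upwards [hq] with z hz i i' h
  simp only [jInv_eq_J_qParam] at h
  exact injective_qParam_heckePoint hp z (hJ (hz i) (hz i') h)

lemma differentiableOn_jInv : DifferentiableOn ℂ jInv upperHalfPlaneSet := by
  have hE := UpperHalfPlane.mdifferentiable_iff.1 (ModularFormClass.holo ModularForm.E₄)
  have hΔ := UpperHalfPlane.mdifferentiable_iff.1 (CuspFormClass.holo CuspForm.discriminant)
  refine ((hE.pow 3).div hΔ fun z _ ↦ ModularForm.discriminant_ne_zero _).congr fun z hz ↦ ?_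
  lift z to ℍ using hz
  simp [jInv_eq_div]

lemma differentiableOn_jInv_heckePoint (p : ℕ) [NeZero p] (i : Option (Fin p)) :
    DifferentiableOn ℂ (fun z ↦ jInv (heckePoint p (ofComplex z) i)) upperHalfPlaneSet := by
  rcases i with _ | b
  · refine (differentiableOn_jInv.comp (f := fun z : ℂ ↦ p * z) (by fun_prop) fun z hz ↦
      (heckePoint p ⟨z, hz⟩ none).im_pos).congr fun z hz ↦ ?_
    lift z to ℍ using hz
    simp [coe_heckePoint_none]
  · refine (differentiableOn_jInv.comp (f := fun z : ℂ ↦ (z + b.val) / p) (by fun_prop) fun z hz ↦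
      (heckePoint p ⟨z, hz⟩ (some b)).im_pos).congr fun z hz ↦ ?_
    lift z to ℍ using hz
    simp [coe_heckePoint_some]

lemma eq_of_eventuallyEq_atImInfty {f g : ℂ → ℂ} (hf : DifferentiableOn ℂ f upperHalfPlaneSet)
    (hg : DifferentiableOn ℂ g upperHalfPlaneSet) (h : ∀ᶠ z : ℍ in atImInfty, f z = g z) (z : ℍ) :
    f z = g z := by
  obtain ⟨A, hA⟩ := (atImInfty_mem _).1 h
  let z₀ : ℍ := ⟨⟨0, |A| + 1⟩, by positivity⟩
  have hopen : IsOpen {w : ℂ | |A| < w.im} := isOpen_lt continuous_const Complex.continuous_im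
  have heq : f =ᶠ[𝓝 (z₀ : ℂ)] g := by
    filter_upwards [hopen.mem_nhds (show |A| < (z₀ : ℂ).im by simp [z₀])] with w hw
    exact hA ⟨w, (abs_nonneg A).trans_lt hw⟩ ((le_abs_self A).trans hw.le)
  exact (hf.analyticOnNhd isOpen_upperHalfPlaneSet).eqOn_of_preconnected_of_eventuallyEq
    (hg.analyticOnNhd isOpen_upperHalfPlaneSet) (convex_halfSpace_im_gt 0).isPreconnected
    z₀.im_pos heq z.im_pos

end ModularPolynomial

namespace IsModularPolynomial

open ModularPolynomial Filter Polynomial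
open UpperHalfPlane hiding J

variable {p : ℕ} {P : MvPolynomial (Fin 2) ℤ}

lemma eventually_evalBiv_jInv_eq_zero_iff [NeZero p] (hp : p.Prime)
    (hP : IsModularPolynomial p P) :
    ∀ᶠ z : ℍ in atImInfty, ∀ x,
      evalBiv P x (jInv z) = 0 ↔ ∃ i, x = jInv (heckePoint p z i) := by
  filter_upwards [eventually_exists_smul_eq_of_jInv_eq] with z hz x
  rw [hP.evalBiv_eq_zero_iff hp.prime.squarefree]
  constructor
  · rintro ⟨w, v, hwv, rfl, hw⟩
    obtain ⟨g, rfl⟩ := hz w hw.symm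
    obtain ⟨i, γ, rfl⟩ := hwv.of_smul_left.exists_eq_smul_heckePoint hp
    exact ⟨i, jInv_smul γ _⟩
  · rintro ⟨i, rfl⟩
    exact ⟨z, _, isIsogeny_heckePoint p z i, rfl, rfl⟩

lemma eventually_specialize_eq_prod [NeZero p] (hp : p.Prime) (hP : IsModularPolynomial p P) :
    ∀ᶠ z : ℍ in atImInfty,
      specialize P (jInv z) = ∏ i, (X - C (jInv (heckePoint p z i))) := by
  filter_upwards [tendsto_jInv_atImInfty.eventually (eventually_separable_specialize hP.1 hP.2.1),
    eventually_injective_jInv_heckePoint hp.one_lt, hP.eventually_evalBiv_jInv_eq_zero_iff hp]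
    with z hsep hinj hroot
  refine eq_prod_X_sub_C_of_separable (monic_specialize hP.2.1 _) hsep hinj fun x ↦ ?_
  rw [IsRoot, eval_specialize, hroot]

lemma evalBiv_jInv [NeZero p] (hp : p.Prime) (hP : IsModularPolynomial p P) (x : ℂ) (z : ℍ) :
    evalBiv P x (jInv z) = ∏ i, (x - jInv (heckePoint p z i)) := by
  have hrhs : DifferentiableOn ℂ (fun z ↦ ∏ i, (x - jInv (heckePoint p (ofComplex z) i)))
      upperHalfPlaneSet :=
    .fun_finsetProd fun i _ ↦ (differentiableOn_const x).sub (differentiableOn_jInv_heckePoint p i)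
  have h := eq_of_eventuallyEq_atImInfty
    ((differentiable_evalBiv P x).comp_differentiableOn differentiableOn_jInv) hrhs ?_ z
  · simpa using h
  · filter_upwards [hP.eventually_specialize_eq_prod hp] with w hw
    simpa [eval_prod] using (eval_specialize P x (jInv w)).symm.trans (congrArg (eval x) hw)

lemma specialize_jInv [NeZero p] (hp : p.Prime) (hP : IsModularPolynomial p P) (z : ℍ) :
    specialize P (jInv z) = ∏ i, (X - C (jInv (heckePoint p z i))) :=
  Polynomial.funext fun x ↦ by simp [eval_specialize, hP.evalBiv_jInv hp, eval_prod]

lemma degreeOf_zero (hp : p.Prime) (hP : IsModularPolynomial p P) :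
    MvPolynomial.degreeOf 0 P = p + 1 := by
  have := NeZero.mk hp.ne_zero
  rw [← natDegree_specialize hP.2.1 (jInv I), hP.specialize_jInv hp,
    natDegree_finsetProd_X_sub_C_eq_card]
  simp

lemma degreeOf_one (hp : p.Prime) (hP : IsModularPolynomial p P) :
    MvPolynomial.degreeOf 1 P = p + 1 := by
  rw [← degreeOf_zero_swapVars]
  exact (hP.swapVars hp.prime.squarefree).degreeOf_zero hp

lemma exists_jInv_eq (hp : p.Prime) (hP : IsModularPolynomial p P) (y : ℂ) :
    ∃ z : ℍ, √3 / 2 ≤ z.im ∧ jInv z = y := by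
  have hdeg : (specialize P y).degree ≠ 0 := by
    refine (natDegree_pos_iff_degree_pos.1 ?_).ne'
    rw [natDegree_specialize hP.2.1, hP.degreeOf_zero hp]
    exact p.succ_pos
  obtain ⟨x, hx⟩ := IsAlgClosed.exists_root _ hdeg
  rw [IsRoot, eval_specialize, hP.evalBiv_eq_zero_iff hp.prime.squarefree] at hx
  obtain ⟨z, -, -, -, rfl⟩ := hx
  obtain ⟨g, hg⟩ := exists_smul_sqrt_three_div_two_le_im z
  exact ⟨g • z, hg, jInv_smul g z⟩

end IsModularPolynomial

namespace ModularPolynomial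

open Polynomial
open UpperHalfPlane hiding J
open scoped MatrixGroups

/-! ### Coefficients and values on the unit circle -/

lemma sqrt_sum_sq_norm_coeff_le {f : ℂ[X]} {B : ℝ} (h : ∀ x, ‖x‖ = 1 → ‖f.eval x‖ ≤ B) :
    √(∑ i ∈ f.support, ‖f.coeff i‖ ^ 2) ≤ B := by
  have hB : 0 ≤ B := (norm_nonneg _).trans (h 1 norm_one)
  rw [sum_sq_norm_coeff_eq_circleAverage, Real.sqrt_le_left hB]
  refine Real.circleAverage_mono_on_of_le_circle
    (by fun_prop : Continuous fun x ↦ ‖f.eval x‖ ^ 2).continuousOn.circleIntegrable' fun x hx ↦ ?_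
  gcongr
  exact h x (by simpa using hx)

lemma norm_coeff_le_of_forall_norm_eval_le {f : ℂ[X]} {B : ℝ}
    (h : ∀ x, ‖x‖ = 1 → ‖f.eval x‖ ≤ B) (n : ℕ) : ‖f.coeff n‖ ≤ B := by
  refine le_trans ?_ (sqrt_sum_sq_norm_coeff_le h)
  by_cases hn : n ∈ f.support
  · exact Real.le_sqrt_of_sq_le
      (Finset.single_le_sum (f := fun i ↦ ‖f.coeff i‖ ^ 2) (fun _ _ ↦ by positivity) hn)
  · rw [notMem_support_iff.1 hn, norm_zero]
    positivity

lemma mahlerMeasure_le_of_forall_norm_eval_le {f : ℂ[X]} {B : ℝ}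
    (h : ∀ x, ‖x‖ = 1 → ‖f.eval x‖ ≤ B) : f.mahlerMeasure ≤ B :=
  f.mahlerMeasure_le_sqrt_sum_sq_norm_coeff.trans (sqrt_sum_sq_norm_coeff_le h)

lemma coeff_specialize (P : MvPolynomial (Fin 2) ℤ) (y : ℂ) (i : ℕ) :
    (specialize P y).coeff i = ((MvPolynomial.uniqueAlgEquiv ℤ (Fin 1)
      ((MvPolynomial.finSuccEquiv ℤ 1 P).coeff i)).map (Int.castRingHom ℂ)).eval y := by
  rw [specialize, coeff_map, eval_map, MvPolynomial.coe_eval₂Hom,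
    ← MvPolynomial.eval₂_uniqueAlgEquiv]

lemma norm_coeff_le_of_forall_norm_evalBiv_le {P : MvPolynomial (Fin 2) ℤ} {B : ℝ}
    (h : ∀ x y, ‖x‖ = 1 → ‖y‖ = 1 → ‖evalBiv P x y‖ ≤ B) (m : Fin 2 →₀ ℕ) :
    ‖P.coeff m‖ ≤ B := by
  have hcoeff := norm_coeff_le_of_forall_norm_eval_le (fun y hy ↦ by
    rw [← coeff_specialize P y (m 0)]
    exact norm_coeff_le_of_forall_norm_eval_le
      (fun x hx ↦ by rw [eval_specialize]; exact h x y hx hy) (m 0)) (m 1)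
  have hm : Finsupp.cons (m 0) (Finsupp.single default (m 1)) = m := by
    ext i
    fin_cases i
    · simp
    · simpa using Finsupp.cons_succ (0 : Fin 1) (m 0) (Finsupp.single default (m 1))
  rwa [coeff_map, MvPolynomial.coeff_uniqueAlgEquiv, MvPolynomial.finSuccEquiv_coeff_coeff, hm,
    eq_intCast, Complex.norm_intCast, ← Int.norm_eq_abs] at hcoeff

/-! ### Heights -/

lemma norm_coeff_le_exp_polyHeight (P : MvPolynomial (Fin 2) ℤ) (m : Fin 2 →₀ ℕ) :
    ‖P.coeff m‖ ≤ Real.exp (polyHeight P) := by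
  by_cases hm : P.coeff m = 0
  · rw [hm, norm_zero]
    exact (Real.exp_pos _).le
  have hle := Finset.le_sup (f := fun m ↦ (P.coeff m).natAbs) (MvPolynomial.mem_support_iff.2 hm)
  rw [polyHeight, Real.exp_log (Nat.cast_pos.2 ((Int.natAbs_pos.2 hm).trans_le hle)),
    Int.norm_eq_abs, ← Int.cast_abs, ← Nat.cast_natAbs]
  exact Nat.cast_le.2 hle

lemma polyHeight_le {P : MvPolynomial (Fin 2) ℤ} (hP : P ≠ 0) {B : ℝ}
    (h : ∀ m, ‖P.coeff m‖ ≤ Real.exp B) : polyHeight P ≤ B := by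
  obtain ⟨m, hm, hsup⟩ := P.support.exists_mem_eq_sup (MvPolynomial.support_nonempty.2 hP)
    fun m ↦ (P.coeff m).natAbs
  have hpos : 0 < |((P.coeff m : ℤ) : ℝ)| := by simpa using hm
  rw [polyHeight, hsup, Nat.cast_natAbs, Int.cast_abs, Real.log_le_iff_le_exp hpos,
    ← Int.norm_eq_abs]
  exact h m

lemma card_support_le_prod {σ R : Type*} [Fintype σ] [CommSemiring R] (P : MvPolynomial σ R) :
    P.support.card ≤ ∏ i, (P.degreeOf i + 1) := by
  classical
  calc P.support.card ≤ (Fintype.piFinset fun i ↦ Finset.range (P.degreeOf i + 1)).card := by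
        refine Finset.card_le_card_of_injOn (⇑) (fun m hm ↦ ?_) DFunLike.coe_injective.injOn
        simpa [Nat.lt_succ_iff] using fun i ↦ MvPolynomial.monomial_le_degreeOf i hm
    _ = ∏ i, (P.degreeOf i + 1) := by simp

lemma norm_evalBiv_le (P : MvPolynomial (Fin 2) ℤ) (x y : ℂ) :
    ‖evalBiv P x y‖ ≤ (P.degreeOf 0 + 1) * (P.degreeOf 1 + 1) * (Real.exp (polyHeight P) *
      (max 1 ‖x‖ ^ P.degreeOf 0 * max 1 ‖y‖ ^ P.degreeOf 1)) := by
  have hpow {t : ℝ} {i : Fin 2} {m : Fin 2 →₀ ℕ} (ht : 0 ≤ t) (hm : m ∈ P.support) :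
      t ^ m i ≤ max 1 t ^ P.degreeOf i :=
    (pow_le_pow_left₀ ht (le_max_right 1 t) _).trans
      (pow_le_pow_right₀ (le_max_left 1 t) (MvPolynomial.monomial_le_degreeOf i hm))
  have hterm : ∀ m ∈ P.support, ‖((P.coeff m : ℤ) : ℂ) * ∏ i, ![x, y] i ^ m i‖ ≤
      Real.exp (polyHeight P) * (max 1 ‖x‖ ^ P.degreeOf 0 * max 1 ‖y‖ ^ P.degreeOf 1) := by
    intro m hm
    rw [norm_mul, Fin.prod_univ_two, norm_mul, norm_pow, norm_pow, Complex.norm_intCast,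
      ← Int.norm_eq_abs]
    gcongr
    · exact norm_coeff_le_exp_polyHeight P m
    · exact hpow (norm_nonneg x) hm
    · exact hpow (norm_nonneg y) hm
  rw [evalBiv, MvPolynomial.eval₂_eq']
  refine (norm_sum_le_of_le _ hterm).trans ?_
  rw [Finset.sum_const, nsmul_eq_mul]
  gcongr
  simpa [Fin.prod_univ_two] using (Nat.cast_le (α := ℝ)).2 (card_support_le_prod P)

/-! ### Height bounds -/

lemma max_one_norm_jInv_mul_discriminantNorm (z : ℍ) :
    max 1 ‖jInv z‖ * discriminantNorm z = max (eisensteinNorm z) (discriminantNorm z) := by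
  rw [norm_jInv, max_mul_of_nonneg _ _ (discriminantNorm_pos z).le, one_mul,
    div_mul_cancel₀ _ (discriminantNorm_pos z).ne', max_comm]

lemma le_max_one_norm_jInv_mul_discriminantNorm (z : ℍ) :
    0.001 ≤ max 1 ‖jInv z‖ * discriminantNorm z := by
  obtain ⟨g, hg⟩ := exists_smul_sqrt_three_div_two_le_im z
  rw [max_one_norm_jInv_mul_discriminantNorm, ← eisensteinNorm_smul g, ← discriminantNorm_smul g]
  exact le_max_eisensteinNorm_discriminantNorm hg

lemma prod_norm_sub_jInv_mul_discriminantNorm_heckePoint_le {p : ℕ} [NeZero p] (hp : p.Prime)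
    {x : ℂ} (hx : ‖x‖ ≤ 1) {z : ℍ} (hz : √3 / 2 ≤ z.im) (hz' : z.im ≤ 1) :
    ∏ i, ‖x - jInv (heckePoint p z i)‖ * discriminantNorm (heckePoint p z i) ≤
      Real.exp (9.366 * p - 3) := by
  choose g hg using fun i ↦ exists_smul_sqrt_three_div_two_le_im (heckePoint p z i)
  have hfactor (i) : ‖x - jInv (heckePoint p z i)‖ * discriminantNorm (heckePoint p z i) ≤
      Real.exp (6 * √(g i • heckePoint p z i).im - 3) := by
    refine (norm_sub_jInv_mul_discriminantNorm_le hx _).trans ?_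
    rw [← eisensteinNorm_smul (g i), ← discriminantNorm_smul (g i)]
    exact eisensteinNorm_add_discriminantNorm_le_exp (hg i)
  calc ∏ i, ‖x - jInv (heckePoint p z i)‖ * discriminantNorm (heckePoint p z i)
      ≤ ∏ i, Real.exp (6 * √(g i • heckePoint p z i).im - 3) :=
        Finset.prod_le_prod
          (fun i _ ↦ mul_nonneg (norm_nonneg _) (discriminantNorm_pos _).le) fun i _ ↦ hfactor i
    _ = Real.exp (6 * ∑ i, √(g i • heckePoint p z i).im - 3 * (p + 1)) := by
        rw [← Real.exp_sum, Finset.sum_sub_distrib, ← Finset.mul_sum]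
        simp [mul_comm]
    _ ≤ Real.exp (9.366 * p - 3) := by
        rw [Real.exp_le_exp]
        linarith [sum_sqrt_im_smul_heckePoint_le hp hz hz' g]

end ModularPolynomial

namespace IsModularPolynomial

open ModularPolynomial Polynomial
open UpperHalfPlane hiding J

variable {p : ℕ} {P : MvPolynomial (Fin 2) ℤ}

lemma norm_evalBiv_jInv_mul_discriminantNorm_pow_le [NeZero p] (hp : p.Prime)
    (hP : IsModularPolynomial p P) {x : ℂ} (hx : ‖x‖ ≤ 1) {z : ℍ} (hz : √3 / 2 ≤ z.im)
    (hz' : z.im ≤ 1) :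
    ‖evalBiv P x (jInv z)‖ * discriminantNorm z ^ (p + 1) ≤
      Real.exp (9.366 * p - 3) * (p : ℝ) ^ (6 * (p - 1)) := by
  rw [hP.evalBiv_jInv hp, norm_prod, ← prod_discriminantNorm_heckePoint hp, ← mul_assoc,
    ← Finset.prod_mul_distrib]
  gcongr
  exact prod_norm_sub_jInv_mul_discriminantNorm_heckePoint_le hp hx hz hz'

lemma norm_evalBiv_le_exp (hp : p.Prime) (hP : IsModularPolynomial p P) {x y : ℂ}
    (hx : ‖x‖ ≤ 1) (hy : ‖y‖ ≤ 1) :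
    ‖evalBiv P x y‖ ≤ Real.exp (6 * p * Real.log p + 16 * p) := by
  have := NeZero.mk hp.ne_zero
  have hp₀ : (0 : ℝ) < p := Nat.cast_pos.2 hp.pos
  obtain ⟨z, hz, rfl⟩ := hP.exists_jInv_eq hp y
  have hz' : z.im ≤ 1 := (im_lt_one_of_norm_jInv_le_one hy).le
  have hpow : (p : ℝ) ^ (6 * (p - 1)) = Real.exp (6 * (p - 1) * Real.log p) := by
    rw [← Real.exp_log (pow_pos hp₀ _), Real.log_pow]
    push_cast [hp.one_le]
    rfl
  have hlog : 0.69 ≤ Real.log p :=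
    (by linarith [Real.log_two_gt_d9] : 0.69 ≤ Real.log 2).trans
      (Real.log_le_log two_pos (Nat.ofNat_le_cast.2 hp.two_le))
  refine le_of_mul_le_mul_right ?_ (Real.exp_pos ((p + 1 : ℕ) * -6.6))
  calc ‖evalBiv P x (jInv z)‖ * Real.exp ((p + 1 : ℕ) * -6.6)
      ≤ ‖evalBiv P x (jInv z)‖ * discriminantNorm z ^ (p + 1) := by
        rw [Real.exp_nat_mul]
        gcongr
        exact exp_le_discriminantNorm hz hz'
    _ ≤ Real.exp (9.366 * p - 3) * (p : ℝ) ^ (6 * (p - 1)) :=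
        hP.norm_evalBiv_jInv_mul_discriminantNorm_pow_le hp hx hz hz'
    _ = Real.exp (9.366 * p - 3 + 6 * (p - 1) * Real.log p) := by rw [hpow, ← Real.exp_add]
    _ ≤ Real.exp (6 * p * Real.log p + 16 * p) * Real.exp ((p + 1 : ℕ) * -6.6) := by
        rw [← Real.exp_add, Real.exp_le_exp]
        push_cast
        linarith

lemma polyHeight_le (hp : p.Prime) (hP : IsModularPolynomial p P) :
    polyHeight P ≤ 6 * p * Real.log p + 16 * p :=
  ModularPolynomial.polyHeight_le hP.1.ne_zero <|
    norm_coeff_le_of_forall_norm_evalBiv_le fun _ _ hx hy ↦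
      hP.norm_evalBiv_le_exp hp hx.le hy.le

lemma mahlerMeasure_specialize_jInv [NeZero p] (hp : p.Prime) (hP : IsModularPolynomial p P)
    (z : ℍ) :
    (specialize P (jInv z)).mahlerMeasure = ∏ i, max 1 ‖jInv (heckePoint p z i)‖ := by
  rw [hP.specialize_jInv hp, Finset.prod_eq_multiset_prod, prod_mahlerMeasure_eq_mahlerMeasure_prod,
    Multiset.map_map]
  simp [mahlerMeasure_X_sub_C]

lemma pow_le_mahlerMeasure_specialize_jInv_mul [NeZero p] (hp : p.Prime)
    (hP : IsModularPolynomial p P) (z : ℍ) :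
    0.001 ^ (p + 1) * (p : ℝ) ^ (6 * (p - 1)) ≤
      (specialize P (jInv z)).mahlerMeasure * discriminantNorm z ^ (p + 1) := by
  rw [hP.mahlerMeasure_specialize_jInv hp, ← prod_discriminantNorm_heckePoint hp, ← mul_assoc,
    ← Finset.prod_mul_distrib]
  gcongr
  calc (0.001 : ℝ) ^ (p + 1) = ∏ _i : Option (Fin p), 0.001 := by simp
    _ ≤ ∏ i, max 1 ‖jInv (heckePoint p z i)‖ * discriminantNorm (heckePoint p z i) :=
      Finset.prod_le_prod (fun _ _ ↦ by norm_num)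
        fun _ _ ↦ le_max_one_norm_jInv_mul_discriminantNorm _

lemma mahlerMeasure_specialize_le (hp : p.Prime) (hP : IsModularPolynomial p P) (y : ℂ) :
    (specialize P y).mahlerMeasure ≤
      (p + 2) ^ 2 * (Real.exp (polyHeight P) * max 1 ‖y‖ ^ (p + 1)) := by
  refine mahlerMeasure_le_of_forall_norm_eval_le fun x hx ↦ ?_
  rw [eval_specialize]
  refine (norm_evalBiv_le P x y).trans_eq ?_
  rw [hP.degreeOf_zero hp, hP.degreeOf_one hp, hx, max_self, one_pow]
  push_cast
  ring

lemma pow_le_exp_polyHeight [NeZero p] (hp : p.Prime) (hP : IsModularPolynomial p P) (z : ℍ) :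
    (p : ℝ) ^ (6 * (p - 1)) ≤ (p + 2) ^ 2 * Real.exp (polyHeight P) *
      (1000 * (max 1 ‖jInv z‖ * discriminantNorm z)) ^ (p + 1) := by
  have h := (hP.pow_le_mahlerMeasure_specialize_jInv_mul hp z).trans
    (mul_le_mul_of_nonneg_right (hP.mahlerMeasure_specialize_le hp (jInv z))
      (pow_pos (discriminantNorm_pos z) _).le)
  calc (p : ℝ) ^ (6 * (p - 1))
      = 1000 ^ (p + 1) * (0.001 ^ (p + 1) * (p : ℝ) ^ (6 * (p - 1))) := by
        rw [← mul_assoc, ← mul_pow]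
        norm_num
    _ ≤ 1000 ^ (p + 1) * ((p + 2) ^ 2 * (Real.exp (polyHeight P) * max 1 ‖jInv z‖ ^ (p + 1)) *
          discriminantNorm z ^ (p + 1)) := by gcongr
    _ = _ := by ring

lemma exists_le_polyHeight : ∃ K : ℝ, ∀ {p : ℕ} {P : MvPolynomial (Fin 2) ℤ}, p.Prime →
    IsModularPolynomial p P → 6 * p * Real.log p - K * p ≤ polyHeight P := by
  let c := 1000 * (max 1 ‖jInv I‖ * discriminantNorm I)
  have hc : 1 ≤ c := by linarith [le_max_one_norm_jInv_mul_discriminantNorm I]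
  refine ⟨8 + 2 * Real.log c, fun {p P} hp hP ↦ ?_⟩
  have := NeZero.mk hp.ne_zero
  have hp₁ : (1 : ℝ) ≤ p := Nat.one_le_cast.2 hp.one_le
  have hpow : Real.log (p ^ (6 * (p - 1))) ≤
      Real.log ((p + 2) ^ 2 * Real.exp (polyHeight P) * c ^ (p + 1)) :=
    Real.log_le_log (by positivity) (hP.pow_le_exp_polyHeight hp I)
  rw [Real.log_mul (by positivity) (by positivity), Real.log_mul (by positivity) (by positivity),
    Real.log_exp, Real.log_pow, Real.log_pow, Real.log_pow] at hpow
  push_cast [hp.one_le] at hpow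
  have hlogp : Real.log p ≤ p - 1 := Real.log_le_sub_one_of_pos (by positivity)
  have hlogp' : Real.log (p + 2) ≤ p + 1 := by
    linarith [Real.log_le_sub_one_of_pos (by positivity : (0 : ℝ) < p + 2)]
  have hlogc : (p + 1) * Real.log c ≤ 2 * p * Real.log c := by
    gcongr
    · exact Real.log_nonneg hc
    · linarith
  linarith

end IsModularPolynomial

/-- For a family `Φ_p` of modular polynomials of prime level: the degrees in each
variable equal `p + 1`, the explicit height bound
`h(Φ_p) ≤ 6 p log p + 16 p + 14 √p log p` holds, and `h(Φ_p) = 6 p log p + O(p)`. -/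
theorem modularPolynomial_prime_degree_and_height
    (Φ : ℕ → MvPolynomial (Fin 2) ℤ)
    (hΦ : ∀ p : ℕ, p.Prime → IsModularPolynomial p (Φ p)) :
    (∀ p : ℕ, p.Prime →
      MvPolynomial.degreeOf 0 (Φ p) = p + 1 ∧
      MvPolynomial.degreeOf 1 (Φ p) = p + 1 ∧
      polyHeight (Φ p) ≤
        6 * (p : ℝ) * Real.log p + 16 * p + 14 * Real.sqrt p * Real.log p) ∧
    ∃ C : ℝ, ∀ p : ℕ, p.Prime →
      |polyHeight (Φ p) - 6 * (p : ℝ) * Real.log p| ≤ C * p := by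
  refine ⟨fun p hp ↦ ⟨(hΦ p hp).degreeOf_zero hp, (hΦ p hp).degreeOf_one hp, ?_⟩, ?_⟩
  · exact ((hΦ p hp).polyHeight_le hp).trans (le_add_of_nonneg_right (by positivity))
  · obtain ⟨K, hK⟩ := IsModularPolynomial.exists_le_polyHeight
    refine ⟨max 16 K, fun p hp ↦ abs_le.2 ⟨?_, ?_⟩⟩
    · have hmax : K * p ≤ max 16 K * p := by gcongr; exact le_max_right _ _
      linarith [hK hp (hΦ p hp)]
    · have hmax : 16 * (p : ℝ) ≤ max 16 K * p := by gcongr; exact le_max_left _ _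
      linarith [(hΦ p hp).polyHeight_le hp]
end

section
/- As x → ∞, the sum of the primes below x satisfies Σ_{p prime, p < x} p = x²/(2 log x) + x²/(4 (log x)²) + O( x²/(log x)³ ). -/
open Filter

/-- The sum of the primes strictly below the real number `x`. -/
noncomputable def primeSumBelow (x : ℝ) : ℝ :=
  ∑ p ∈ (Finset.range ⌈x⌉₊).filter Nat.Prime, (p : ℝ)

/-!
The Dirichlet series `-ζ'/ζ - ζ` of `Λ - 1` extends holomorphically across `Re s = 1`. Near that
line the inequality `3-4-1` and the bound `ζ, ζ' ≪ |t|^ε` give `|ζ| ≫ |t|^{-ε}` in discs of radius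
`|t|^{-ε}`, so by Cauchy's estimates every derivative of `-ζ'/ζ - ζ` grows more slowly than any
power of `|t|`. On the line `Re s = 1`, the Riesz mean of `Λ - 1` is `x` times a Fourier transform
in `log x`, and `m` integrations by parts bound it by `O(x / (log x)^m)`. As `Λ ≥ 0`, differencing
the Riesz means yields `ψ(x) = x + O(x / (log x)^k)` and the same for `θ`. Finally `∑_{p ≤ x} p`
follows from `θ(x) = x + O(x / (log x)²)` by Abel summation with the weight `t / log t`, and the
main term is integrated explicitly: `t²/(2 log t) - t²/(4 (log t)²)` is a primitive of `t/log t -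
t/(log t)² + t/(2 (log t)³)`.
-/

section ZetaFormula
open Complex Set MeasureTheory Topology Asymptotics

/-- The entire function `(s - 1) ζ(s)`, its value at `s = 1` being the residue of `ζ`. -/
noncomputable def zetaMulSubOne : ℂ → ℂ :=
  Function.update (fun s ↦ (s - 1) * riemannZeta s) 1 1

lemma zetaMulSubOne_of_ne_one {s : ℂ} (hs : s ≠ 1) :
    zetaMulSubOne s = (s - 1) * riemannZeta s :=
  Function.update_of_ne hs _ _

lemma zetaMulSubOne_one : zetaMulSubOne 1 = 1 :=
  Function.update_self _ _ _

lemma differentiable_zetaMulSubOne : Differentiable ℂ zetaMulSubOne := by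
  have h := DirichletCharacter.differentiable_LFunctionTrivChar₁ 1
  simp only [DirichletCharacter.LFunctionTrivChar₁, DirichletCharacter.LFunctionTrivChar,
    DirichletCharacter.LFunction_modOne_eq, Nat.primeFactors_one, Finset.prod_empty] at h
  exact h

lemma zetaMulSubOne_ne_zero {s : ℂ} (hs : 1 ≤ s.re) : zetaMulSubOne s ≠ 0 := by
  rcases eq_or_ne s 1 with rfl | h
  · simp [zetaMulSubOne_one]
  · rw [zetaMulSubOne_of_ne_one h]
    exact mul_ne_zero (sub_ne_zero.2 h) (riemannZeta_ne_zero_of_one_le_re hs)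

/-- The remainder integral `∫_a^∞ {u} u^{-s-1} du` of Euler–Maclaurin summation for `ζ`. -/
noncomputable def fractIntegral (a : ℝ) (s : ℂ) : ℂ :=
  ∫ u in Ioi a, ((Int.fract u : ℝ) : ℂ) * (u : ℂ) ^ (-(s + 1))

lemma norm_fract_mul_cpow_le {u : ℝ} (hu : 0 < u) (s : ℂ) :
    ‖((Int.fract u : ℝ) : ℂ) * (u : ℂ) ^ (-(s + 1))‖ ≤ u ^ (-s.re - 1) := by
  have hfract : ‖((Int.fract u : ℝ) : ℂ)‖ ≤ 1 := by
    rw [norm_real, Real.norm_of_nonneg (Int.fract_nonneg u)]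
    exact (Int.fract_lt_one u).le
  have hpow : ‖(u : ℂ) ^ (-(s + 1))‖ = u ^ (-s.re - 1) := by
    rw [norm_cpow_eq_rpow_re_of_pos hu, neg_re, add_re, one_re, neg_add, sub_eq_add_neg]
  rw [norm_mul, hpow]
  exact mul_le_of_le_one_left (by positivity) hfract

lemma integrableOn_fract_mul_cpow {a : ℝ} (ha : 0 < a) {s : ℂ} (hs : 0 < s.re) :
    IntegrableOn (fun u : ℝ ↦ ((Int.fract u : ℝ) : ℂ) * (u : ℂ) ^ (-(s + 1))) (Ioi a) := by
  refine (integrableOn_Ioi_rpow_of_lt (a := -s.re - 1) (by linarith) ha).mono' ?_ ?_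
  · exact (measurable_fract.complex_ofReal.mul (by fun_prop)).aestronglyMeasurable
  · filter_upwards [ae_restrict_mem measurableSet_Ioi] with u hu
    exact norm_fract_mul_cpow_le (ha.trans hu) s

lemma norm_fractIntegral_le {a : ℝ} (ha : 0 < a) {s : ℂ} (hs : 0 < s.re) :
    ‖fractIntegral a s‖ ≤ a ^ (-s.re) / s.re := by
  calc ‖fractIntegral a s‖ ≤ ∫ u in Ioi a, u ^ (-s.re - 1) := by
        refine norm_integral_le_of_norm_le (integrableOn_Ioi_rpow_of_lt (by linarith) ha) ?_
        filter_upwards [ae_restrict_mem measurableSet_Ioi] with u hu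
        exact norm_fract_mul_cpow_le (ha.trans hu) s
    _ = a ^ (-s.re) / s.re := by
        rw [integral_Ioi_rpow_of_lt (by linarith) ha, sub_add_cancel, neg_div_neg_eq]

lemma fractIntegral_eq_mellin {a : ℝ} (ha : 0 ≤ a) :
    fractIntegral a = fun s ↦ mellin ((Ioi a).indicator fun u ↦ ((Int.fract u : ℝ) : ℂ)) (-s) := by
  ext s
  have hind : (fun u : ℝ ↦
        (u : ℂ) ^ (-s - 1) • (Ioi a).indicator (fun u ↦ ((Int.fract u : ℝ) : ℂ)) u) =
      (Ioi a).indicator fun u ↦ ((Int.fract u : ℝ) : ℂ) * (u : ℂ) ^ (-(s + 1)) := by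
    ext u
    rw [neg_add']
    by_cases hu : a < u <;> simp [hu, mul_comm]
  rw [mellin, hind, setIntegral_indicator measurableSet_Ioi, Ioi_inter_Ioi, sup_of_le_right ha,
    fractIntegral]

lemma differentiableAt_fractIntegral {a : ℝ} (ha : 0 < a) {s : ℂ} (hs : 0 < s.re) :
    DifferentiableAt ℂ (fractIntegral a) s := by
  rw [fractIntegral_eq_mellin ha.le]
  set f : ℝ → ℂ := (Ioi a).indicator fun u ↦ ((Int.fract u : ℝ) : ℂ)
  have hf_norm (u : ℝ) : ‖f u‖ ≤ 1 := by
    refine norm_indicator_le_norm_self _ _ |>.trans ?_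
    rw [norm_real, Real.norm_of_nonneg (Int.fract_nonneg u)]
    exact (Int.fract_lt_one u).le
  have hf_meas : Measurable f := measurable_fract.complex_ofReal.indicator measurableSet_Ioi
  have hf_zero : f =ᶠ[𝓝[>] 0] 0 := by
    filter_upwards [mem_nhdsWithin_of_mem_nhds (Iio_mem_nhds ha)] with u hu
    exact indicator_of_notMem (notMem_Ioi.2 (mem_Iio.1 hu).le) _
  refine (mellin_differentiableAt_of_isBigO_rpow (a := 0) (b := -s.re - 1) ?_ ?_ ?_ ?_ ?_).comp s
    differentiableAt_id.neg
  · refine ((locallyIntegrable_const (1 : ℝ)).mono hf_meas.aestronglyMeasurable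
      (.of_forall fun u ↦ ?_)).locallyIntegrableOn _
    exact (hf_norm u).trans (le_abs_self 1)
  · exact .of_bound 1 (.of_forall fun u ↦ by simpa using hf_norm u)
  · simpa using hs
  · exact hf_zero.trans_isBigO (isBigO_zero _ _)
  · simp

lemma cast_floor_eq_sub_fract {u : ℝ} (hu : 0 ≤ u) : (⌊u⌋₊ : ℂ) = u - ((Int.fract u : ℝ) : ℂ) := by
  have h := (natCast_floor_eq_intCast_floor (R := ℝ) hu).trans (Int.self_sub_fract u).symm
  exact_mod_cast congrArg ((↑) : ℝ → ℂ) h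

lemma cast_floor_mul_cpow {u : ℝ} (hu : 0 < u) (s : ℂ) :
    (⌊u⌋₊ : ℂ) * (u : ℂ) ^ (-(s + 1)) =
      (u : ℂ) ^ (-s) - ((Int.fract u : ℝ) : ℂ) * (u : ℂ) ^ (-(s + 1)) := by
  have hpow : (u : ℂ) ^ (-s) = u * (u : ℂ) ^ (-(s + 1)) := by
    rw [show -s = 1 + -(s + 1) by ring, cpow_add _ _ (ofReal_ne_zero.2 hu.ne'), cpow_one]
  rw [cast_floor_eq_sub_fract hu.le, hpow, sub_mul]

lemma riemannZeta_eq_sub_fractIntegral_of_one_lt_re {s : ℂ} (hs : 1 < s.re) :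
    riemannZeta s = s / (s - 1) - s * fractIntegral 1 s := by
  have : s - 1 ≠ 0 := sub_ne_zero.2 fun h ↦ by simp [h] at hs
  have habel := LSeries_eq_mul_integral_of_nonneg (fun _ ↦ (1 : ℝ)) zero_le_one hs
    (by simpa using isBigO_refl _ _) (fun _ ↦ zero_le_one)
  have hfloor :
      ∫ u in Ioi (1 : ℝ), (∑ _ ∈ Finset.Icc 1 ⌊u⌋₊, ((1 : ℝ) : ℂ)) * (u : ℂ) ^ (-(s + 1)) =
      (∫ u in Ioi (1 : ℝ), (u : ℂ) ^ (-s)) - fractIntegral 1 s := by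
    rw [fractIntegral, ← integral_sub (integrableOn_Ioi_cpow_of_lt (by simpa using hs) zero_lt_one)
      (integrableOn_fract_mul_cpow zero_lt_one (by linarith))]
    refine setIntegral_congr_fun measurableSet_Ioi fun u hu ↦ ?_
    simpa using cast_floor_mul_cpow (zero_lt_one.trans (mem_Ioi.1 hu)) s
  have hpow : ∫ u in Ioi (1 : ℝ), (u : ℂ) ^ (-s) = 1 / (s - 1) := by
    rw [integral_Ioi_cpow_of_lt (by simpa using hs) zero_lt_one, ofReal_one, one_cpow,
      show -s + 1 = -(s - 1) by ring, neg_div_neg_eq]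
  rw [← LSeries_one_eq_riemannZeta hs]
  simp only [ofReal_one] at habel hfloor
  rw [Pi.one_def, habel, hfloor, hpow]
  ring

lemma zetaMulSubOne_eq_sub_fractIntegral {s : ℂ} (hs : 0 < s.re) :
    zetaMulSubOne s = s - s * (s - 1) * fractIntegral 1 s := by
  have hopen (a : ℝ) : IsOpen {s : ℂ | a < s.re} := isOpen_lt continuous_const continuous_re
  have hleft : AnalyticOnNhd ℂ zetaMulSubOne {s | 0 < s.re} :=
    differentiable_zetaMulSubOne.differentiableOn.analyticOnNhd (hopen 0)
  have hright : AnalyticOnNhd ℂ (fun s ↦ s - s * (s - 1) * fractIntegral 1 s) {s | 0 < s.re} := by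
    refine DifferentiableOn.analyticOnNhd (fun z hz ↦ ?_) (hopen 0)
    have := differentiableAt_fractIntegral zero_lt_one hz
    exact DifferentiableAt.differentiableWithinAt (by fun_prop)
  refine hleft.eqOn_of_preconnected_of_eventuallyEq hright
    (convex_halfSpace_re_gt 0).isPreconnected (z₀ := 2) (by simp) ?_ hs
  filter_upwards [(hopen 1).mem_nhds (show (2 : ℂ) ∈ {s : ℂ | 1 < s.re} by simp)] with z hz
  have hz1 : z ≠ 1 := by rintro rfl; simp at hz
  have := sub_ne_zero.2 hz1
  rw [zetaMulSubOne_of_ne_one hz1, riemannZeta_eq_sub_fractIntegral_of_one_lt_re hz]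
  field_simp

lemma riemannZeta_eq_sub_fractIntegral {s : ℂ} (hs : 0 < s.re) (hs1 : s ≠ 1) :
    riemannZeta s = s / (s - 1) - s * fractIntegral 1 s := by
  have h := zetaMulSubOne_eq_sub_fractIntegral hs
  rw [zetaMulSubOne_of_ne_one hs1] at h
  have := sub_ne_zero.2 hs1
  field_simp
  linear_combination h

lemma integral_cast_floor_mul_cpow {s : ℂ} (hs : 0 < s.re) (hs1 : s ≠ 1) {b : ℝ} (hb : 1 ≤ b) :
    ∫ u in Ioc 1 b, (⌊u⌋₊ : ℂ) * (u : ℂ) ^ (-(s + 1)) =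
      ((b : ℂ) ^ (1 - s) - 1) / (1 - s) -
        ∫ u in Ioc 1 b, ((Int.fract u : ℝ) : ℂ) * (u : ℂ) ^ (-(s + 1)) := by
  have hzero : (0 : ℝ) ∉ uIcc 1 b := notMem_uIcc_of_lt zero_lt_one (by linarith)
  have hpow : ∫ u in Ioc 1 b, (u : ℂ) ^ (-s) = ((b : ℂ) ^ (1 - s) - 1) / (1 - s) := by
    rw [← intervalIntegral.integral_of_le hb,
      integral_cpow (.inr ⟨fun h ↦ hs1 (neg_injective h), hzero⟩), neg_add_eq_sub, ofReal_one,
      one_cpow]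
  have hint : IntegrableOn (fun u : ℝ ↦ (u : ℂ) ^ (-s)) (Ioc 1 b) :=
    (intervalIntegrable_iff_integrableOn_Ioc_of_le hb).1
      (intervalIntegral.intervalIntegrable_cpow (.inr hzero))
  rw [← hpow, ← integral_sub hint
    ((integrableOn_fract_mul_cpow zero_lt_one hs).mono_set Ioc_subset_Ioi_self)]
  exact setIntegral_congr_fun measurableSet_Ioc fun u hu ↦
    cast_floor_mul_cpow (zero_lt_one.trans hu.1) s

lemma sum_Icc_one_eq_sum_Icc_zero_mul_ite {R : Type*} [NonAssocSemiring R] (f : ℕ → R) (N : ℕ) :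
    ∑ n ∈ Finset.Icc 1 N, f n = ∑ n ∈ Finset.Icc 0 N, f n * (if n = 0 then 0 else 1) := by
  rw [Finset.Icc_eq_cons_Ioc N.zero_le, Finset.sum_cons, ← Finset.Icc_add_one_left_eq_Ioc,
    if_pos rfl, mul_zero, zero_add, zero_add]
  refine Finset.sum_congr rfl fun n hn ↦ ?_
  rw [if_neg (by have := Finset.mem_Icc.1 hn; lia), mul_one]

lemma sum_Icc_one_eq_mul_sub_integral_deriv {f : ℝ → ℂ} {N : ℕ}
    (hf : ∀ u ∈ Icc (1 : ℝ) N, DifferentiableAt ℝ f u)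
    (hf' : IntegrableOn (deriv f) (Icc 1 N)) :
    ∑ n ∈ Finset.Icc 1 N, f n = f N * N - ∫ u in Ioc (1 : ℝ) N, deriv f u * ⌊u⌋₊ := by
  have hcount (n : ℕ) : ∑ k ∈ Finset.Icc 0 n, (if k = 0 then 0 else 1 : ℂ) = n := by
    simp [Finset.sum_ite, Finset.filter_ne']
  have habel := sum_mul_eq_sub_integral_mul₀' (fun k ↦ if k = 0 then 0 else (1 : ℂ)) rfl N hf hf'
  simp only [hcount] at habel
  rw [← habel]
  exact sum_Icc_one_eq_sum_Icc_zero_mul_ite (fun n ↦ f n) N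

lemma sum_Icc_cpow_neg_eq {s : ℂ} (hs : 0 < s.re) (hs1 : s ≠ 1) {N : ℕ} (hN : 1 ≤ N) :
    ∑ n ∈ Finset.Icc 1 N, (n : ℂ) ^ (-s) =
      (s - (N : ℂ) ^ (1 - s)) / (s - 1) -
        s * ∫ u in Ioc (1 : ℝ) N, ((Int.fract u : ℝ) : ℂ) * (u : ℂ) ^ (-(s + 1)) := by
  have hs0 : s ≠ 0 := by rintro rfl; simp at hs
  have hN1 : (1 : ℝ) ≤ N := by exact_mod_cast hN
  have hne : ∀ u ∈ Icc (1 : ℝ) N, u ≠ 0 := fun u hu ↦ (zero_lt_one.trans_le hu.1).ne'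
  have hderiv : ∀ u ∈ Icc (1 : ℝ) N,
      HasDerivAt (fun u : ℝ ↦ (u : ℂ) ^ (-s)) (-s * (u : ℂ) ^ (-(s + 1))) u := fun u hu ↦ by
    simpa only [neg_add'] using hasDerivAt_ofReal_cpow_const (hne u hu) (neg_ne_zero.2 hs0)
  have hcont : ContinuousOn (fun u : ℝ ↦ (u : ℂ) ^ (-(s + 1))) (Icc 1 N) := fun u hu ↦
    (continuousAt_ofReal_cpow_const _ _ (.inr (hne u hu))).continuousWithinAt
  have habel := sum_Icc_one_eq_mul_sub_integral_deriv
    (fun u hu ↦ (hderiv u hu).differentiableAt)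
    ((hcont.const_smul (-s)).integrableOn_Icc.congr_fun
      (fun u hu ↦ (hderiv u hu).deriv.symm) measurableSet_Icc)
  have hintegral : ∫ u in Ioc (1 : ℝ) N, deriv (fun u : ℝ ↦ (u : ℂ) ^ (-s)) u * ⌊u⌋₊ =
      -s * ∫ u in Ioc (1 : ℝ) N, (⌊u⌋₊ : ℂ) * (u : ℂ) ^ (-(s + 1)) := by
    rw [← integral_const_mul]
    refine setIntegral_congr_fun measurableSet_Ioc fun u hu ↦ ?_
    rw [(hderiv u (Ioc_subset_Icc_self hu)).deriv]
    ring
  have hpow : (N : ℂ) ^ (1 - s) = N * (N : ℂ) ^ (-s) := by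
    rw [sub_eq_add_neg, cpow_add _ _ (by exact_mod_cast (by lia : N ≠ 0)), cpow_one]
  have := sub_ne_zero.2 hs1
  have : 1 - s ≠ 0 := sub_ne_zero.2 hs1.symm
  simp only [hintegral, integral_cast_floor_mul_cpow hs hs1 hN1] at habel
  push_cast at habel
  rw [habel, hpow, ← neg_sub s 1]
  field_simp
  ring

theorem riemannZeta_eq_sum_add_sub_fractIntegral {s : ℂ} (hs : 0 < s.re) (hs1 : s ≠ 1) {N : ℕ}
    (hN : 1 ≤ N) :
    riemannZeta s = ∑ n ∈ Finset.Icc 1 N, (n : ℂ) ^ (-s) + (N : ℂ) ^ (1 - s) / (s - 1) -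
      s * fractIntegral N s := by
  have hN1 : (1 : ℝ) ≤ N := by exact_mod_cast hN
  have hint := integrableOn_fract_mul_cpow zero_lt_one hs
  have hsplit : fractIntegral 1 s =
      (∫ u in Ioc (1 : ℝ) N, ((Int.fract u : ℝ) : ℂ) * (u : ℂ) ^ (-(s + 1))) +
        fractIntegral N s := by
    rw [fractIntegral, ← Ioc_union_Ioi_eq_Ioi hN1, setIntegral_union (Ioc_disjoint_Ioi le_rfl)
      measurableSet_Ioi (hint.mono_set Ioc_subset_Ioi_self)
      (hint.mono_set (Ioi_subset_Ioi hN1)), fractIntegral]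
  rw [riemannZeta_eq_sub_fractIntegral hs hs1, hsplit,
    sum_Icc_cpow_neg_eq hs hs1 hN]
  ring

end ZetaFormula

section ZetaGrowth
open Complex Set MeasureTheory Topology Metric

lemma norm_sum_Icc_cpow_neg_le {δ : ℝ} (hδ : 0 < δ) {s : ℂ} (hs : 1 - δ ≤ s.re) {N : ℕ} {t : ℝ}
    (hNt : N ≤ t) :
    ‖∑ n ∈ Finset.Icc 1 N, (n : ℂ) ^ (-s)‖ ≤ (∑' n : ℕ, (n : ℝ) ^ (-(1 + δ))) * t ^ (2 * δ) := by
  have hterm : ∀ n ∈ Finset.Icc 1 N, ‖(n : ℂ) ^ (-s)‖ ≤ (n : ℝ) ^ (-(1 + δ)) * t ^ (2 * δ) := by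
    intro n hn
    obtain ⟨hn1, hnN⟩ := Finset.mem_Icc.1 hn
    have hn1' : (1 : ℝ) ≤ n := by exact_mod_cast hn1
    have hnt : (n : ℝ) ≤ t := (Nat.cast_le.2 hnN).trans hNt
    calc ‖(n : ℂ) ^ (-s)‖ = (n : ℝ) ^ (-s.re) := by rw [norm_natCast_cpow_of_pos hn1, neg_re]
      _ ≤ (n : ℝ) ^ (-(1 + δ) + 2 * δ) := Real.rpow_le_rpow_of_exponent_le hn1' (by linarith)
      _ = (n : ℝ) ^ (-(1 + δ)) * (n : ℝ) ^ (2 * δ) := Real.rpow_add (by linarith) _ _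
      _ ≤ (n : ℝ) ^ (-(1 + δ)) * t ^ (2 * δ) := by gcongr
  have hsummable : Summable fun n : ℕ ↦ (n : ℝ) ^ (-(1 + δ)) :=
    Real.summable_nat_rpow.2 (by linarith)
  calc ‖∑ n ∈ Finset.Icc 1 N, (n : ℂ) ^ (-s)‖
      ≤ ∑ n ∈ Finset.Icc 1 N, (n : ℝ) ^ (-(1 + δ)) * t ^ (2 * δ) := norm_sum_le_of_le _ hterm
    _ ≤ (∑' n : ℕ, (n : ℝ) ^ (-(1 + δ))) * t ^ (2 * δ) := by
      rw [← Finset.sum_mul]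
      gcongr
      · exact Real.rpow_nonneg (N.cast_nonneg.trans hNt) _
      · exact hsummable.sum_le_tsum _ fun n _ ↦ by positivity

lemma norm_mul_fractIntegral_le {δ : ℝ} (hδ' : δ ≤ 1 / 2) {s : ℂ} (hs : 1 - δ ≤ s.re)
    {a : ℝ} (ha : 1 ≤ a) (hat : |s.im| ≤ 2 * a) : ‖s * fractIntegral a s‖ ≤ 5 * a ^ δ := by
  have hσ : 0 < s.re := by linarith
  have ha0 : 0 < a := by linarith
  calc ‖s * fractIntegral a s‖ ≤ (s.re + |s.im|) * (a ^ (-s.re) / s.re) := by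
        rw [norm_mul]
        gcongr
        · exact (norm_le_abs_re_add_abs_im s).trans_eq (by rw [abs_of_pos hσ])
        · exact norm_fractIntegral_le ha0 hσ
    _ = (1 + |s.im| / s.re) * a ^ (-s.re) := by field_simp
    _ ≤ (1 + 2 * a / (1 / 2)) * a ^ (δ - 1) := by
        gcongr <;> linarith
    _ ≤ 5 * a * a ^ (δ - 1) := by gcongr; linarith
    _ = 5 * a ^ δ := by rw [Real.rpow_sub_one ha0.ne']; field_simp

theorem exists_norm_riemannZeta_le {δ : ℝ} (hδ : 0 < δ) (hδ' : δ ≤ 1 / 2) :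
    ∃ C > 0, ∀ s : ℂ, 1 - δ ≤ s.re → 1 ≤ |s.im| → ‖riemannZeta s‖ ≤ C * |s.im| ^ (2 * δ) := by
  refine ⟨(∑' n : ℕ, (n : ℝ) ^ (-(1 + δ))) + 6, by positivity, fun s hs ht ↦ ?_⟩
  have hs1 : s ≠ 1 := by rintro rfl; simp at ht; linarith
  set N := ⌊|s.im|⌋₊
  have hN : 1 ≤ N := Nat.le_floor (by simpa using ht)
  have hN' : (1 : ℝ) ≤ N := by exact_mod_cast hN
  have hNt : N ≤ |s.im| := Nat.floor_le (abs_nonneg _)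
  have htN : |s.im| ≤ 2 * N := by linarith [Nat.lt_floor_add_one |s.im|]
  have hpow : (N : ℝ) ^ δ ≤ |s.im| ^ (2 * δ) :=
    (Real.rpow_le_rpow_of_exponent_le hN' (by linarith)).trans
      (Real.rpow_le_rpow (by positivity) hNt (by positivity))
  have hmid : ‖(N : ℂ) ^ (1 - s) / (s - 1)‖ ≤ (N : ℝ) ^ δ := by
    rw [norm_div, norm_natCast_cpow_of_pos hN, sub_re, one_re]
    have him : 1 ≤ ‖s - 1‖ := ht.trans (by simpa using abs_im_le_norm (s - 1))
    exact (div_le_self (by positivity) him).trans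
      (Real.rpow_le_rpow_of_exponent_le hN' (by linarith))
  have hsum := norm_sum_Icc_cpow_neg_le hδ hs hNt
  have htail := norm_mul_fractIntegral_le hδ' hs hN' htN
  rw [riemannZeta_eq_sum_add_sub_fractIntegral (by linarith) hs1 hN]
  calc _ ≤ _ := (norm_sub_le _ _).trans (add_le_add_left (norm_add_le _ _) _)
    _ ≤ _ := by linarith

lemma abs_im_of_mem_closedBall {s z : ℂ} {r : ℝ} (hr : r ≤ 1) (hs : 1 ≤ |s.im|)
    (hz : z ∈ closedBall s r) : |s.im| - 1 ≤ |z.im| ∧ |z.im| ≤ 2 * |s.im| := by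
  have him : |z.im - s.im| ≤ 1 :=
    (abs_im_le_norm (z - s)).trans ((mem_closedBall_iff_norm.1 hz).trans hr)
  constructor
  · linarith [abs_sub_abs_le_abs_sub s.im z.im, abs_sub_comm s.im z.im]
  · linarith [abs_sub_abs_le_abs_sub z.im s.im]

lemma sub_le_re_of_mem_closedBall {s z : ℂ} {r : ℝ} (hz : z ∈ closedBall s r) :
    s.re - r ≤ z.re := by
  have hre := (abs_re_le_norm (z - s)).trans (mem_closedBall_iff_norm.1 hz)
  linarith [neg_abs_le (z - s).re, sub_re z s]

lemma rpow_two_mul_le {x y η : ℝ} (hx : 0 ≤ x) (hxy : x ≤ 2 * y) (hη : 0 ≤ η) (hη' : η ≤ 1) :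
    x ^ η ≤ 2 * y ^ η := by
  have hy : 0 ≤ y := by linarith
  calc x ^ η ≤ (2 * y) ^ η := by gcongr
    _ = 2 ^ η * y ^ η := Real.mul_rpow zero_le_two hy
    _ ≤ 2 * y ^ η := by
      gcongr
      simpa using Real.rpow_le_rpow_of_exponent_le one_le_two hη'

theorem exists_norm_deriv_riemannZeta_le {δ : ℝ} (hδ : 0 < δ) (hδ' : δ ≤ 1 / 2) :
    ∃ C > 0, ∀ s : ℂ, 1 - δ / 2 ≤ s.re → 2 ≤ |s.im| →
      ‖deriv riemannZeta s‖ ≤ C * |s.im| ^ (2 * δ) := by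
  obtain ⟨C, hC, hbound⟩ := exists_norm_riemannZeta_le hδ hδ'
  refine ⟨4 * C / δ, by positivity, fun s hs ht ↦ ?_⟩
  have him : ∀ z ∈ closedBall s (δ / 2), 1 ≤ |z.im| ∧ |z.im| ≤ 2 * |s.im| := fun z hz ↦ by
    have := abs_im_of_mem_closedBall (by linarith) (by linarith) hz
    exact ⟨by linarith, this.2⟩
  have hdiff : DiffContOnCl ℂ riemannZeta (ball s (δ / 2)) := by
    refine DifferentiableOn.diffContOnCl_ball (U := closedBall s (δ / 2)) (fun z hz ↦ ?_) subset_rfl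
    refine (differentiableAt_riemannZeta ?_).differentiableWithinAt
    rintro rfl
    simpa using (him 1 hz).1.trans_lt' zero_lt_one
  have hsphere : ∀ z ∈ sphere s (δ / 2), ‖riemannZeta z‖ ≤ 2 * C * |s.im| ^ (2 * δ) := fun z hz ↦ by
    have hz' := sphere_subset_closedBall hz
    have hre := sub_le_re_of_mem_closedBall hz'
    calc ‖riemannZeta z‖ ≤ C * |z.im| ^ (2 * δ) := hbound z (by linarith) (him z hz').1
      _ ≤ C * (2 * |s.im| ^ (2 * δ)) := by
        gcongr
        exact rpow_two_mul_le (abs_nonneg _) (him z hz').2 (by linarith) (by linarith)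
      _ = 2 * C * |s.im| ^ (2 * δ) := by ring
  refine (norm_deriv_le_of_forall_mem_sphere_norm_le (half_pos hδ) hdiff hsphere).trans_eq ?_
  field_simp
  norm_num

theorem exists_norm_riemannZeta_le_of_mem_closedBall {δ : ℝ} (hδ : 0 < δ) (hδ' : δ ≤ 1 / 2) :
    ∃ C > 0, ∀ s : ℂ, 1 ≤ s.re → 3 ≤ |s.im| → ∀ z ∈ closedBall s (δ / 2),
      ‖riemannZeta z‖ ≤ C * |s.im| ^ (2 * δ) ∧ ‖deriv riemannZeta z‖ ≤ C * |s.im| ^ (2 * δ) := by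
  obtain ⟨C, hC, hzeta⟩ := exists_norm_riemannZeta_le hδ hδ'
  obtain ⟨K, -, hderiv⟩ := exists_norm_deriv_riemannZeta_le hδ hδ'
  refine ⟨2 * max C K, by positivity, fun s hs ht z hz ↦ ?_⟩
  obtain ⟨him, him'⟩ := abs_im_of_mem_closedBall (by linarith) (by linarith) hz
  have hre := sub_le_re_of_mem_closedBall hz
  have hpow : |z.im| ^ (2 * δ) ≤ 2 * |s.im| ^ (2 * δ) :=
    rpow_two_mul_le (abs_nonneg _) him' (by positivity) (by linarith)
  have hmono {B : ℝ} (hB : B ≤ max C K) :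
      B * |z.im| ^ (2 * δ) ≤ 2 * max C K * |s.im| ^ (2 * δ) := by
    calc B * |z.im| ^ (2 * δ) ≤ max C K * (2 * |s.im| ^ (2 * δ)) := by gcongr
      _ = 2 * max C K * |s.im| ^ (2 * δ) := by ring
  exact ⟨(hzeta z (by linarith) (by linarith)).trans (hmono (le_max_left _ _)),
    (hderiv z (by linarith) (by linarith)).trans (hmono (le_max_right _ _))⟩

lemma exists_norm_riemannZeta_one_add_le :
    ∃ C > 0, ∀ κ : ℝ, 0 < κ → κ ≤ 1 → ‖riemannZeta (1 + κ)‖ ≤ C / κ := by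
  obtain ⟨C, hC⟩ := (isCompact_Icc (a := (0 : ℝ)) (b := 1)).exists_bound_of_continuousOn
    (f := fun κ ↦ zetaMulSubOne (1 + κ)) (by
      have := differentiable_zetaMulSubOne.continuous
      fun_prop)
  refine ⟨max C 1, by positivity, fun κ hκ hκ1 ↦ ?_⟩
  have hbound := hC κ ⟨hκ.le, hκ1⟩
  have hne : (1 + κ : ℂ) ≠ 1 := by simpa using hκ.ne'
  rw [zetaMulSubOne_of_ne_one hne, add_sub_cancel_left, norm_mul, norm_real,
    Real.norm_of_nonneg hκ.le] at hbound
  rw [le_div_iff₀' hκ]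
  exact hbound.trans (le_max_left _ _)

lemma one_le_norm_riemannZeta_product {κ : ℝ} (hκ : 0 < κ) (t : ℝ) :
    1 ≤ ‖riemannZeta (1 + κ)‖ ^ 3 * ‖riemannZeta (1 + κ + I * t)‖ ^ 4 *
      ‖riemannZeta (1 + κ + 2 * I * t)‖ := by
  have h := DirichletCharacter.norm_LFunction_product_ge_one (1 : DirichletCharacter ℂ 1) hκ t
  simpa only [DirichletCharacter.LFunctionTrivChar, one_pow, DirichletCharacter.LFunction_modOne_eq,
    norm_mul, norm_pow] using h

/-- `3-4-1` together with `ζ(1 + κ) ≪ 1/κ` and `ζ(1 + κ + 2it) ≪ |t|^ε`. -/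
lemma exists_pow_le_norm_riemannZeta_pow {δ : ℝ} (hδ : 0 < δ) (hδ' : δ ≤ 1 / 2) :
    ∃ c > 0, ∀ s : ℂ, 1 < s.re → s.re ≤ 2 → 1 ≤ |s.im| →
      c * (s.re - 1) ^ 3 / |s.im| ^ (2 * δ) ≤ ‖riemannZeta s‖ ^ 4 := by
  obtain ⟨C₁, hC₁, hnear⟩ := exists_norm_riemannZeta_one_add_le
  obtain ⟨C₂, hC₂, hgrowth⟩ := exists_norm_riemannZeta_le hδ hδ'
  refine ⟨1 / (2 * C₁ ^ 3 * C₂), by positivity, fun s hs hs2 ht ↦ ?_⟩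
  set κ := s.re - 1
  have hκ : 0 < κ := sub_pos.2 hs
  have hs_eq : 1 + κ + I * s.im = s := by
    apply Complex.ext <;> simp [κ]
  have htwice : ‖riemannZeta (1 + κ + 2 * I * s.im)‖ ≤ C₂ * (2 * |s.im| ^ (2 * δ)) := by
    have him : |(1 + κ + 2 * I * s.im).im| = 2 * |s.im| := by simp [abs_mul]
    refine (hgrowth _ (by simp; linarith) (by rw [him]; linarith)).trans ?_
    rw [him]
    gcongr
    exact rpow_two_mul_le (by positivity) le_rfl (by positivity) (by linarith)
  have h341 := one_le_norm_riemannZeta_product hκ s.im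
  rw [hs_eq] at h341
  have : 0 < |s.im| ^ (2 * δ) := by positivity
  have hprod : 1 ≤ (C₁ / κ) ^ 3 * ‖riemannZeta s‖ ^ 4 * (C₂ * (2 * |s.im| ^ (2 * δ))) := by
    refine h341.trans ?_
    gcongr
    exact hnear κ hκ (by linarith)
  have hexpand : (C₁ / κ) ^ 3 * ‖riemannZeta s‖ ^ 4 * (C₂ * (2 * |s.im| ^ (2 * δ))) =
      ‖riemannZeta s‖ ^ 4 / (1 / (2 * C₁ ^ 3 * C₂) * κ ^ 3 / |s.im| ^ (2 * δ)) := by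
    field_simp
  rwa [hexpand, one_le_div (by positivity)] at hprod

lemma norm_sub_le_norm_of_norm_deriv_le {f : ℂ → ℂ} {s : ℂ} {r M : ℝ}
    (hf : ∀ v ∈ closedBall s r, DifferentiableAt ℂ f v) (hM : ∀ v ∈ closedBall s r, ‖deriv f v‖ ≤ M)
    {w z : ℂ} (hw : w ∈ closedBall s r) (hz : z ∈ closedBall s r) :
    ‖f w‖ - M * (2 * r) ≤ ‖f z‖ := by
  have hlip := (convex_closedBall s r).norm_image_sub_le_of_norm_deriv_le hf hM hz hw
  have hdist : ‖w - z‖ ≤ 2 * r := by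
    have := dist_triangle_right w z s
    rw [dist_eq_norm] at this
    linarith [mem_closedBall.1 hw, mem_closedBall.1 hz]
  have hM0 : 0 ≤ M := (norm_nonneg _).trans (hM w hw)
  linarith [norm_sub_norm_le (f w) (f z), mul_le_mul_of_nonneg_left hdist hM0]

lemma exists_mem_closedBall_one_add_le_re {s : ℂ} {κ : ℝ} (hκ : 0 ≤ κ) (hs : 1 ≤ s.re) :
    ∃ w ∈ closedBall s κ, 1 + κ ≤ w.re ∧ w.re ≤ max s.re (1 + κ) ∧ w.im = s.im := by
  refine ⟨⟨max s.re (1 + κ), s.im⟩, ?_, le_max_right _ _, le_rfl, rfl⟩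
  have hsub : (⟨max s.re (1 + κ), s.im⟩ : ℂ) - s = (max s.re (1 + κ) - s.re : ℝ) := by
    apply Complex.ext <;> simp
  rw [mem_closedBall_iff_norm, hsub, norm_real,
    Real.norm_of_nonneg (sub_nonneg.2 (le_max_left _ _)), sub_le_iff_le_add]
  exact max_le (by linarith) (by linarith)

/-- With `q = |t|^ε`, the bound `|ζ|⁴ ≫ κ³/q` on the line `Re s = 1 + κ` and `ζ' ≪ q` are compatible
with a zero within distance `O(κ)` of that line only if `κ ≫ q⁻⁵`. -/
theorem exists_le_norm_riemannZeta {δ : ℝ} (hδ : 0 < δ) (hδ' : δ ≤ 1 / 2) :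
    ∃ r > 0, r ≤ δ / 2 ∧ ∃ c > 0, ∀ s : ℂ, 1 ≤ s.re → s.re ≤ 2 → 3 ≤ |s.im| →
      ∀ z ∈ closedBall s (r / (|s.im| ^ (2 * δ)) ^ 5),
        c / (|s.im| ^ (2 * δ)) ^ 4 ≤ ‖riemannZeta z‖ := by
  obtain ⟨c, hc, hlower⟩ := exists_pow_le_norm_riemannZeta_pow hδ hδ'
  obtain ⟨K, hK, hbound⟩ := exists_norm_riemannZeta_le_of_mem_closedBall hδ hδ'
  set r := min (δ / 2) (c / (4 * K) ^ 4)
  have hr : 0 < r := by positivity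
  refine ⟨r, hr, min_le_left _ _, 2 * K * r, by positivity, fun s hs hs2 ht z hz ↦ ?_⟩
  set q := |s.im| ^ (2 * δ)
  have hq : 1 ≤ q := Real.one_le_rpow (by linarith) (by positivity)
  set κ := r / q ^ 5
  have hκ : 0 < κ := by positivity
  have hκδ : κ ≤ δ / 2 := (div_le_self hr.le (one_le_pow₀ hq)).trans (min_le_left _ _)
  have hκq : κ * q ^ 5 ≤ c / (4 * K) ^ 4 := by
    rw [div_mul_cancel₀ _ (by positivity)]; exact min_le_right _ _
  obtain ⟨w, hw, hκw, hw2, hwim⟩ := exists_mem_closedBall_one_add_le_re hκ.le hs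
  replace hw2 : w.re ≤ 2 := hw2.trans (max_le hs2 (by linarith))
  have hw_lower : 4 * K * q * κ ≤ ‖riemannZeta w‖ := by
    have h := hlower w (by linarith) hw2 (by rw [hwim]; linarith)
    rw [hwim] at h
    refine le_of_pow_le_pow_left₀ four_ne_zero (norm_nonneg _) (le_trans ?_ h)
    calc (4 * K * q * κ) ^ 4 = (4 * K) ^ 4 * (κ * q ^ 5) * κ ^ 3 / q := by field_simp
      _ ≤ (4 * K) ^ 4 * (c / (4 * K) ^ 4) * (w.re - 1) ^ 3 / q := by gcongr; linarith
      _ = c * (w.re - 1) ^ 3 / q := by field_simp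
  have hdiff : ∀ v ∈ closedBall s κ, DifferentiableAt ℂ riemannZeta v := fun v hv ↦ by
    have him := abs_im_of_mem_closedBall (by linarith) (by linarith) hv
    refine differentiableAt_riemannZeta ?_
    rintro rfl
    simp only [one_im, abs_zero] at him
    linarith
  calc 2 * K * r / q ^ 4 = 4 * K * q * κ - K * q * (2 * κ) := by
        simp only [κ]
        field_simp
        norm_num
    _ ≤ ‖riemannZeta w‖ - K * q * (2 * κ) := by gcongr
    _ ≤ ‖riemannZeta z‖ := norm_sub_le_norm_of_norm_deriv_le hdiff
      (fun v hv ↦ (hbound s hs ht v (closedBall_subset_closedBall hκδ hv)).2) hw hz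

end ZetaGrowth

section BoundaryBehaviour
open Complex Set MeasureTheory Topology Metric

/-- The analytic continuation to `Re s ≥ 1` of the Dirichlet series `-ζ'/ζ - ζ` of `Λ - 1`. The
poles at `s = 1` cancel; writing `ζ` in terms of the entire function `(s - 1) ζ(s)` removes them. -/
noncomputable def vonMangoldtSubOneSeries (s : ℂ) : ℂ :=
  -(logDeriv zetaMulSubOne s + dslope zetaMulSubOne 1 s)

lemma vonMangoldtSubOneSeries_eq {s : ℂ} (hs : s ≠ 1) (hζ : riemannZeta s ≠ 0) :
    vonMangoldtSubOneSeries s = -deriv riemannZeta s / riemannZeta s - riemannZeta s := by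
  have hs' := sub_ne_zero.2 hs
  have hlog : logDeriv zetaMulSubOne s = 1 / (s - 1) + deriv riemannZeta s / riemannZeta s := by
    have heq : zetaMulSubOne =ᶠ[𝓝 s] fun z ↦ (z - 1) * riemannZeta z := by
      filter_upwards [isOpen_ne.mem_nhds hs] with z hz using zetaMulSubOne_of_ne_one hz
    calc logDeriv zetaMulSubOne s = logDeriv (fun z ↦ (z - 1) * riemannZeta z) s := by
          rw [logDeriv_apply, heq.deriv_eq, heq.eq_of_nhds, logDeriv_apply]
      _ = logDeriv (fun z ↦ z - 1) s + logDeriv riemannZeta s :=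
        logDeriv_mul s hs' hζ (by fun_prop) (differentiableAt_riemannZeta hs)
      _ = 1 / (s - 1) + deriv riemannZeta s / riemannZeta s := by simp [logDeriv_apply]
  have hslope : dslope zetaMulSubOne 1 s = riemannZeta s - 1 / (s - 1) := by
    rw [dslope_of_ne _ hs, slope_def_field, zetaMulSubOne_of_ne_one hs, zetaMulSubOne_one]
    field_simp
  rw [vonMangoldtSubOneSeries, hlog, hslope]
  ring

lemma LSeries_vonMangoldt_sub_one {s : ℂ} (hs : 1 < s.re) :
    LSeries (fun n ↦ ((ArithmeticFunction.vonMangoldt n - 1 : ℝ) : ℂ)) s =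
      vonMangoldtSubOneSeries s := by
  have hs1 : s ≠ 1 := by rintro rfl; simp at hs
  rw [vonMangoldtSubOneSeries_eq hs1 (riemannZeta_ne_zero_of_one_le_re hs.le),
    ← ArithmeticFunction.LSeries_vonMangoldt_eq_deriv_riemannZeta_div hs,
    ← LSeries_one_eq_riemannZeta hs, ← LSeries_sub
    (ArithmeticFunction.LSeriesSummable_vonMangoldt hs) (LSeriesSummable_one_iff.2 hs)]
  congr 1
  ext n
  simp

lemma differentiableAt_vonMangoldtSubOneSeries {s : ℂ} (hs : zetaMulSubOne s ≠ 0) :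
    DifferentiableAt ℂ vonMangoldtSubOneSeries s := by
  have hslope : Differentiable ℂ (dslope zetaMulSubOne 1) := by
    rw [← differentiableOn_univ, differentiableOn_dslope univ_mem, differentiableOn_univ]
    exact differentiable_zetaMulSubOne
  have hderiv : Differentiable ℂ (deriv zetaMulSubOne) :=
    differentiable_zetaMulSubOne.deriv
  exact (((hderiv s).div (differentiable_zetaMulSubOne s) hs).add (hslope s)).neg

/-- The Mellin transform `L(s) / (s (s + 1))` of the Riesz means `∑ aₙ (1 - n/x)⁺` of a Dirichlet
series `L(s) = ∑ aₙ n⁻ˢ`. -/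
noncomputable def rieszTransform (L : ℂ → ℂ) (s : ℂ) : ℂ := L s / (s * (s + 1))

lemma mul_add_one_ne_zero_of_re_pos {s : ℂ} (hs : 0 < s.re) : s * (s + 1) ≠ 0 := by
  refine mul_ne_zero (ne_of_apply_ne re ?_) (ne_of_apply_ne re ?_)
  · exact hs.ne'
  · exact (hs.trans (by simp)).ne'

lemma differentiableAt_rieszTransform {L : ℂ → ℂ} {s : ℂ} (hL : DifferentiableAt ℂ L s)
    (hs : 0 < s.re) : DifferentiableAt ℂ (rieszTransform L) s :=
  hL.div (by fun_prop) (mul_add_one_ne_zero_of_re_pos hs)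

lemma norm_rieszTransform_le (L : ℂ → ℂ) {s : ℂ} (hs : s.im ≠ 0) :
    ‖rieszTransform L s‖ ≤ ‖L s‖ / |s.im| ^ 2 := by
  rw [rieszTransform, norm_div, norm_mul, sq]
  have := abs_pos.2 hs
  gcongr
  · exact abs_im_le_norm s
  · simpa using abs_im_le_norm (s + 1)

lemma exists_norm_vonMangoldtSubOneSeries_le {δ : ℝ} (hδ : 0 < δ) (hδ' : δ ≤ 1 / 2) :
    ∃ r > 0, r ≤ 1 / 2 ∧ ∃ C > 0, ∀ s : ℂ, 1 ≤ s.re → s.re ≤ 2 → 3 ≤ |s.im| →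
      ∀ z ∈ closedBall s (r / (|s.im| ^ (2 * δ)) ^ 5), zetaMulSubOne z ≠ 0 ∧
        ‖vonMangoldtSubOneSeries z‖ ≤ C * (|s.im| ^ (2 * δ)) ^ 5 := by
  obtain ⟨r, hr, hrδ, c, hc, hlower⟩ := exists_le_norm_riemannZeta hδ hδ'
  obtain ⟨C, hC, hupper⟩ := exists_norm_riemannZeta_le_of_mem_closedBall hδ hδ'
  refine ⟨r, hr, by linarith, C / c + C, by positivity, fun s hs hs2 ht z hz ↦ ?_⟩
  set q := |s.im| ^ (2 * δ)
  have hq : 1 ≤ q := Real.one_le_rpow (by linarith) (by positivity)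
  have hzδ : z ∈ closedBall s (δ / 2) :=
    closedBall_subset_closedBall ((div_le_self hr.le (one_le_pow₀ hq)).trans hrδ) hz
  have hζ_lower := hlower s hs hs2 ht z hz
  obtain ⟨hζ, hζ'⟩ := hupper s hs ht z hzδ
  have hζ0 : riemannZeta z ≠ 0 := norm_pos_iff.1 (lt_of_lt_of_le (by positivity) hζ_lower)
  have hz1 : z ≠ 1 := by
    rintro rfl
    have := abs_im_of_mem_closedBall (by linarith) (by linarith) hzδ
    simp only [one_im, abs_zero] at this
    linarith
  refine ⟨by rw [zetaMulSubOne_of_ne_one hz1]; exact mul_ne_zero (sub_ne_zero.2 hz1) hζ0, ?_⟩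
  calc ‖vonMangoldtSubOneSeries z‖
    _ ≤ ‖deriv riemannZeta z‖ / ‖riemannZeta z‖ + ‖riemannZeta z‖ := by
        rw [vonMangoldtSubOneSeries_eq hz1 hζ0]
        exact (norm_sub_le _ _).trans_eq (by rw [norm_div, norm_neg])
    _ ≤ C * q / (c / q ^ 4) + C * q ^ 5 := by
        gcongr
        exact hζ.trans (by gcongr; exact le_self_pow₀ hq (by norm_num))
    _ = (C / c + C) * q ^ 5 := by field_simp

lemma exists_norm_rieszTransform_vonMangoldtSubOneSeries_le {δ : ℝ} (hδ : 0 < δ) (hδ' : δ ≤ 1 / 2) :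
    ∃ r > 0, r ≤ 1 / 2 ∧ ∃ C > 0, ∀ s : ℂ, 1 ≤ s.re → s.re ≤ 2 → 3 ≤ |s.im| →
      ∀ z ∈ closedBall s (r / (|s.im| ^ (2 * δ)) ^ 5),
        DifferentiableAt ℂ (rieszTransform vonMangoldtSubOneSeries) z ∧
        ‖rieszTransform vonMangoldtSubOneSeries z‖ ≤ C * (|s.im| ^ (2 * δ)) ^ 5 / |s.im| ^ 2 := by
  obtain ⟨r, hr, hr2, C, hC, hball⟩ := exists_norm_vonMangoldtSubOneSeries_le hδ hδ'
  refine ⟨r, hr, hr2, 4 * C, by positivity, fun s hs hs2 ht z hz ↦ ?_⟩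
  obtain ⟨hz_ne, hz_norm⟩ := hball s hs hs2 ht z hz
  have hq : 1 ≤ |s.im| ^ (2 * δ) := Real.one_le_rpow (by linarith) (by positivity)
  have hR : r / (|s.im| ^ (2 * δ)) ^ 5 ≤ 1 / 2 := (div_le_self hr.le (one_le_pow₀ hq)).trans hr2
  have hre := sub_le_re_of_mem_closedBall hz
  have him : |s.im| / 2 ≤ |z.im| := by
    linarith [(abs_im_of_mem_closedBall (by linarith) (by linarith) hz).1]
  refine ⟨differentiableAt_rieszTransform (differentiableAt_vonMangoldtSubOneSeries hz_ne)
    (by linarith), ?_⟩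
  calc _ ≤ ‖vonMangoldtSubOneSeries z‖ / |z.im| ^ 2 :=
        norm_rieszTransform_le _ (abs_pos.1 (by linarith))
    _ ≤ C * (|s.im| ^ (2 * δ)) ^ 5 / (|s.im| / 2) ^ 2 := by gcongr
    _ = 4 * C * (|s.im| ^ (2 * δ)) ^ 5 / |s.im| ^ 2 := by field_simp; norm_num

lemma exists_norm_iteratedDeriv_rieszTransform_le_of_three_le (n : ℕ) :
    ∃ C > 0, ∀ s : ℂ, 1 ≤ s.re → s.re ≤ 2 → 3 ≤ |s.im| →
      ‖iteratedDeriv n (rieszTransform vonMangoldtSubOneSeries) s‖ ≤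
        C * |s.im| ^ (-(3 / 2) : ℝ) := by
  -- `δ` is chosen such that `n` derivatives cost only `(|t|^(2δ))^(5(n+1)) = |t|^(1/2)`.
  set δ : ℝ := 1 / (20 * (n + 1))
  have hδ : 0 < δ := by positivity
  have hδ' : δ ≤ 1 / 2 := by
    refine one_div_le_one_div_of_le two_pos ?_
    linarith [n.cast_nonneg (α := ℝ)]
  obtain ⟨r, hr, -, C, hC, hball⟩ := exists_norm_rieszTransform_vonMangoldtSubOneSeries_le hδ hδ'
  refine ⟨n.factorial * C / r ^ n, by positivity, fun s hs hs2 ht ↦ ?_⟩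
  set t := |s.im|
  have ht0 : 0 < t := by linarith
  set q := t ^ (2 * δ)
  have hdiff : DiffContOnCl ℂ (rieszTransform vonMangoldtSubOneSeries) (ball s (r / q ^ 5)) :=
    DifferentiableOn.diffContOnCl_ball
      (fun z hz ↦ (hball s hs hs2 ht z hz).1.differentiableWithinAt) subset_rfl
  have hsphere : ∀ z ∈ sphere s (r / q ^ 5),
      ‖rieszTransform vonMangoldtSubOneSeries z‖ ≤ C * q ^ 5 / t ^ 2 := fun z hz ↦
    (hball s hs hs2 ht z (sphere_subset_closedBall hz)).2
  have hq_pow : q ^ (5 * (n + 1)) / t ^ 2 = t ^ (-(3 / 2) : ℝ) := by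
    rw [← Real.rpow_natCast q, ← Real.rpow_natCast t, ← Real.rpow_mul ht0.le, ← Real.rpow_sub ht0]
    congr 1
    simp only [δ]
    push_cast
    field_simp
    norm_num
  calc _ ≤ n.factorial * (C * q ^ 5 / t ^ 2) / (r / q ^ 5) ^ n :=
        norm_iteratedDeriv_le_of_forall_mem_sphere_norm_le n (by positivity) hdiff hsphere
    _ = n.factorial * C / r ^ n * (q ^ (5 * (n + 1)) / t ^ 2) := by
        rw [div_pow, ← pow_mul, mul_add_one, pow_add]
        field_simp
    _ = _ := by rw [hq_pow]

lemma analyticAt_rieszTransform_vonMangoldtSubOneSeries {s : ℂ} (hs : 1 ≤ s.re) :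
    AnalyticAt ℂ (rieszTransform vonMangoldtSubOneSeries) s := by
  have hopen : IsOpen ({z : ℂ | zetaMulSubOne z ≠ 0} ∩ {z | 0 < z.re}) :=
    (isOpen_ne_fun differentiable_zetaMulSubOne.continuous continuous_const).inter
      (isOpen_lt continuous_const continuous_re)
  refine DifferentiableOn.analyticAt (fun z hz ↦ ?_)
    (hopen.mem_nhds ⟨zetaMulSubOne_ne_zero hs, lt_of_lt_of_le zero_lt_one hs⟩)
  exact (differentiableAt_rieszTransform (differentiableAt_vonMangoldtSubOneSeries hz.1)
    hz.2).differentiableWithinAt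

lemma exists_norm_iteratedDeriv_rieszTransform_le_of_le_three (n : ℕ) :
    ∃ C, ∀ s : ℂ, 1 ≤ s.re → s.re ≤ 2 → |s.im| ≤ 3 →
      ‖iteratedDeriv n (rieszTransform vonMangoldtSubOneSeries) s‖ ≤ C := by
  have hcont : ContinuousOn (iteratedDeriv n (rieszTransform vonMangoldtSubOneSeries))
      (Icc 1 2 ×ℂ Icc (-3) 3) := fun z hz ↦ by
    rw [iteratedDeriv_eq_iterate]
    exact ((analyticAt_rieszTransform_vonMangoldtSubOneSeries
      hz.1.1).iterated_deriv n).continuousAt.continuousWithinAt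
  obtain ⟨C, hC⟩ := (isCompact_Icc.reProdIm isCompact_Icc).exists_bound_of_continuousOn hcont
  exact ⟨C, fun s hs hs2 ht ↦ hC s ⟨⟨hs, hs2⟩, abs_le.1 ht⟩⟩

lemma exists_norm_iteratedDeriv_rieszTransform_le (n : ℕ) :
    ∃ C, ∀ s : ℂ, 1 ≤ s.re → s.re ≤ 2 →
      ‖iteratedDeriv n (rieszTransform vonMangoldtSubOneSeries) s‖ ≤
        C * (1 + |s.im|) ^ (-(3 / 2) : ℝ) := by
  obtain ⟨A, hA⟩ := exists_norm_iteratedDeriv_rieszTransform_le_of_le_three n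
  obtain ⟨B, hB, hAB⟩ := exists_norm_iteratedDeriv_rieszTransform_le_of_three_le n
  have hdecay {b t : ℝ} (ht : 0 ≤ t) (hb : (1 + t) / 4 ≤ b) :
      b ^ (-(3 / 2) : ℝ) ≤ 4 ^ (3 / 2 : ℝ) * (1 + t) ^ (-(3 / 2) : ℝ) := by
    calc b ^ (-(3 / 2) : ℝ) ≤ ((1 + t) / 4) ^ (-(3 / 2) : ℝ) :=
          Real.rpow_le_rpow_of_nonpos (by positivity) hb (by norm_num)
      _ = 4 ^ (3 / 2 : ℝ) * (1 + t) ^ (-(3 / 2) : ℝ) := by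
        rw [Real.div_rpow (by positivity) (by norm_num), Real.rpow_neg zero_le_four, div_inv_eq_mul,
          mul_comm]
  refine ⟨max A B * 4 ^ (3 / 2 : ℝ), fun s hs hs2 ↦ ?_⟩
  have : 0 ≤ max A B := hB.le.trans (le_max_right _ _)
  rw [mul_assoc]
  rcases le_total |s.im| 3 with ht | ht
  · calc _ ≤ max A B * 1 ^ (-(3 / 2) : ℝ) := by
          rw [Real.one_rpow, mul_one]
          exact (hA s hs hs2 ht).trans (le_max_left _ _)
      _ ≤ _ := by gcongr; exact hdecay (abs_nonneg _) (by linarith)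
  · calc _ ≤ max A B * |s.im| ^ (-(3 / 2) : ℝ) :=
          (hAB s hs hs2 ht).trans (by gcongr; exact le_max_right _ _)
      _ ≤ _ := by gcongr; exact hdecay (abs_nonneg _) (by linarith)

end BoundaryBehaviour

section RieszMeans
open Complex Set MeasureTheory Topology FourierTransform

lemma norm_one_div_mul_add_one_le {s : ℂ} (hs : 0 < s.re) :
    ‖1 / (s * (s + 1))‖ ≤ (1 + (s.re ^ 2)⁻¹) * (1 + s.im ^ 2)⁻¹ := by
  have hle : ‖s‖ ≤ ‖s + 1‖ := by
    refine le_of_sq_le_sq ?_ (norm_nonneg _)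
    rw [← normSq_eq_norm_sq, ← normSq_eq_norm_sq, normSq_apply, normSq_apply]
    simp only [add_re, add_im, one_re, one_im]
    nlinarith
  have hsq : s.re ^ 2 + s.im ^ 2 ≤ ‖s‖ * ‖s + 1‖ := by
    calc s.re ^ 2 + s.im ^ 2 = ‖s‖ * ‖s‖ := by rw [← sq, ← normSq_eq_norm_sq, normSq_apply]; ring
      _ ≤ ‖s‖ * ‖s + 1‖ := by gcongr
  rw [norm_div, norm_one, norm_mul, ← div_eq_mul_inv]
  calc 1 / (‖s‖ * ‖s + 1‖) ≤ 1 / (s.re ^ 2 + s.im ^ 2) := by gcongr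
    _ ≤ (1 + (s.re ^ 2)⁻¹) / (1 + s.im ^ 2) := by
      rw [div_le_div_iff₀ (by positivity) (by positivity)]
      field_simp
      nlinarith [sq_nonneg s.im, sq_nonneg (s.re ^ 2)]

lemma verticalIntegrable_one_div_mul_add_one {σ : ℝ} (hσ : 0 < σ) :
    VerticalIntegrable (fun s ↦ 1 / (s * (s + 1))) σ := by
  have hcont : Continuous fun t : ℝ ↦ 1 / ((σ + t * I) * (σ + t * I + 1)) :=
    continuous_const.div (by fun_prop) fun t ↦ mul_add_one_ne_zero_of_re_pos (by simpa using hσ)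
  refine (integrable_inv_one_add_sq.const_mul (1 + (σ ^ 2)⁻¹)).mono' hcont.aestronglyMeasurable
    (.of_forall fun t ↦ ?_)
  simpa using norm_one_div_mul_add_one_le (s := σ + t * I) (by simpa using hσ)

lemma hasMellin_max_one_sub {s : ℂ} (hs : 0 < s.re) :
    HasMellin (fun y : ℝ ↦ ((max (1 - y) 0 : ℝ) : ℂ)) s (1 / (s * (s + 1))) := by
  have hone := hasMellin_one_Ioc hs
  have hid := hasMellin_cpow_Ioc 1 (s := s) (by rw [one_re]; linarith)
  obtain ⟨hs0, hs1⟩ := mul_ne_zero_iff.1 (mul_add_one_ne_zero_of_re_pos hs)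
  have hker : EqOn (fun y : ℝ ↦ (y : ℂ) ^ (s - 1) • ((max (1 - y) 0 : ℝ) : ℂ))
      (fun y ↦ (y : ℂ) ^ (s - 1) • ((Ioc 0 1).indicator (fun _ ↦ (1 : ℂ)) y -
        (Ioc 0 1).indicator (fun y : ℝ ↦ (y : ℂ) ^ (1 : ℂ)) y)) (Ioi 0) := fun y hy ↦ by
    by_cases hy1 : y ≤ 1
    · simp [indicator_of_mem (show y ∈ Ioc 0 1 from ⟨hy, hy1⟩), hy1]
    · simp [indicator_of_notMem (show y ∉ Ioc 0 1 from fun h ↦ hy1 h.2), (not_le.1 hy1).le]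
  have hsub := hasMellin_sub hone.1 hid.1
  refine ⟨hsub.1.congr_fun hker.symm measurableSet_Ioi, ?_⟩
  rw [mellin, setIntegral_congr_fun measurableSet_Ioi hker, ← mellin, hsub.2, hone.2, hid.2]
  field_simp
  ring

lemma mellinInv_one_div_mul_add_one {σ : ℝ} (hσ : 0 < σ) {y : ℝ} (hy : 0 < y) :
    mellinInv σ (fun s ↦ 1 / (s * (s + 1))) y = (max (1 - y) 0 : ℝ) := by
  have hmellin (t : ℝ) : HasMellin (fun y : ℝ ↦ ((max (1 - y) 0 : ℝ) : ℂ)) (σ + t * I)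
      (1 / ((σ + t * I) * (σ + t * I + 1))) := hasMellin_max_one_sub (by simpa using hσ)
  have hint := verticalIntegrable_one_div_mul_add_one hσ
  rw [← mellinInv_mellin_eq σ (fun y : ℝ ↦ ((max (1 - y) 0 : ℝ) : ℂ)) hy]
  · simp only [mellinInv, (hmellin _).2]
  · simpa using (hmellin 0).1
  · simpa only [VerticalIntegrable, (hmellin _).2] using hint
  · fun_prop

lemma mellinInv_rieszTransform_term (a : ℕ → ℂ) {σ : ℝ} (hσ : 0 < σ) {x : ℝ} (hx : 0 < x) {n : ℕ}
    (hn : n ≠ 0) :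
    mellinInv σ (rieszTransform fun s ↦ LSeries.term a s n) x⁻¹ =
      a n * (max (1 - n / x) 0 : ℝ) := by
  rw [← mellinInv_one_div_mul_add_one hσ (by positivity : 0 < n / x), mellinInv, mellinInv,
    mul_smul_comm, ← integral_const_mul]
  congr 2 with t
  have hpow (s : ℂ) : ((n / x : ℝ) : ℂ) ^ (-s) = (x⁻¹ : ℝ) ^ (-s) / (n : ℂ) ^ s := by
    rw [div_eq_inv_mul, ofReal_mul, mul_cpow_ofReal_nonneg (by positivity) (by positivity),
      ofReal_natCast, cpow_neg (n : ℂ), div_eq_mul_inv]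
  simp only [rieszTransform, LSeries.term_of_ne_zero hn, smul_eq_mul, hpow]
  ring

lemma hasSum_mellinInv_rieszTransform_term {a : ℕ → ℂ} {σ : ℝ} (hσ : 0 < σ)
    (ha : LSeriesSummable a σ) {y : ℝ} (hy : 0 < y) :
    HasSum (fun n ↦ mellinInv σ (rieszTransform fun s ↦ LSeries.term a s n) y)
      (mellinInv σ (rieszTransform (LSeries a)) y) := by
  have hk := (verticalIntegrable_one_div_mul_add_one hσ).norm
  have hnorm (n : ℕ) (t : ℝ) :
      ‖(y : ℂ) ^ (-(σ + t * I)) • rieszTransform (fun s ↦ LSeries.term a s n) (σ + t * I)‖ =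
        y ^ (-σ) * ‖LSeries.term a σ n‖ * ‖1 / ((σ + t * I : ℂ) * (σ + t * I + 1))‖ := by
    rw [norm_smul, norm_cpow_eq_rpow_re_of_pos hy, rieszTransform, norm_div, LSeries.norm_term_eq,
      LSeries.norm_term_eq]
    simp [mul_assoc, div_eq_mul_inv]
  have hint (n : ℕ) : Integrable fun t : ℝ ↦
      (y : ℂ) ^ (-(σ + t * I)) • rieszTransform (fun s ↦ LSeries.term a s n) (σ + t * I) := by
    refine (hk.const_mul (y ^ (-σ) * ‖LSeries.term a σ n‖)).mono'
      (Continuous.aestronglyMeasurable ?_) (.of_forall fun t ↦ (hnorm n t).le)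
    have hterm : Continuous fun t : ℝ ↦ LSeries.term a (σ + t * I) n :=
      (Differentiable.continuous fun s ↦
        (LSeries.hasDerivAt_term a n s).differentiableAt).comp (by fun_prop)
    have hline : Continuous fun t : ℝ ↦ (σ + t * I : ℂ) := by fun_prop
    refine .smul (.const_cpow hline.neg (.inl (by exact_mod_cast hy.ne')))
      (hterm.div (hline.mul (hline.add_const 1)) fun t ↦ ?_)
    exact mul_add_one_ne_zero_of_re_pos (by simpa using hσ)
  have hsum := hasSum_integral_of_summable_integral_norm hint (by
    simp only [hnorm, integral_const_mul]
    exact (ha.norm.mul_left _).mul_right _)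
  convert! hsum.const_smul (1 / (2 * Real.pi)) using 1
  rw [mellinInv]
  congr 2 with t
  simp only [rieszTransform, LSeries, smul_eq_mul, tsum_mul_left, tsum_div_const]

lemma mellinInv_rieszTransform_LSeries {a : ℕ → ℂ} {σ : ℝ} (hσ : 0 < σ) (ha : LSeriesSummable a σ)
    {x : ℝ} (hx : 0 < x) :
    mellinInv σ (rieszTransform (LSeries a)) x⁻¹ =
      ∑ n ∈ Finset.Ioc 0 ⌊x⌋₊, a n * (1 - n / x : ℝ) := by
  refine (hasSum_mellinInv_rieszTransform_term hσ ha (inv_pos.2 hx)).unique ?_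
  have hmem (n : ℕ) (hn : n ∈ Finset.Ioc 0 ⌊x⌋₊) :
      mellinInv σ (rieszTransform fun s ↦ LSeries.term a s n) x⁻¹ = a n * (1 - n / x : ℝ) := by
    obtain ⟨hn0, hnx⟩ := Finset.mem_Ioc.1 hn
    rw [mellinInv_rieszTransform_term a hσ hx hn0.ne', max_eq_left]
    rw [sub_nonneg, div_le_one hx]
    exact (Nat.le_floor_iff hx.le).1 hnx
  rw [← Finset.sum_congr rfl hmem]
  refine hasSum_sum_of_ne_finset_zero fun n hn ↦ ?_
  rcases eq_or_ne n 0 with rfl | hn0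
  · simp [mellinInv, rieszTransform]
  · have hxn : x < n := by
      simpa [Nat.pos_of_ne_zero hn0, Nat.floor_lt hx.le] using hn
    rw [mellinInv_rieszTransform_term a hσ hx hn0, max_eq_right, ofReal_zero, mul_zero]
    rw [sub_nonpos, one_le_div hx]
    exact hxn.le

lemma iteratedDeriv_comp_verticalLine {f : ℂ → ℂ} {σ : ℝ} (hf : ∀ t : ℝ, AnalyticAt ℂ f (σ + t * I))
    (n : ℕ) (c : ℝ) : iteratedDeriv n (fun t : ℝ ↦ f (σ + c * t * I)) =
      fun t : ℝ ↦ (c * I) ^ n * iteratedDeriv n f (σ + c * t * I) := by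
  induction n with
  | zero => simp
  | succ n ih =>
    ext t
    have hderiv : HasDerivAt (iteratedDeriv n f) (iteratedDeriv (n + 1) f (σ + c * t * I))
        (σ + c * t * I) := by
      rw [iteratedDeriv_succ, iteratedDeriv_eq_iterate]
      have h := (hf (c * t)).iterated_deriv n
      push_cast at h
      exact h.differentiableAt.hasDerivAt
    have hline : HasDerivAt (fun t : ℝ ↦ (σ + c * t * I : ℂ)) (c * I) t := by
      simpa using
        (((ofRealCLM.hasDerivAt (x := t)).const_mul (c : ℂ)).mul_const I).const_add (σ : ℂ)
    rw [iteratedDeriv_succ, ih]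
    refine ((hderiv.comp t hline).const_mul _).deriv.trans ?_
    ring

lemma two_pi_mul_abs_pow_mul_norm_fourier_le {E : Type*} [NormedAddCommGroup E] [NormedSpace ℂ E]
    {g : ℝ → E} {n : ℕ} (hg : ContDiff ℝ n g) (hint : ∀ k ≤ n, Integrable (iteratedDeriv k g))
    (u : ℝ) : (2 * Real.pi * |u|) ^ n * ‖𝓕 g u‖ ≤ ∫ v, ‖iteratedDeriv n g v‖ := by
  have h := congrFun (Real.fourier_iteratedDeriv (N := n) (by exact_mod_cast hg)
    (fun k hk ↦ hint k (by exact_mod_cast hk)) le_rfl) u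
  calc (2 * Real.pi * |u|) ^ n * ‖𝓕 g u‖ = ‖𝓕 (iteratedDeriv n g) u‖ := by
        rw [h, norm_smul, norm_pow]
        simp [abs_of_pos Real.pi_pos]
    _ ≤ ∫ v, ‖iteratedDeriv n g v‖ := VectorFourier.norm_fourierIntegral_le_integral_norm _ _ _ _ _

lemma abs_log_pow_mul_norm_mellinInv_le {f : ℂ → ℂ} {σ : ℝ} {n : ℕ}
    (hf : ∀ t : ℝ, AnalyticAt ℂ f (σ + t * I))
    (hint : ∀ k ≤ n, VerticalIntegrable (iteratedDeriv k f) σ) {x : ℝ} (hx : 0 < x) :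
    |Real.log x| ^ n * ‖mellinInv σ f x‖ ≤
      x ^ (-σ) / (2 * Real.pi) * ∫ t : ℝ, ‖iteratedDeriv n f (σ + t * I)‖ := by
  set g : ℝ → ℂ := fun v ↦ f (σ + (2 * Real.pi : ℝ) * v * I)
  have hgderiv (k : ℕ) := iteratedDeriv_comp_verticalLine hf k (2 * Real.pi)
  have hg : ContDiff ℝ n g := contDiff_iff_contDiffAt.2 fun v ↦ by
    have h := hf (2 * Real.pi * v)
    rw [ofReal_mul] at h
    refine (h.restrictScalars (𝕜 := ℝ)).contDiffAt.comp v ?_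
    exact contDiffAt_const.add ((contDiffAt_const.mul ofRealCLM.contDiff.contDiffAt).mul
      contDiffAt_const)
  have hgint (k : ℕ) (hk : k ≤ n) : Integrable (iteratedDeriv k g) := by
    rw [hgderiv]
    have h := (hint k hk).comp_mul_left' Real.two_pi_pos.ne'
    convert! h.const_mul _ using 4
    push_cast
    rfl
  have hgnorm : ∫ v, ‖iteratedDeriv n g v‖ =
      (2 * Real.pi) ^ n * ((2 * Real.pi)⁻¹ * ∫ t : ℝ, ‖iteratedDeriv n f (σ + t * I)‖) := by
    have h := Measure.integral_comp_mul_left (fun t : ℝ ↦ ‖iteratedDeriv n f (σ + t * I)‖)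
      (2 * Real.pi)
    rw [abs_of_pos (by positivity), smul_eq_mul] at h
    rw [← h, ← integral_const_mul, hgderiv]
    simp [abs_of_pos Real.pi_pos]
  have hdecay := two_pi_mul_abs_pow_mul_norm_fourier_le hg hgint (Real.log x)
  rw [hgnorm, mul_pow, mul_assoc, mul_le_mul_iff_right₀ (by positivity)] at hdecay
  have hfourier : ‖mellinInv σ f x‖ = x ^ (-σ) * ‖𝓕 g (Real.log x)‖ := by
    rw [mellinInv_eq_fourierInv σ f hx, Real.fourierInv_eq_fourier_neg, neg_neg, norm_smul,
      norm_cpow_eq_rpow_re_of_pos hx]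
    simp [g]
  rw [hfourier, mul_left_comm, div_eq_mul_inv, mul_assoc]
  gcongr

lemma verticalIntegrable_of_norm_le {f : ℂ → ℂ} {σ α C : ℝ} (hα : 1 < α)
    (hf : ∀ t : ℝ, ContinuousAt f (σ + t * I))
    (hbound : ∀ t : ℝ, ‖f (σ + t * I)‖ ≤ C * (1 + |t|) ^ (-α)) : VerticalIntegrable f σ := by
  have hcont : Continuous fun t : ℝ ↦ f (σ + t * I) :=
    continuous_iff_continuousAt.2 fun t ↦
      ContinuousAt.comp (f := fun t : ℝ ↦ (σ + t * I : ℂ)) (hf t) (by fun_prop)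
  have hint := (integrable_one_add_norm (E := ℝ) (μ := volume) (r := α) (by simpa)).const_mul C
  exact hint.mono' hcont.aestronglyMeasurable (.of_forall hbound)

lemma analyticAt_rieszTransform_LSeries {a : ℕ → ℂ} {s : ℂ}
    (ha : LSeries.abscissaOfAbsConv a < s.re) (hs : 0 < s.re) :
    AnalyticAt ℂ (rieszTransform (LSeries a)) s :=
  (LSeries_analyticOnNhd a s ha).fun_div (by fun_prop) (mul_add_one_ne_zero_of_re_pos hs)

lemma abs_log_pow_mul_norm_sum_le {a : ℕ → ℂ} {σ α : ℝ} {m : ℕ} {C : ℕ → ℝ} (hσ : 0 < σ)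
    (hα : 1 < α) (ha : LSeries.abscissaOfAbsConv a < σ)
    (hbound : ∀ k ≤ m, ∀ t : ℝ,
      ‖iteratedDeriv k (rieszTransform (LSeries a)) (σ + t * I)‖ ≤ C k * (1 + |t|) ^ (-α))
    {x : ℝ} (hx : 0 < x) :
    |Real.log x| ^ m * ‖∑ n ∈ Finset.Ioc 0 ⌊x⌋₊, a n * (1 - n / x : ℝ)‖ ≤
      x ^ σ / (2 * Real.pi) * (C m * ∫ t : ℝ, (1 + |t|) ^ (-α)) := by
  have hanalytic (t : ℝ) : AnalyticAt ℂ (rieszTransform (LSeries a)) (σ + t * I) :=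
    analyticAt_rieszTransform_LSeries (by simpa) (by simpa)
  have hint (k : ℕ) (hk : k ≤ m) :
      VerticalIntegrable (iteratedDeriv k (rieszTransform (LSeries a))) σ := by
    refine verticalIntegrable_of_norm_le hα (fun t ↦ ?_) (hbound k hk)
    rw [iteratedDeriv_eq_iterate]
    exact ((hanalytic t).iterated_deriv k).continuousAt
  have hsummable : LSeriesSummable a σ := LSeriesSummable_of_abscissaOfAbsConv_lt_re (by simpa)
  rw [← mellinInv_rieszTransform_LSeries hσ hsummable hx, ← abs_neg, ← Real.log_inv]
  refine (abs_log_pow_mul_norm_mellinInv_le hanalytic hint (inv_pos.2 hx)).trans ?_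
  rw [Real.inv_rpow hx.le, Real.rpow_neg hx.le, inv_inv, ← integral_const_mul (C m)]
  refine mul_le_mul_of_nonneg_left (integral_mono (hint m le_rfl).norm ?_ (hbound m le_rfl))
    (by positivity)
  exact (integrable_one_add_norm (E := ℝ) (μ := volume) (r := α) (by simpa)).const_mul _

lemma exists_abs_log_pow_mul_norm_sum_le {a : ℕ → ℂ} {σ₀ α : ℝ} {m : ℕ} (hσ₀ : 0 ≤ σ₀) (hα : 1 < α)
    (ha : LSeries.abscissaOfAbsConv a ≤ σ₀)
    (hbound : ∀ k ≤ m, ∃ C, ∀ s : ℂ, σ₀ < s.re → s.re ≤ σ₀ + 1 →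
      ‖iteratedDeriv k (rieszTransform (LSeries a)) s‖ ≤ C * (1 + |s.im|) ^ (-α)) :
    ∃ C, ∀ x : ℝ, 0 < x →
      |Real.log x| ^ m * ‖∑ n ∈ Finset.Ioc 0 ⌊x⌋₊, a n * (1 - n / x : ℝ)‖ ≤ C * x ^ σ₀ := by
  choose! C hC using hbound
  set K := C m * ∫ t : ℝ, (1 + |t|) ^ (-α)
  refine ⟨K / (2 * Real.pi), fun x hx ↦ ?_⟩
  rw [div_mul_comm]
  have hlim : Tendsto (fun σ : ℝ ↦ x ^ σ / (2 * Real.pi) * K) (𝓝[>] σ₀)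
      (𝓝 (x ^ σ₀ / (2 * Real.pi) * K)) :=
    (((Real.continuousAt_const_rpow hx.ne').tendsto.div_const _).mul_const _).mono_left
      nhdsWithin_le_nhds
  refine ge_of_tendsto hlim ?_
  filter_upwards [Ioc_mem_nhdsGT (lt_add_one σ₀)] with σ ⟨hσ, hσ'⟩
  exact abs_log_pow_mul_norm_sum_le (hσ₀.trans_lt hσ) hα (ha.trans_lt (by exact_mod_cast hσ))
    (fun k hk t ↦ by simpa using hC k hk (σ + t * I) (by simpa) (by simpa)) hx

end RieszMeans

section PrimeNumberTheorem
open Finset Asymptotics ArithmeticFunction Topology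

/-- The (unnormalised) Riesz mean `∑_{n ≤ x} aₙ (x - n)` of order one, i.e. the integral over
`[0, x]` of the summatory function of `a`. -/
noncomputable def rieszSum (a : ℕ → ℝ) (x : ℝ) : ℝ := ∑ n ∈ Ioc 0 ⌊x⌋₊, a n * (x - n)

lemma rieszSum_sub_rieszSum (a : ℕ → ℝ) {x y : ℝ} (hxy : x ≤ y) :
    rieszSum a y - rieszSum a x =
      (y - x) * ∑ n ∈ Ioc 0 ⌊x⌋₊, a n + ∑ n ∈ Ioc ⌊x⌋₊ ⌊y⌋₊, a n * (y - n) := by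
  rw [rieszSum, rieszSum, ← sum_Ioc_consecutive _ (Nat.zero_le ⌊x⌋₊) (Nat.floor_mono hxy),
    add_sub_right_comm, ← sum_sub_distrib, mul_sum]
  congr 1
  exact sum_congr rfl fun n _ ↦ by ring

lemma mul_sum_le_rieszSum_sub {a : ℕ → ℝ} (ha : ∀ n, 0 ≤ a n) {x y : ℝ} (hy : 0 ≤ y) (hxy : x ≤ y) :
    (y - x) * ∑ n ∈ Ioc 0 ⌊x⌋₊, a n ≤ rieszSum a y - rieszSum a x := by
  rw [rieszSum_sub_rieszSum a hxy]
  refine le_add_of_nonneg_right (sum_nonneg fun n hn ↦ mul_nonneg (ha n) (sub_nonneg.2 ?_))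
  exact (Nat.le_floor_iff hy).1 (mem_Ioc.1 hn).2

lemma rieszSum_sub_le_mul_sum {a : ℕ → ℝ} (ha : ∀ n, 0 ≤ a n) {x y : ℝ} (hxy : x ≤ y) :
    rieszSum a y - rieszSum a x ≤ (y - x) * ∑ n ∈ Ioc 0 ⌊y⌋₊, a n := by
  rw [rieszSum_sub_rieszSum a hxy,
    ← sum_Ioc_consecutive _ (Nat.zero_le ⌊x⌋₊) (Nat.floor_mono hxy), mul_add, mul_sum (Ioc ⌊x⌋₊ _)]
  refine add_le_add_right (sum_le_sum fun n hn ↦ ?_) _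
  rw [mul_comm]
  refine mul_le_mul_of_nonneg_right (sub_le_sub_left ?_ y) (ha n)
  exact (Nat.lt_of_floor_lt (mem_Ioc.1 hn).1).le

lemma abs_sum_sub_le_of_abs_rieszSum_sub_le {a : ℕ → ℝ} (ha : ∀ n, 0 ≤ a n) {x η : ℝ} (hx : 0 < x)
    (hη : 0 < η) (hη' : η ≤ 1 / 2)
    (hR : ∀ y, x / 2 ≤ y → y ≤ 2 * x → |rieszSum a y - y ^ 2 / 2| ≤ (η * x) ^ 2) :
    |∑ n ∈ Ioc 0 ⌊x⌋₊, a n - x| ≤ 3 * (η * x) := by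
  have hηx : 0 < η * x := by positivity
  have hηx' : η * x ≤ x / 2 := by nlinarith
  have h₀ := abs_le.1 (hR x (by linarith) (by linarith))
  have hright := abs_le.1 (hR (x + η * x) (by linarith) (by linarith))
  have hleft := abs_le.1 (hR (x - η * x) (by linarith) (by linarith))
  have hupper := mul_sum_le_rieszSum_sub ha (x := x) (y := x + η * x) (by linarith) (by linarith)
  have hlower := rieszSum_sub_le_mul_sum ha (x := x - η * x) (y := x) (by linarith)
  rw [add_sub_cancel_left] at hupper
  rw [sub_sub_cancel] at hlower
  refine abs_le.2 ⟨le_of_mul_le_mul_left ?_ hηx, le_of_mul_le_mul_left ?_ hηx⟩ <;> nlinarith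

lemma log_div_two_le_log {x y : ℝ} (hx : 4 ≤ x) (hy : x / 2 ≤ y) :
    Real.log x / 2 ≤ Real.log y := by
  have h : Real.log x ≤ Real.log (y ^ 2) := Real.log_le_log (by linarith) (by nlinarith)
  rw [Real.log_pow] at h
  push_cast at h
  linarith

theorem isBigO_sum_sub_of_isBigO_rieszSum_sub {a : ℕ → ℝ} (ha : ∀ n, 0 ≤ a n) {k : ℕ} (hk : k ≠ 0)
    (hR : (fun x ↦ rieszSum a x - x ^ 2 / 2) =O[atTop] fun x ↦ x ^ 2 / Real.log x ^ (2 * k)) :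
    (fun x : ℝ ↦ ∑ n ∈ Ioc 0 ⌊x⌋₊, a n - x) =O[atTop] fun x ↦ x / Real.log x ^ k := by
  obtain ⟨C, hC, hbound⟩ := hR.exists_pos
  set K := 2 ^ (k + 1) * √C
  have hη : Tendsto (fun x ↦ K / Real.log x ^ k) atTop (𝓝 0) :=
    ((tendsto_pow_atTop hk).comp Real.tendsto_log_atTop).const_div_atTop K
  have hE := (tendsto_id.atTop_div_const (zero_lt_two' ℝ)).eventually
    (eventually_forall_ge_atTop.2 hbound.bound)
  refine .of_bound (3 * K) ?_
  filter_upwards [hE, hη.eventually_le_const (by norm_num : (0 : ℝ) < 1 / 2),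
    eventually_ge_atTop 4] with x hxE hxη hx4
  have hlog : 0 < Real.log x := Real.log_pos (by linarith)
  have hxR (y : ℝ) (hy : x / 2 ≤ y) (hy' : y ≤ 2 * x) :
      |rieszSum a y - y ^ 2 / 2| ≤ (K / Real.log x ^ k * x) ^ 2 := by
    have hy0 : 0 < y := by linarith
    have hlogy := log_div_two_le_log hx4 hy
    have hlogy0 : 0 < Real.log y := by linarith
    calc |rieszSum a y - y ^ 2 / 2| ≤ C * (y ^ 2 / Real.log y ^ (2 * k)) := by
          simpa [abs_of_pos, hlogy0, hy0] using hxE y hy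
      _ ≤ C * ((2 * x) ^ 2 / (Real.log x / 2) ^ (2 * k)) := by gcongr
      _ = (K / Real.log x ^ k * x) ^ 2 := by
        have hsq : √C ^ 2 = C := Real.sq_sqrt hC.le
        simp only [K, mul_pow, div_pow, hsq, ← pow_mul]
        field_simp
        ring
  have h := abs_sum_sub_le_of_abs_rieszSum_sub_le ha (by linarith) (by positivity) hxη hxR
  rw [Real.norm_eq_abs, Real.norm_of_nonneg (by positivity)]
  exact h.trans_eq (by ring)

lemma isBigO_rieszSum_one_sub :
    (fun x ↦ rieszSum (fun _ ↦ 1) x - x ^ 2 / 2) =O[atTop] fun x ↦ x := by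
  have heq (x : ℝ) : rieszSum (fun _ ↦ 1) x = ⌊x⌋₊ * x - ⌊x⌋₊ * (⌊x⌋₊ + 1) / 2 := by
    rw [rieszSum]
    induction ⌊x⌋₊ with
    | zero => simp
    | succ N ih => rw [sum_Ioc_succ_top N.zero_le, ih]; push_cast; ring
  refine .of_bound 1 ?_
  filter_upwards [eventually_ge_atTop 1] with x hx
  have hfloor := Nat.floor_le (zero_le_one.trans hx)
  have hfloor' := Nat.lt_floor_add_one x
  rw [heq, one_mul, Real.norm_eq_abs, Real.norm_of_nonneg (by linarith)]
  refine abs_le.2 ⟨?_, ?_⟩ <;> nlinarith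

lemma isBigO_rpow_div_log_pow {α β : ℝ} (h : α < β) (m : ℕ) :
    (fun x : ℝ ↦ x ^ α) =O[atTop] fun x ↦ x ^ β / Real.log x ^ m := by
  have hlog : (fun x ↦ Real.log x ^ m) =O[atTop] fun x ↦ x ^ (β - α) := by
    simpa using (isLittleO_log_rpow_rpow_atTop (m : ℝ) (sub_pos.2 h)).isBigO
  refine ((isBigO_refl (fun x : ℝ ↦ x ^ α / Real.log x ^ m) atTop).mul hlog).congr' ?_ ?_ <;>
    filter_upwards [eventually_gt_atTop 1] with x hx
  · exact div_mul_cancel₀ _ (pow_ne_zero _ (Real.log_pos hx).ne')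
  · rw [div_mul_eq_mul_div, ← Real.rpow_add (by linarith), add_sub_cancel]

lemma isBigO_id_sq_div_log_pow (m : ℕ) :
    (fun x : ℝ ↦ x) =O[atTop] fun x ↦ x ^ 2 / Real.log x ^ m := by
  simpa using isBigO_rpow_div_log_pow one_lt_two m

lemma exists_abs_log_pow_mul_norm_sum_vonMangoldt_sub_one_le (m : ℕ) :
    ∃ C, ∀ x : ℝ, 0 < x → |Real.log x| ^ m *
      ‖∑ n ∈ Ioc 0 ⌊x⌋₊, ((Λ n - 1 : ℝ) : ℂ) * (1 - n / x : ℝ)‖ ≤ C * x := by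
  have habscissa : LSeries.abscissaOfAbsConv (fun n ↦ ((Λ n - 1 : ℝ) : ℂ)) ≤ (1 : ℝ) := by
    refine LSeries.abscissaOfAbsConv_le_of_forall_lt_LSeriesSummable fun σ hσ ↦ ?_
    have hre : 1 < (σ : ℂ).re := by simpa
    simpa [Pi.sub_def] using (LSeriesSummable_vonMangoldt hre).sub (LSeriesSummable_one_iff.2 hre)
  have h := exists_abs_log_pow_mul_norm_sum_le (m := m) zero_le_one
    (by norm_num : (1 : ℝ) < 3 / 2) habscissa ?_
  · simpa only [Real.rpow_one] using h
  intro k _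
  obtain ⟨C, hC⟩ := exists_norm_iteratedDeriv_rieszTransform_le k
  refine ⟨C, fun s hs hs2 ↦ ?_⟩
  have heq : rieszTransform (LSeries fun n ↦ ((Λ n - 1 : ℝ) : ℂ)) =ᶠ[𝓝 s]
      rieszTransform vonMangoldtSubOneSeries := by
    filter_upwards [(isOpen_lt continuous_const Complex.continuous_re).mem_nhds hs] with z hz
    rw [rieszTransform, rieszTransform, LSeries_vonMangoldt_sub_one hz]
  rw [heq.iteratedDeriv_eq]
  exact hC s hs.le (by linarith)

lemma isBigO_rieszSum_vonMangoldt_sub_one (m : ℕ) :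
    rieszSum (fun n ↦ Λ n - 1) =O[atTop] fun x ↦ x ^ 2 / Real.log x ^ m := by
  obtain ⟨C, hC⟩ := exists_abs_log_pow_mul_norm_sum_vonMangoldt_sub_one_le m
  refine .of_bound C ?_
  filter_upwards [eventually_gt_atTop 1] with x hx
  have hlog := Real.log_pos hx
  have heq : rieszSum (fun n ↦ Λ n - 1) x =
      x * ∑ n ∈ Ioc 0 ⌊x⌋₊, (Λ n - 1) * (1 - n / x) := by
    rw [rieszSum, mul_sum]
    exact sum_congr rfl fun n _ ↦ by field_simp
  have h := hC x (by linarith)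
  simp only [← Complex.ofReal_mul, ← Complex.ofReal_sum, Complex.norm_real, abs_of_pos hlog] at h
  rw [heq, norm_mul, Real.norm_of_nonneg (by linarith : 0 ≤ x),
    Real.norm_of_nonneg (by positivity : 0 ≤ x ^ 2 / Real.log x ^ m),
    ← mul_div_assoc, le_div_iff₀ (by positivity)]
  nlinarith

theorem isBigO_psi_sub_id {k : ℕ} (hk : k ≠ 0) :
    (fun x ↦ Chebyshev.psi x - x) =O[atTop] fun x ↦ x / Real.log x ^ k := by
  refine isBigO_sum_sub_of_isBigO_rieszSum_sub (fun _ ↦ vonMangoldt_nonneg) hk ?_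
  refine ((isBigO_rieszSum_vonMangoldt_sub_one (2 * k)).add
    (isBigO_rieszSum_one_sub.trans (isBigO_id_sq_div_log_pow (2 * k)))).congr_left fun x ↦ ?_
  rw [← add_sub_assoc, rieszSum, rieszSum, ← sum_add_distrib]
  congr 1
  exact sum_congr rfl fun n _ ↦ by ring

theorem isBigO_theta_sub_id {k : ℕ} (hk : k ≠ 0) :
    (fun x ↦ Chebyshev.theta x - x) =O[atTop] fun x ↦ x / Real.log x ^ k := by
  have hsqrt : (fun x ↦ √x) =O[atTop] fun x ↦ x / Real.log x ^ k := by
    simpa [Real.sqrt_eq_rpow] using isBigO_rpow_div_log_pow one_half_lt_one k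
  simpa using (isBigO_psi_sub_id hk).sub (Chebyshev.isBigO_psi_sub_theta_sqrt.trans hsqrt)

end PrimeNumberTheorem

section AbelSummation
open MeasureTheory Asymptotics

theorem isBigO_integral_of_isBigO_deriv {E : Type*} [NormedAddCommGroup E] [NormedSpace ℝ E]
    {f : ℝ → E} {g g' : ℝ → ℝ} {a : ℝ} (hf : ∀ x ≥ a, IntervalIntegrable f volume a x)
    (hg : ∀ᶠ x in atTop, HasDerivAt g (g' x) x) (hg' : ∀ᶠ x in atTop, 0 ≤ g' x)
    (h_one : (fun _ ↦ (1 : ℝ)) =O[atTop] g) (hfg : f =O[atTop] g') :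
    (fun x ↦ ∫ t in a..x, f t) =O[atTop] g := by
  obtain ⟨C, -, hbound⟩ := hfg.exists_pos
  obtain ⟨b, hb⟩ := eventually_atTop.1 ((hg.and hg').and hbound.bound)
  set T := max a b
  have hgT (t : ℝ) (ht : T ≤ t) : HasDerivAt g (g' t) t := (hb t ((le_max_right a b).trans ht)).1.1
  have hgT' (t : ℝ) (ht : T ≤ t) : 0 ≤ g' t := (hb t ((le_max_right a b).trans ht)).1.2
  have htail (x : ℝ) (hx : T ≤ x) : ‖∫ t in T..x, f t‖ ≤ C * (g x - g T) := by
    have hint : IntervalIntegrable g' volume T x := by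
      refine intervalIntegral.intervalIntegrable_deriv_of_nonneg (g := g)
        (fun t ht ↦ (hgT t ?_).continuousAt.continuousWithinAt) (fun t ht ↦ hgT t ?_)
        fun t ht ↦ hgT' t ?_
      · exact (Set.uIcc_of_le hx ▸ ht).1
      all_goals exact (min_eq_left hx ▸ ht.1).le
    calc ‖∫ t in T..x, f t‖ ≤ ∫ t in T..x, C * g' t := by
          refine intervalIntegral.norm_integral_le_of_norm_le hx (.of_forall fun t ht ↦ ?_)
            (hint.const_mul C)
          simpa [abs_of_nonneg (hgT' t ht.1.le)] using (hb t ((le_max_right a b).trans ht.1.le)).2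
      _ = C * (g x - g T) := by
          rw [intervalIntegral.integral_const_mul, intervalIntegral.integral_eq_sub_of_hasDerivAt
            (fun t ht ↦ hgT t (Set.uIcc_of_le hx ▸ ht).1) hint]
  have htailO : (fun x ↦ ∫ t in T..x, f t) =O[atTop] g := by
    have hgT : (fun _ ↦ g T) =O[atTop] g := (isBigO_const_const _ one_ne_zero atTop).trans h_one
    refine .trans (.of_bound' ?_) (((isBigO_refl g atTop).sub hgT).const_mul_left C)
    exact (eventually_ge_atTop T).mono fun x hx ↦ (htail x hx).trans (Real.le_norm_self _)
  have hhead : (fun _ ↦ ∫ t in a..T, f t) =O[atTop] g :=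
    (isBigO_const_const _ one_ne_zero atTop).trans h_one
  refine (hhead.add htailO).congr' ?_ .rfl
  filter_upwards [eventually_ge_atTop T] with x hx
  have haT := hf T (le_max_left a b)
  exact intervalIntegral.integral_add_adjacent_intervals haT
    (haT.symm.trans (hf x ((le_max_left a b).trans hx)))

theorem sum_prime_mul_log_eq_sub_integral {f f' : ℝ → ℝ} {x : ℝ} (hx : 2 ≤ x)
    (hf : ∀ t ∈ Set.Icc 2 x, HasDerivAt f (f' t) t) (hf' : IntegrableOn f' (Set.Icc 2 x)) :
    ∑ p ∈ Finset.Icc 0 ⌊x⌋₊ with p.Prime, f p * Real.log p =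
      f x * Chebyshev.theta x - ∫ t in 2..x, f' t * Chebyshev.theta t := by
  let a : ℕ → ℝ := fun n ↦ if n.Prime then Real.log n else 0
  have ha (t : ℝ) : ∑ n ∈ Finset.Icc 0 ⌊t⌋₊, a n = Chebyshev.theta t := by
    rw [Chebyshev.theta_eq_sum_Icc, Finset.sum_filter]
  have habel := sum_mul_eq_sub_integral_mul₁ a (f := f) (by simp [a]) (by simp [a]) x
    (fun t ht ↦ (hf t ht).differentiableAt)
    (hf'.congr_fun (fun t ht ↦ (hf t ht).deriv.symm) measurableSet_Icc)
  simp only [ha] at habel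
  rw [Finset.sum_filter, intervalIntegral.integral_of_le hx]
  convert! habel using 1
  · exact Finset.sum_congr rfl fun n _ ↦ by simp [a]
  · congr 1
    refine setIntegral_congr_fun measurableSet_Ioc fun t ht ↦ ?_
    rw [(hf t ⟨ht.1.le, ht.2⟩).deriv]

lemma hasDerivAt_div_log {t : ℝ} (ht : 1 < t) :
    HasDerivAt (fun t ↦ t / Real.log t) ((Real.log t - 1) / Real.log t ^ 2) t := by
  have ht0 : t ≠ 0 := by linarith
  convert! (hasDerivAt_id t).div (Real.hasDerivAt_log ht0) (Real.log_pos ht).ne' using 1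
  simp [ht0]

lemma hasDerivAt_sq_div_log_pow {t : ℝ} (ht : 1 < t) (k : ℕ) :
    HasDerivAt (fun t ↦ t ^ 2 / Real.log t ^ k)
      (2 * t / Real.log t ^ k - k * t / Real.log t ^ (k + 1)) t := by
  have ht0 : t ≠ 0 := by linarith
  have hlog := (Real.log_pos ht).ne'
  convert! (hasDerivAt_pow 2 t).div ((Real.hasDerivAt_log ht0).pow k) (pow_ne_zero k hlog) using 1
  rcases k with _ | k
  · simp
  · simp only [Pi.pow_apply, Nat.add_sub_cancel]
    push_cast
    field_simp
    ring

lemma continuousOn_log_Ioi_one : ContinuousOn Real.log (Set.Ioi 1) :=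
  Real.continuousOn_log.mono fun _ ht ↦ (zero_lt_one.trans ht).ne'

lemma continuousOn_div_log_pow {f : ℝ → ℝ} (hf : ContinuousOn f (Set.Ioi 1)) (k : ℕ) :
    ContinuousOn (fun t ↦ f t / Real.log t ^ k) (Set.Ioi 1) :=
  hf.div (continuousOn_log_Ioi_one.pow k) fun _ ht ↦ pow_ne_zero k (Real.log_pos ht).ne'

lemma continuousOn_log_sub_one_div_log_sq :
    ContinuousOn (fun t ↦ (Real.log t - 1) / Real.log t ^ 2) (Set.Ioi 1) :=
  continuousOn_div_log_pow (continuousOn_log_Ioi_one.sub continuousOn_const) 2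

lemma sum_prime_eq_sub_integral {x : ℝ} (hx : 2 ≤ x) :
    ∑ p ∈ Finset.Icc 0 ⌊x⌋₊ with p.Prime, (p : ℝ) = x / Real.log x * Chebyshev.theta x -
      ∫ t in 2..x, (Real.log t - 1) / Real.log t ^ 2 * Chebyshev.theta t := by
  have hsub : Set.Icc 2 x ⊆ Set.Ioi 1 := fun t ht ↦ one_lt_two.trans_le ht.1
  rw [← sum_prime_mul_log_eq_sub_integral (f := fun t ↦ t / Real.log t) hx
    (fun t ht ↦ hasDerivAt_div_log (hsub ht))
    (continuousOn_log_sub_one_div_log_sq.mono hsub).integrableOn_Icc]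
  refine Finset.sum_congr rfl fun p hp ↦ ?_
  exact (div_mul_cancel₀ _ (Real.log_pos (mod_cast (Finset.mem_filter.1 hp).2.one_lt)).ne').symm

lemma eventually_div_log_pow_le (k : ℕ) :
    ∀ᶠ t in atTop, t / Real.log t ^ k ≤ 2 * t / Real.log t ^ k - k * t / Real.log t ^ (k + 1) := by
  filter_upwards [eventually_gt_atTop 1, Real.tendsto_log_atTop.eventually_ge_atTop k] with t ht hk
  have hlog : 0 < Real.log t := Real.log_pos ht
  have := sub_nonneg.2 hk
  have heq : 2 * t / Real.log t ^ k - k * t / Real.log t ^ (k + 1) =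
      t / Real.log t ^ k + t * (Real.log t - k) / Real.log t ^ (k + 1) := by
    field_simp
    ring
  rw [heq]
  exact le_add_of_nonneg_right (by positivity)

lemma isBigO_log_sub_one_div_log_sq :
    (fun t ↦ (Real.log t - 1) / Real.log t ^ 2) =O[atTop] fun t ↦ 1 / Real.log t := by
  refine .of_bound' ?_
  filter_upwards [Real.tendsto_log_atTop.eventually_ge_atTop 1] with t ht
  have hlog : 0 < Real.log t := by linarith
  have := sub_nonneg.2 ht
  rw [Real.norm_of_nonneg (by positivity), Real.norm_of_nonneg (by positivity), div_le_div_iff₀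
    (by positivity) hlog]
  nlinarith

theorem isBigO_integral_of_isBigO_div_log_pow {E : Type*} [NormedAddCommGroup E] [NormedSpace ℝ E]
    {f : ℝ → E} {a : ℝ} {k : ℕ} (hf : ∀ x ≥ a, IntervalIntegrable f volume a x)
    (hfO : f =O[atTop] fun t ↦ t / Real.log t ^ k) :
    (fun x ↦ ∫ t in a..x, f t) =O[atTop] fun x ↦ x ^ 2 / Real.log x ^ k := by
  have hnonneg : ∀ᶠ t : ℝ in atTop, 0 ≤ t / Real.log t ^ k := by
    filter_upwards [eventually_gt_atTop 1] with t ht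
    have := Real.log_pos ht
    positivity
  have hle := eventually_div_log_pow_le k
  refine isBigO_integral_of_isBigO_deriv hf
    ((eventually_gt_atTop 1).mono fun t ht ↦ hasDerivAt_sq_div_log_pow ht k)
    ((hnonneg.and hle).mono fun t ht ↦ ht.1.trans ht.2)
    (by simpa using isBigO_rpow_div_log_pow zero_lt_two k) (hfO.trans (.of_bound' ?_))
  filter_upwards [hnonneg, hle] with t h₀ h₁
  rw [Real.norm_of_nonneg h₀]
  exact h₁.trans (Real.le_norm_self _)

lemma hasDerivAt_sq_div_log_sub {t : ℝ} (ht : 1 < t) :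
    HasDerivAt (fun t ↦ t ^ 2 / (2 * Real.log t) - t ^ 2 / (4 * Real.log t ^ 2))
      ((Real.log t - 1) / Real.log t ^ 2 * t + t / Real.log t ^ 3 / 2) t := by
  have hlog := (Real.log_pos ht).ne'
  have h := ((hasDerivAt_sq_div_log_pow ht 1).div_const 2).sub
    ((hasDerivAt_sq_div_log_pow ht 2).div_const 4)
  convert! h using 1
  · ext u
    simp only [Pi.sub_apply]
    ring
  · push_cast
    field_simp
    ring

lemma isBigO_log_sub_one_div_log_sq_mul_theta_sub :
    (fun t ↦ (Real.log t - 1) / Real.log t ^ 2 * Chebyshev.theta t -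
      ((Real.log t - 1) / Real.log t ^ 2 * t + t / Real.log t ^ 3 / 2)) =O[atTop]
      fun t ↦ t / Real.log t ^ 3 := by
  have h₁ := isBigO_log_sub_one_div_log_sq.mul (isBigO_theta_sub_id two_ne_zero)
  have h₂ := (isBigO_refl (fun t : ℝ ↦ t / Real.log t ^ 3) atTop).const_mul_left (1 / 2)
  refine ((h₁.congr_right fun t ↦ ?_).sub h₂).congr_left fun t ↦ ?_ <;> ring

lemma isBigO_integral_log_sub_one_div_log_sq_mul_theta_sub :
    (fun x ↦ (∫ t in 2..x, (Real.log t - 1) / Real.log t ^ 2 * Chebyshev.theta t) -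
      (x ^ 2 / (2 * Real.log x) - x ^ 2 / (4 * Real.log x ^ 2))) =O[atTop]
      fun x ↦ x ^ 2 / Real.log x ^ 3 := by
  have hsub (x : ℝ) (hx : 2 ≤ x) : Set.uIcc 2 x ⊆ Set.Ioi 1 := fun t ht ↦
    one_lt_two.trans_le (Set.uIcc_of_le hx ▸ ht).1
  have htheta (x : ℝ) (hx : 2 ≤ x) : IntervalIntegrable
      (fun t ↦ (Real.log t - 1) / Real.log t ^ 2 * Chebyshev.theta t) volume 2 x :=
    Chebyshev.theta_mono.intervalIntegrable.continuousOn_mul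
      (continuousOn_log_sub_one_div_log_sq.mono (hsub x hx))
  have hid (x : ℝ) (hx : 2 ≤ x) : IntervalIntegrable
      (fun t ↦ (Real.log t - 1) / Real.log t ^ 2 * t + t / Real.log t ^ 3 / 2) volume 2 x := by
    refine ContinuousOn.intervalIntegrable (.mono (.add ?_ ?_) (hsub x hx))
    · exact continuousOn_log_sub_one_div_log_sq.mul continuousOn_id
    · exact (continuousOn_div_log_pow continuousOn_id 3).div_const 2
  have h := isBigO_integral_of_isBigO_div_log_pow (fun x hx ↦ (htheta x hx).sub (hid x hx))
    isBigO_log_sub_one_div_log_sq_mul_theta_sub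
  have hconst := (isBigO_const_const (2 ^ 2 / (2 * Real.log 2) - 2 ^ 2 / (4 * Real.log 2 ^ 2))
    one_ne_zero atTop).trans (by simpa using isBigO_rpow_div_log_pow zero_lt_two 3)
  refine (h.sub hconst).congr' ?_ .rfl
  filter_upwards [eventually_ge_atTop 2] with x hx
  rw [intervalIntegral.integral_sub (htheta x hx) (hid x hx),
    intervalIntegral.integral_eq_sub_of_hasDerivAt
      (fun t ht ↦ hasDerivAt_sq_div_log_sub (hsub x hx ht)) (hid x hx)]
  ring

theorem isBigO_sum_prime_le_sub :
    (fun x : ℝ ↦ ∑ p ∈ Finset.Icc 0 ⌊x⌋₊ with p.Prime, (p : ℝ) -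
      (x ^ 2 / (2 * Real.log x) + x ^ 2 / (4 * Real.log x ^ 2))) =O[atTop]
      fun x ↦ x ^ 2 / Real.log x ^ 3 := by
  have htheta := ((isBigO_refl (fun x : ℝ ↦ x / Real.log x) atTop).mul
    (isBigO_theta_sub_id two_ne_zero)).congr_right
      (g₂ := fun x ↦ x ^ 2 / Real.log x ^ 3) fun x ↦ by ring
  refine (htheta.sub isBigO_integral_log_sub_one_div_log_sq_mul_theta_sub).congr' ?_ .rfl
  filter_upwards [eventually_ge_atTop 2] with x hx
  rw [sum_prime_eq_sub_integral hx]
  ring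

lemma abs_primeSumBelow_sub_sum_prime_le_le {x : ℝ} (hx : 0 ≤ x) :
    |primeSumBelow x - ∑ p ∈ Finset.Icc 0 ⌊x⌋₊ with p.Prime, (p : ℝ)| ≤ x := by
  have hfloor := Nat.floor_le hx
  rw [primeSumBelow, ← Nat.range_succ_eq_Icc_zero, Finset.sum_filter, Finset.sum_filter]
  rcases (Nat.floor_le_ceil x).eq_or_lt with h | h
  · rw [← h, Finset.sum_range_succ, sub_add_cancel_left, abs_neg]
    split_ifs <;> simpa
  · rw [(Nat.ceil_le_floor_add_one x).antisymm h]
    simpa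

end AbelSummation

/-- As `x → ∞`,
`Σ_{p < x} p = x²/(2 log x) + x²/(4 (log x)²) + O(x²/(log x)³)`. -/
theorem primeSumBelow_asymptotic :
    (fun x : ℝ =>
        primeSumBelow x - x ^ 2 / (2 * Real.log x) - x ^ 2 / (4 * Real.log x ^ 2))
      =O[atTop] fun x : ℝ => x ^ 2 / Real.log x ^ 3 := by
  have hbelow : (fun x ↦ primeSumBelow x - ∑ p ∈ Finset.Icc 0 ⌊x⌋₊ with p.Prime, (p : ℝ))
      =O[atTop] fun x ↦ x :=
    .of_bound' <| (eventually_ge_atTop 0).mono fun x hx ↦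
      (abs_primeSumBelow_sub_sum_prime_le_le hx).trans (Real.le_norm_self x)
  refine ((hbelow.trans (isBigO_id_sq_div_log_pow 3)).add
    isBigO_sum_prime_le_sub).congr_left fun x ↦ ?_
  ring
end
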